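/- arXiv:2004.01484 — 2 statements merged into one kernel-verified Lean document; each statement's English description precedes it below -/
import Mathlib

section
/- (Newman 1968) Let m be a natural number, let r be a nontrivial, cyclically reduced element of the free group on Fin m that is not a proper power, and let n ≥ 2. Then the conjugacy problem for the one-relator group with torsion G = ⟨Fin m | rⁿ = 1⟩ is decidable: the predicate on pairs (l₁, l₂) of lists in List (Fin m × Bool) given by 'the images of FreeGroup.mk l₁ and FreeGroup.mk l₂ in G are conjugate, i.e. there exists g ∈ G with g · (image of l₁) · g⁻¹ = image of l₂' is a computable predicate (ComputablePred). -/
/-- A word over `A` is cyclically reduced if its first and last letters are not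
mutually inverse; an element of the free group is cyclically reduced if its
reduced word is. -/
def FreeGroup.CyclicallyReduced {A : Type*} [DecidableEq A] (w : FreeGroup A) : Prop :=
  ∀ x : A × Bool, w.toWord.head? = some x → w.toWord.getLast? ≠ some (x.1, !x.2)

/-!
The argument goes through finite complexes obtained from a graph acted on by the free group by
attaching discs along the closed paths that spell `rⁿ`.

The free group is bi-orderable, by comparing Magnus expansions. As `r` is not a proper power, its
cyclic conjugates are distinct, so the order gives distinct heights to the positions of `r`: a
stacking in the sense of Louder and Wilton. Counting the highest sheets along every edge and at
every vertex, and comparing with the rank of the cycle space modulo a prime divisor of `n`, shows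
that a complex with more than `2 * N` discs has a free face outside any prescribed set of `N` edges.
The prime enters because modulo it the disc attached at a point fixed by `r` has zero boundary,
while all other discs have at least one partner with the same boundary.

Collapsing the disc behind a free face does not change the fundamental group. Hence two conjugate
words are already conjugate in a complex of linear size, which bounds the length of a conjugator
linearly; and a word that is trivial in the group bounds in a complex that collapses to a forest,
which bounds explicitly an expression of the word as a product of conjugates of `r^{±n}`.
Conjugacy is thus decided by a bounded search.
-/

namespace OneRelator

universe u

section Letters

variable {α : Type u}

/-- The formal inverse of a letter. -/
def invLetter (x : α × Bool) : α × Bool := (x.1, !x.2)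

/-- The element of the free group represented by a letter. -/
def letter (x : α × Bool) : FreeGroup α := FreeGroup.mk [x]

/-- The exponent `±1` of a letter with sign bit `b`. -/
def letterSign (b : Bool) : ℤ := if b then 1 else -1

theorem letter_true (a : α) : letter (a, true) = FreeGroup.of a := rfl

theorem letter_false (a : α) : letter (a, false) = (FreeGroup.of a)⁻¹ := by
  simp [letter, FreeGroup.of, FreeGroup.inv_mk, FreeGroup.invRev]

theorem letter_invLetter (x : α × Bool) : letter (invLetter x) = (letter x)⁻¹ := by
  simp [letter, invLetter, FreeGroup.inv_mk, FreeGroup.invRev]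

theorem mk_cons (x : α × Bool) (l : List (α × Bool)) :
    FreeGroup.mk (x :: l) = letter x * FreeGroup.mk l := by
  rw [letter, FreeGroup.mul_mk, List.singleton_append]

theorem mk_invRev (l : List (α × Bool)) :
    FreeGroup.mk (FreeGroup.invRev l) = (FreeGroup.mk l)⁻¹ :=
  FreeGroup.inv_mk.symm

theorem letterSign_mul_self (b : Bool) : letterSign b * letterSign b = 1 := by
  cases b <;> rfl

theorem induction_letter {p : FreeGroup α → Prop} (g : FreeGroup α) (one : p 1)
    (letter_mul : ∀ x g, p g → p (letter x * g)) : p g := by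
  obtain ⟨w, rfl⟩ := Quot.exists_rep g
  change p (FreeGroup.mk w)
  induction w with
  | nil => exact one
  | cons x w ih => rw [mk_cons]; exact letter_mul x _ ih

end Letters

/-! ### A bi-invariant order on the free group -/

section BiOrder

variable {α : Type u} [DecidableEq α]

/-- Left multiplication by the variable `a` on noncommutative formal power series over `ℤ`, encoded
by their coefficient functions, in the quotient where every variable squares to zero. -/
def leftVar (a : α) : Module.End ℤ (List α → ℤ) where
  toFun f
    | [] => 0
    | c :: l => if c = a ∧ l.head? ≠ some a then f l else 0
  map_add' f g := by
    funext l
    cases l with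
    | nil => rfl
    | cons c l => simp only [Pi.add_apply]; split_ifs <;> simp
  map_smul' k f := by
    funext l
    cases l with
    | nil => simp
    | cons c l => simp

theorem leftVar_nil (a : α) (f : List α → ℤ) : leftVar a f [] = 0 := rfl

theorem leftVar_cons (a c : α) (f : List α → ℤ) (l : List α) :
    leftVar a f (c :: l) = if c = a ∧ l.head? ≠ some a then f l else 0 := rfl

/-- Right multiplication by the variable `a`; see `leftVar`. -/
def rightVar (a : α) : Module.End ℤ (List α → ℤ) :=
  LinearMap.funLeft ℤ ℤ List.reverse ∘ₗ leftVar a ∘ₗ LinearMap.funLeft ℤ ℤ List.reverse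

theorem rightVar_apply (a : α) (f : List α → ℤ) (l : List α) :
    rightVar a f l = leftVar a (f ∘ List.reverse) l.reverse := rfl

theorem leftVar_mul_self (a : α) : leftVar a * leftVar a = 0 := by
  ext f l
  match l with
  | [] => rfl
  | [c] => simp [Module.End.mul_apply, leftVar_cons, leftVar_nil]
  | c :: d :: l => simp +contextual [Module.End.mul_apply, leftVar_cons]

theorem leftVar_commute_rightVar (a b : α) : Commute (leftVar a) (rightVar b) := by
  refine LinearMap.ext fun f => funext fun l => ?_
  simp only [Module.End.mul_apply, rightVar_apply]
  match l with
  | [] => rfl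
  | c :: l =>
    rcases List.eq_nil_or_concat' l with rfl | ⟨k, d, rfl⟩
    · simp [leftVar_cons, leftVar_nil, rightVar_apply]
    · cases k with
      | nil => simp [leftVar_cons, rightVar_apply]; grind
      | cons e k => simp [leftVar_cons, rightVar_apply]; grind

theorem leftVar_apply_congr (a : α) {f g : List α → ℤ} {l : List α}
    (h : ∀ l', l'.length < l.length → f l' = g l') : leftVar a f l = leftVar a g l := by
  cases l with
  | nil => rfl
  | cons c l => simp only [leftVar_cons, h l (by simp)]

theorem rightVar_apply_congr (a : α) {f g : List α → ℤ} {l : List α}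
    (h : ∀ l', l'.length < l.length → f l' = g l') : rightVar a f l = rightVar a g l :=
  leftVar_apply_congr a fun l' hl => h _ (by simpa using hl)

/-- The invertible operator `1 + a` of the Magnus representation. -/
def magnusUnit (a : α) : (Module.End ℤ (List α → ℤ))ˣ where
  val := 1 + leftVar a
  inv := 1 - leftVar a
  val_inv := by simp [add_mul, mul_sub, leftVar_mul_self]
  inv_val := by simp [sub_mul, mul_add, leftVar_mul_self]

/-- The Magnus representation of the free group, sending a generator `a` to left multiplication by
`1 + a`. -/
def magnusRep : FreeGroup α →* (Module.End ℤ (List α → ℤ))ˣ := FreeGroup.lift magnusUnit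

/-- The Magnus expansion of an element of the free group. -/
def magnusSeries (g : FreeGroup α) : List α → ℤ := (magnusRep g).val (Pi.single [] 1)

theorem magnusRep_letter (x : α × Bool) :
    (magnusRep (letter x)).val = 1 + letterSign x.2 • leftVar x.1 := by
  obtain ⟨a, _ | _⟩ := x
  · simp [letter_false, magnusRep, magnusUnit, letterSign, ← sub_eq_add_neg]
  · simp [letter_true, magnusRep, magnusUnit, letterSign]

theorem magnusSeries_mul (g h : FreeGroup α) :
    magnusSeries (g * h) = (magnusRep g).val (magnusSeries h) := by
  simp [magnusSeries]

theorem magnusSeries_letter_mul (x : α × Bool) (g : FreeGroup α) :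
    magnusSeries (letter x * g) =
      magnusSeries g + letterSign x.2 • leftVar x.1 (magnusSeries g) := by
  simp [magnusSeries_mul, magnusRep_letter]

theorem magnusRep_commute_rightVar (g : FreeGroup α) (a : α) :
    Commute (magnusRep g).val (rightVar a) := by
  induction g using induction_letter with
  | one => simp
  | letter_mul x g ih =>
    rw [map_mul, Units.val_mul, magnusRep_letter]
    exact ((Commute.one_left _).add_left
      ((leftVar_commute_rightVar _ _).smul_left _)).mul_left ih

theorem leftVar_single_nil (a : α) :
    leftVar a (Pi.single [] 1) = rightVar a (Pi.single [] 1) := by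
  funext l
  match l with
  | [] => rfl
  | [c] => simp [leftVar_cons, rightVar_apply]
  | c :: d :: l =>
    have hne : (d :: l).reverse ≠ [] := by simp
    obtain ⟨e, k, hk⟩ := List.exists_cons_of_ne_nil hne
    rw [rightVar_apply, List.reverse_cons, hk, List.cons_append, leftVar_cons, leftVar_cons]
    simp

theorem magnusSeries_mul_letter (g : FreeGroup α) (x : α × Bool) :
    magnusSeries (g * letter x) =
      magnusSeries g + letterSign x.2 • rightVar x.1 (magnusSeries g) := by
  have hcomm := LinearMap.congr_fun (magnusRep_commute_rightVar g x.1) (Pi.single [] 1)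
  rw [Module.End.mul_apply, Module.End.mul_apply] at hcomm
  rw [magnusSeries_mul]
  conv_lhs => rw [magnusSeries, magnusRep_letter]
  rw [LinearMap.add_apply, LinearMap.smul_apply, leftVar_single_nil, map_add, map_smul, hcomm]
  rfl

/-- The series `f` has a leading monomial whose first variable is that of the letter `x`: among
the monomials of `f` longer than `t`, only those of length `t.length + 1` starting with `x.1`
occur, and the sign of the coefficient of `x.1 :: t` relative to that of `t` is the sign of `x`. -/
def HasLeadingLetter (x : α × Bool) (f : List α → ℤ) : Prop :=
  ∃ t : List α, t.head? ≠ some x.1 ∧ 0 < letterSign x.2 * f t * f (x.1 :: t) ∧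
    ∀ l, f l ≠ 0 → l.length ≤ t.length ∨ (l.length = t.length + 1 ∧ l.head? = some x.1)

theorem hasLeadingLetter_single_nil_add (x : α × Bool) :
    HasLeadingLetter x
      (Pi.single [] 1 + letterSign x.2 • leftVar x.1 (Pi.single [] 1)) := by
  refine ⟨[], by simp, ?_, fun l hl => ?_⟩
  · simp [leftVar_nil, leftVar_cons, letterSign_mul_self]
  · match l with
    | [] => simp
    | [c] => simp_all [leftVar_cons]
    | c :: d :: l => simp [leftVar_cons] at hl

theorem HasLeadingLetter.add_leftVar_self {x : α × Bool} {f : List α → ℤ}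
    (hf : HasLeadingLetter x f) :
    HasLeadingLetter x (f + letterSign x.2 • leftVar x.1 f) := by
  obtain ⟨t, ht, hpos, hsupp⟩ := hf
  have ht_zero : leftVar x.1 f t = 0 := by
    cases t with
    | nil => rfl
    | cons c t => simp_all [leftVar_cons]
  refine ⟨t, ht, ?_, fun l hl => ?_⟩
  · simp only [Pi.add_apply, Pi.smul_apply, smul_eq_mul, ht_zero, leftVar_cons, ht, ne_eq,
      not_false_eq_true, and_self, if_true, mul_zero, add_zero]
    have hsq := letterSign_mul_self x.2
    calc 0 < letterSign x.2 * f t * f (x.1 :: t) := hpos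
      _ ≤ letterSign x.2 * f t * f (x.1 :: t)
          + (letterSign x.2 * letterSign x.2) * (f t * f t) := by
        rw [hsq]; nlinarith [mul_self_nonneg (f t)]
      _ = _ := by ring
  · by_cases hfl : f l = 0
    · cases l with
      | nil => simp
      | cons c l =>
        simp only [Pi.add_apply, Pi.smul_apply, hfl, leftVar_cons] at hl
        split_ifs at hl with hc
        · have := hsupp l (by aesop)
          simp_all [← Nat.le_iff_lt_or_eq]
        · simp at hl
    · exact hsupp l hfl

theorem HasLeadingLetter.add_leftVar_of_ne {x z : α × Bool} {f : List α → ℤ}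
    (hf : HasLeadingLetter z f) (hxz : z.1 ≠ x.1) :
    HasLeadingLetter x (f + letterSign x.2 • leftVar x.1 f) := by
  obtain ⟨t, -, hpos, hsupp⟩ := hf
  refine ⟨z.1 :: t, by simpa using hxz, ?_, fun l hl => ?_⟩
  · have hlong : f (x.1 :: z.1 :: t) = 0 := by
      by_contra h
      have := hsupp _ h
      simp at this
    have hne : f (z.1 :: t) ≠ 0 := right_ne_zero_of_mul hpos.ne'
    have hlast : leftVar x.1 f (z.1 :: t) = 0 := by simp [leftVar_cons, hxz]
    have hnext : leftVar x.1 f (x.1 :: z.1 :: t) = f (z.1 :: t) := by simp [leftVar_cons, hxz]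
    simp only [Pi.add_apply, Pi.smul_apply, smul_eq_mul, hlong, hlast, hnext, mul_zero, add_zero,
      zero_add]
    calc 0 < f (z.1 :: t) * f (z.1 :: t) := mul_self_pos.2 hne
      _ = (letterSign x.2 * letterSign x.2) * (f (z.1 :: t) * f (z.1 :: t)) := by
        rw [letterSign_mul_self, one_mul]
      _ = _ := by ring
  · by_cases hfl : f l = 0
    · cases l with
      | nil => simp
      | cons c l =>
        simp only [Pi.add_apply, Pi.smul_apply, hfl, leftVar_cons] at hl
        split_ifs at hl with hc
        · have := hsupp l (by aesop)
          simp only [List.length_cons, List.head?_cons, hc.1, and_true]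
          omega
        · simp at hl
    · left
      have := hsupp l hfl
      simp only [List.length_cons]
      omega

theorem hasLeadingLetter_magnusSeries {x : α × Bool} {w : List (α × Bool)}
    (hw : FreeGroup.IsReduced (x :: w)) :
    HasLeadingLetter x (magnusSeries (FreeGroup.mk (x :: w))) := by
  induction w generalizing x with
  | nil =>
    rw [mk_cons, magnusSeries_letter_mul]
    exact hasLeadingLetter_single_nil_add x
  | cons z w ih =>
    obtain ⟨hxz, hzw⟩ := List.isChain_cons_cons.1 hw
    rw [mk_cons, magnusSeries_letter_mul]
    by_cases h : x.1 = z.1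
    · have : x = z := Prod.ext h (hxz h)
      exact this ▸ (ih hzw).add_leftVar_self
    · exact (ih hzw).add_leftVar_of_ne (Ne.symm h)

theorem magnusSeries_injective : Function.Injective (magnusSeries (α := α)) := by
  intro g h hgh
  have hone : magnusSeries (h⁻¹ * g) = Pi.single [] 1 := by
    rw [magnusSeries_mul, hgh, ← magnusSeries_mul, inv_mul_cancel]
    simp [magnusSeries]
  suffices h⁻¹ * g = 1 from (inv_mul_eq_one.1 this).symm
  rw [← FreeGroup.toWord_eq_nil_iff]
  rcases hw : (h⁻¹ * g).toWord with _ | ⟨x, w⟩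
  · rfl
  · have hlead := hasLeadingLetter_magnusSeries (hw ▸ FreeGroup.isReduced_toWord)
    rw [← hw, FreeGroup.mk_toWord, hone] at hlead
    obtain ⟨t, -, hpos, -⟩ := hlead
    simp at hpos

-- Comparing series at the first monomial, in an order refining length, where they differ is
-- unaffected by a correction that only depends on the coefficients of shorter monomials.
theorem toLex_add_lt_toLex_add {β : Type*} [LinearOrder (List β)]
    (hlen : ∀ k l : List β, k.length < l.length → k < l) {T : (List β → ℤ) → List β → ℤ}
    (hT : ∀ f g l, (∀ k : List β, k.length < l.length → f k = g k) → T f l = T g l)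
    {f g : List β → ℤ} (h : toLex f < toLex g) : toLex (f + T f) < toLex (g + T g) := by
  obtain ⟨l, hl, hlt⟩ := h
  have heq : ∀ k ≤ l, T f k = T g k := fun k hk =>
    hT f g k fun j hj => hl j ((hlen j k hj).trans_le hk)
  refine ⟨l, fun k hk => ?_, ?_⟩
  · exact congrArg₂ (· + ·) (hl k hk) (heq k hk.le)
  · change f l + T f l < g l + T g l
    rw [heq l le_rfl]
    exact add_lt_add_left hlt _

theorem exists_wellOrder_refining_length (β : Type*) :
    ∃ _ : LinearOrder (List β), WellFoundedLT (List β) ∧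
      ∀ k l : List β, k.length < l.length → k < l := by
  let r : List β → List β → Prop := InvImage (· < ·) List.length
  have : IsWellFounded (List β) r := ⟨InvImage.wf _ wellFounded_lt⟩
  refine ⟨IsWellFounded.wellOrderExtension r,
    IsWellFounded.wellOrderExtension.isWellFounded_lt r, fun k l h => ?_⟩
  exact Prod.Lex.left _ _ (IsWellFounded.rank_lt_of_rel h)

theorem toLex_magnusSeries_mul_left_lt [LinearOrder (List α)]
    (hlen : ∀ k l : List α, k.length < l.length → k < l) (k : FreeGroup α) {g h : FreeGroup α}
    (hgh : toLex (magnusSeries g) < toLex (magnusSeries h)) :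
    toLex (magnusSeries (k * g)) < toLex (magnusSeries (k * h)) := by
  induction k using induction_letter with
  | one => simpa using hgh
  | letter_mul x k ih =>
    simp only [mul_assoc, magnusSeries_letter_mul]
    refine toLex_add_lt_toLex_add (T := fun f => letterSign x.2 • leftVar x.1 f) hlen
      (fun f g l hfg => ?_) ih
    simp only [Pi.smul_apply, leftVar_apply_congr x.1 hfg]

theorem toLex_magnusSeries_mul_right_lt [LinearOrder (List α)]
    (hlen : ∀ k l : List α, k.length < l.length → k < l) (k : FreeGroup α) {g h : FreeGroup α}
    (hgh : toLex (magnusSeries g) < toLex (magnusSeries h)) :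
    toLex (magnusSeries (g * k)) < toLex (magnusSeries (h * k)) := by
  induction k using induction_letter generalizing g h with
  | one => simpa using hgh
  | letter_mul x k ih =>
    rw [← mul_assoc, ← mul_assoc]
    refine ih ?_
    simp only [magnusSeries_mul_letter]
    refine toLex_add_lt_toLex_add (T := fun f => letterSign x.2 • rightVar x.1 f) hlen
      (fun f g l hfg => ?_) hgh
    simp only [Pi.smul_apply, rightVar_apply_congr x.1 hfg]

theorem exists_biinvariant_linearOrder (α : Type u) :
    ∃ _ : LinearOrder (FreeGroup α),
      MulLeftStrictMono (FreeGroup α) ∧ MulRightStrictMono (FreeGroup α) := by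
  classical
  obtain ⟨_, _, hlen⟩ := exists_wellOrder_refining_length α
  exact ⟨LinearOrder.lift' (fun g : FreeGroup α => toLex (magnusSeries g))
    (toLex.injective.comp magnusSeries_injective),
    ⟨fun k _ _ => toLex_magnusSeries_mul_left_lt hlen k⟩,
    ⟨fun k _ _ => toLex_magnusSeries_mul_right_lt hlen k⟩⟩

end BiOrder

section Centralizers

theorem isCyclic_freeGroup_of_isMulCommutative (S : Type u) [IsMulCommutative (FreeGroup S)] :
    IsCyclic (FreeGroup S) := by
  classical
  have : Subsingleton S := by
    refine ⟨fun a b => ?_⟩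
    by_contra h
    have hab := congrArg FreeGroup.toWord (mul_comm' (FreeGroup.of a) (FreeGroup.of b))
    simp only [FreeGroup.of, FreeGroup.mul_mk, FreeGroup.toWord_mk] at hab
    simp [FreeGroup.reduce, h, Ne.symm h] at hab
  rcases isEmpty_or_nonempty S with _ | ⟨⟨a⟩⟩
  · infer_instance
  · have : Unique S := uniqueOfSubsingleton a
    infer_instance

theorem isCyclic_of_isFreeGroup (K : Type u) [Group K] [IsFreeGroup K] [IsMulCommutative K] :
    IsCyclic K := by
  let e := IsFreeGroup.toFreeGroup K
  have : IsMulCommutative (FreeGroup (IsFreeGroup.Generators K)) :=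
    ⟨⟨fun a b => e.symm.injective (by simp only [map_mul]; exact mul_comm' _ _)⟩⟩
  have := isCyclic_freeGroup_of_isMulCommutative (IsFreeGroup.Generators K)
  exact isCyclic_of_surjective e.symm e.symm.surjective

theorem mem_zpowers_of_commute {α : Type u} {r g : FreeGroup α}
    (hpow : ¬ ∃ (s : FreeGroup α) (k : ℕ), 2 ≤ k ∧ r = s ^ k) (hcomm : Commute g r) :
    g ∈ Subgroup.zpowers r := by
  let K := Subgroup.closure ({g, r} : Set (FreeGroup α))
  have : IsMulCommutative K := by
    refine Subgroup.isMulCommutative_closure fun a ha b hb => ?_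
    rcases ha with rfl | rfl <;> rcases hb with rfl | rfl <;>
      simp only [hcomm.eq]
  have := isCyclic_of_isFreeGroup K
  obtain ⟨⟨t, ht⟩, hgen⟩ := IsCyclic.exists_generator (α := K)
  obtain ⟨j, hj⟩ := hgen ⟨g, Subgroup.subset_closure (by simp)⟩
  obtain ⟨k, hk⟩ := hgen ⟨r, Subgroup.subset_closure (by simp)⟩
  obtain rfl : t ^ j = g := congrArg Subtype.val hj
  obtain rfl : t ^ k = r := congrArg Subtype.val hk
  rcases le_or_gt 2 k.natAbs with hk2 | hk2
  · refine absurd ⟨t ^ k.sign, k.natAbs, hk2, ?_⟩ hpow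
    rw [← zpow_natCast, ← zpow_mul, Int.sign_mul_natAbs]
  · obtain rfl | rfl | rfl : k = 0 ∨ k = 1 ∨ k = -1 := by omega
    · exact absurd ⟨1, 2, le_rfl, by simp⟩ hpow
    · simp [Subgroup.mem_zpowers_iff]
    · simp [Subgroup.mem_zpowers_iff]

end Centralizers

/-! ### Stackings -/

section CyclicWords

variable {α : Type u} {L : ℕ} (y : ZMod L → α × Bool)

/-- The word of length `t` read along the cyclic word `y` starting from position `s`. Words act
from the left, so the first letter read is the last entry of the list. -/
def segment (s t : ℕ) : List (α × Bool) :=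
  ((List.range t).map fun i => y ((s + i : ℕ) : ZMod L)).reverse

/-- The product of the first `t` letters of the cyclic word `y`, the first letter being the
rightmost factor. -/
def prefixProd (t : ℕ) : FreeGroup α := FreeGroup.mk (segment y 0 t)

theorem segment_succ (s t : ℕ) :
    segment y s (t + 1) = y ((s + t : ℕ) : ZMod L) :: segment y s t := by
  simp [segment, List.range_succ]

@[simp] theorem segment_zero (s : ℕ) : segment y s 0 = [] := rfl

@[simp] theorem length_segment (s t : ℕ) : (segment y s t).length = t := by simp [segment]

@[simp] theorem prefixProd_zero : prefixProd y 0 = 1 := rfl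

theorem prefixProd_succ (t : ℕ) : prefixProd y (t + 1) = letter (y t) * prefixProd y t := by
  simp [prefixProd, segment_succ, mk_cons]

theorem mk_segment_mul_prefixProd (s t : ℕ) :
    FreeGroup.mk (segment y s t) * prefixProd y s = prefixProd y (s + t) := by
  induction t with
  | zero => simp [← FreeGroup.one_eq_mk]
  | succ t ih => rw [segment_succ, mk_cons, mul_assoc, ih, ← prefixProd_succ, add_assoc]

theorem prefixProd_add_period (t : ℕ) : prefixProd y (t + L) = prefixProd y t * prefixProd y L := by
  induction t with
  | zero => simp
  | succ t ih => rw [Nat.add_right_comm, prefixProd_succ, ih, prefixProd_succ, mul_assoc]; simp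

theorem prefixProd_add_mul_period (t k : ℕ) :
    prefixProd y (t + k * L) = prefixProd y t * prefixProd y L ^ k := by
  induction k with
  | zero => simp
  | succ k ih => rw [Nat.succ_mul, ← add_assoc, prefixProd_add_period, ih, pow_succ, mul_assoc]

theorem prefixProd_mul_period (k : ℕ) : prefixProd y (k * L) = prefixProd y L ^ k := by
  simpa using prefixProd_add_mul_period y 0 k

/-- The cyclic word `y` is cyclically reduced and the element it represents is not a proper
power. -/
structure IsPrimitiveCyclicWord : Prop where
  ne_invLetter : ∀ i, y (i + 1) ≠ invLetter (y i)
  not_pow : ¬ ∃ (s : FreeGroup α) (k : ℕ), 2 ≤ k ∧ prefixProd y L = s ^ k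

theorem ne_invLetter_iff {x z : α × Bool} : x ≠ invLetter z ↔ (x.1 = z.1 → x.2 = z.2) := by
  obtain ⟨a, _ | _⟩ := x <;> obtain ⟨b, _ | _⟩ := z <;> simp [invLetter]

variable {y}

theorem isReduced_segment (hred : ∀ i, y (i + 1) ≠ invLetter (y i)) (s t : ℕ) :
    FreeGroup.IsReduced (segment y s t) := by
  induction t with
  | zero => simp
  | succ t ih =>
    cases t with
    | zero => simp [segment_succ]
    | succ t =>
      rw [segment_succ, segment_succ] at *
      refine List.isChain_cons_cons.2 ⟨ne_invLetter_iff.1 ?_, ih⟩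
      rw [← add_assoc, Nat.cast_succ]
      exact hred _

theorem prefixProd_injective (hred : ∀ i, y (i + 1) ≠ invLetter (y i)) :
    Function.Injective (prefixProd y) := by
  classical
  refine Function.LeftInverse.injective (g := FreeGroup.norm) fun t => ?_
  rw [prefixProd, FreeGroup.norm, FreeGroup.toWord_mk, (isReduced_segment hred 0 t).reduce_eq,
    length_segment]

theorem eq_of_prefixProd_eq_mul_zpow (hred : ∀ i, y (i + 1) ≠ invLetter (y i)) {s t : ℕ}
    (hs : s < L) (ht : t < L) {j : ℤ} (h : prefixProd y t = prefixProd y s * prefixProd y L ^ j) :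
    s = t := by
  have aux {s t n : ℕ} (ht : t < L) (h : prefixProd y t = prefixProd y (s + n * L)) : s = t := by
    have hst := prefixProd_injective hred h
    rcases Nat.eq_zero_or_pos n with rfl | hn
    · simpa using hst.symm
    · have := Nat.le_mul_of_pos_left L hn
      omega
  obtain ⟨n, rfl | rfl⟩ := j.eq_nat_or_neg
  · exact aux ht (by rw [prefixProd_add_mul_period, h, zpow_natCast])
  · refine (aux hs (n := n) ?_).symm
    rw [prefixProd_add_mul_period, h, zpow_neg, zpow_natCast, inv_mul_cancel_right]

/-- A stacking of the cyclic word `y` in the sense of Louder and Wilton: distinct heights for the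
positions of `y` such that reading a letter moves the heights by the action of that letter by
order automorphisms. -/
structure Stacking (y : ZMod L → α × Bool) (P : Type*) [LinearOrder P] where
  action : FreeGroup α →* (P ≃o P)
  height : ZMod L → P
  height_injective : Function.Injective height
  height_add_one : ∀ i, height (i + 1) = action (letter (y i)) (height i)

theorem periodic_conj_prefixProd (y : ZMod L → α × Bool) :
    Function.Periodic (fun t => MulAut.conj (prefixProd y t) (prefixProd y L)) L := by
  intro t
  simp [prefixProd_add_period, mul_assoc]

-- The height of a position is the cyclic conjugate of the relator starting there, compared in a
-- bi-invariant order; heights are distinct because the relator generates its own centralizer.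
theorem IsPrimitiveCyclicWord.exists_stacking [NeZero L] (hy : IsPrimitiveCyclicWord y) :
    ∃ _ : LinearOrder (FreeGroup α), Nonempty (Stacking y (FreeGroup α)) := by
  obtain ⟨_, _, _⟩ := exists_biinvariant_linearOrder α
  refine ⟨inferInstance, ⟨?_⟩⟩
  have hmono (g : FreeGroup α) : StrictMono (MulAut.conj g) := fun a b hab =>
    mul_lt_mul_left (mul_lt_mul_right hab g) g⁻¹
  refine
    { action :=
        { toFun := fun g => (hmono g).orderIsoOfSurjective _ (MulAut.conj g).surjective
          map_one' := by ext; simp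
          map_mul' := fun g h => by ext; simp }
      height := fun i => MulAut.conj (prefixProd y i.val) (prefixProd y L)
      height_injective := fun i j hij => ZMod.val_injective L ?_
      height_add_one := fun i => ?_ }
  · set s := prefixProd y i.val
    set t := prefixProd y j.val
    set r := prefixProd y L
    have hcomm : Commute (s⁻¹ * t) r := by
      have hij : s * r * s⁻¹ = t * r * t⁻¹ := hij
      calc s⁻¹ * t * r = s⁻¹ * (t * r * t⁻¹) * t := by group
        _ = s⁻¹ * (s * r * s⁻¹) * t := by rw [hij]
        _ = r * (s⁻¹ * t) := by group
    obtain ⟨k, hk⟩ := mem_zpowers_of_commute hy.not_pow hcomm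
    refine eq_of_prefixProd_eq_mul_zpow hy.ne_invLetter i.val_lt j.val_lt (j := k) ?_
    exact (mul_inv_cancel_left s t).symm.trans (congrArg (s * ·) hk.symm)
  · have hval : (i + 1).val = (i.val + 1) % L := by
      rw [← ZMod.val_natCast, Nat.cast_succ, ZMod.natCast_zmod_val]
    rw [hval, (periodic_conj_prefixProd y).map_mod_nat, prefixProd_succ, map_mul,
      ZMod.natCast_zmod_val]
    rfl

/-- The cyclic word spelled by a nonempty list, which is read from right to left. -/
def cyclicWord (w : List (α × Bool)) [NeZero w.length] (i : ZMod w.length) : α × Bool :=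
  w.reverse[i.val]'(by simpa using i.val_lt)

theorem cyclicWord_natCast (w : List (α × Bool)) [NeZero w.length] {t : ℕ} (ht : t < w.length) :
    cyclicWord w t = w.reverse[t]'(by simpa using ht) := by
  simp only [cyclicWord, ZMod.val_natCast, Nat.mod_eq_of_lt ht]

theorem segment_cyclicWord (w : List (α × Bool)) [NeZero w.length] :
    segment (cyclicWord w) 0 w.length = w := by
  rw [← List.reverse_inj]
  refine List.ext_getElem (by simp) fun i hi _ => ?_
  have hi : i < w.length := by simpa using hi
  simp [segment, cyclicWord_natCast w hi]

theorem cyclicWord_ne_invLetter [DecidableEq α] {r : FreeGroup α} (hcyc : r.CyclicallyReduced)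
    [NeZero r.toWord.length] (i : ZMod r.toWord.length) :
    cyclicWord r.toWord (i + 1) ≠ invLetter (cyclicWord r.toWord i) := by
  have hi := i.val_lt
  rw [← ZMod.natCast_zmod_val i]
  generalize i.val = t at hi
  rw [← Nat.cast_succ, cyclicWord_natCast _ hi]
  rcases (Nat.succ_le_iff.2 hi).lt_or_eq with ht | ht
  · rw [cyclicWord_natCast _ ht, List.getElem_reverse, List.getElem_reverse, ne_invLetter_iff]
    have hchain := List.isChain_iff_getElem.1 (FreeGroup.isReduced_toWord (x := r))
      (r.toWord.length - 1 - (t + 1)) (by omega)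
    simpa only [show r.toWord.length - 1 - (t + 1) + 1 = r.toWord.length - 1 - t by omega]
      using hchain
  · have hzero : ((t + 1 : ℕ) : ZMod r.toWord.length) = ((0 : ℕ) : ZMod r.toWord.length) := by
      rw [show t + 1 = r.toWord.length from ht]; simp
    rw [hzero, cyclicWord_natCast _ (NeZero.pos _), List.getElem_reverse,
      List.getElem_reverse]
    intro hinv
    refine hcyc r.toWord[0] ?_ ?_
    · rw [List.head?_eq_getElem?, List.getElem?_eq_getElem]
    · rw [List.getLast?_eq_getElem?, List.getElem?_eq_getElem (by omega)]
      simpa only [Nat.sub_zero, show r.toWord.length - 1 - t = 0 by omega] using! congrArg some hinv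

theorem exists_isPrimitiveCyclicWord [DecidableEq α] {r : FreeGroup α}
    (hcyc : r.CyclicallyReduced) (hpow : ¬ ∃ (s : FreeGroup α) (k : ℕ), 2 ≤ k ∧ r = s ^ k) :
    ∃ (L : ℕ) (_ : NeZero L) (y : ZMod L → α × Bool),
      IsPrimitiveCyclicWord y ∧ prefixProd y L = r := by
  have hr : r ≠ 1 := fun h => hpow ⟨1, 2, le_rfl, by simpa using h⟩
  have : NeZero r.toWord.length := ⟨by simpa using hr⟩
  have hprod : prefixProd (cyclicWord r.toWord) r.toWord.length = r := by
    rw [prefixProd, segment_cyclicWord, FreeGroup.mk_toWord]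
  exact ⟨_, this, cyclicWord r.toWord, ⟨cyclicWord_ne_invLetter hcyc, hprod.symm ▸ hpow⟩, hprod⟩

end CyclicWords

section Sheets

variable {α : Type u} {Ω : Type*} [MulAction (FreeGroup α) Ω]

/-- The edge of the action graph traversed when the letter `x` is read at the vertex `ν`. An edge is
encoded by its source and its generator, so reading an inverse generator ends at the source. -/
def edgeOf (x : α × Bool) (ν : Ω) : Ω × α := if x.2 then (ν, x.1) else (letter x • ν, x.1)

variable {L : ℕ} (y : ZMod L → α × Bool)

/-- A sheet is a vertex on which a copy of the cyclic word `y` currently stands at a given position;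
reading the letter at that position moves it to the next sheet. -/
def nextSheet (s : Ω × ZMod L) : Ω × ZMod L := (letter (y s.2) • s.1, s.2 + 1)

/-- The edge along which a sheet moves to the next one. -/
def sheetEdge (s : Ω × ZMod L) : Ω × α := edgeOf (y s.2) s.1

/-- Of a sheet and its successor, the one at the source of the edge joining them. -/
def sourceSheet (s : Ω × ZMod L) : Ω × ZMod L := if (y s.2).2 then s else nextSheet y s

/-- Of a sheet and its successor, the one at the target of the edge joining them. -/
def targetSheet (s : Ω × ZMod L) : Ω × ZMod L := if (y s.2).2 then nextSheet y s else s

theorem sourceSheet_fst (s : Ω × ZMod L) : (sourceSheet y s).1 = (sheetEdge y s).1 := by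
  simp only [sourceSheet, sheetEdge, edgeOf, nextSheet]
  split_ifs <;> rfl

theorem targetSheet_fst (s : Ω × ZMod L) :
    (targetSheet y s).1 = FreeGroup.of (sheetEdge y s).2 • (sheetEdge y s).1 := by
  rcases h : y s.2 with ⟨a, _ | _⟩ <;>
    simp [targetSheet, sheetEdge, edgeOf, nextSheet, h, letter_true, letter_false]

theorem sheetEdge_snd (s : Ω × ZMod L) : (sheetEdge y s).2 = (y s.2).1 := by
  simp only [sheetEdge, edgeOf]
  split_ifs <;> rfl

theorem nextSheet_injective : Function.Injective (nextSheet y : Ω × ZMod L → Ω × ZMod L) := by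
  rintro ⟨a, i⟩ ⟨b, j⟩ h
  simp only [nextSheet, Prod.mk.injEq, add_left_inj] at h
  obtain ⟨h, rfl⟩ := h
  simpa using h

theorem iterate_nextSheet_snd (s : Ω × ZMod L) (j : ℕ) : ((nextSheet y)^[j] s).2 = s.2 + j := by
  induction j with
  | zero => simp
  | succ j ih => rw [Function.iterate_succ_apply', nextSheet, ih, Nat.cast_succ, add_assoc]

variable {y} {P : Type*} [LinearOrder P]

namespace Stacking

variable (S : Stacking y P)

theorem height_targetSheet (s : Ω × ZMod L) :
    S.height (targetSheet y s).2 =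
      S.action (FreeGroup.of (sheetEdge y s).2) (S.height (sourceSheet y s).2) := by
  rcases h : y s.2 with ⟨a, _ | _⟩ <;>
    simp [targetSheet, sourceSheet, sheetEdge, edgeOf, nextSheet, h, S.height_add_one, letter_true,
      letter_false]

theorem height_targetSheet_le_iff {s s' : Ω × ZMod L} (h : sheetEdge y s = sheetEdge y s') :
    S.height (targetSheet y s).2 ≤ S.height (targetSheet y s').2 ↔
      S.height (sourceSheet y s).2 ≤ S.height (sourceSheet y s').2 := by
  rw [height_targetSheet, height_targetSheet, h, OrderIso.le_iff_le]

theorem eq_of_sheetEdge_eq (hred : ∀ i, y (i + 1) ≠ invLetter (y i)) {s s' : Ω × ZMod L}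
    (h : sheetEdge y s = sheetEdge y s')
    (hheight : S.height (sourceSheet y s).2 = S.height (sourceSheet y s').2) : s = s' := by
  have hsource : sourceSheet y s = sourceSheet y s' :=
    Prod.ext (by rw [sourceSheet_fst, sourceSheet_fst, h]) (S.height_injective hheight)
  have hgen : (y s.2).1 = (y s'.2).1 := by rw [← sheetEdge_snd, ← sheetEdge_snd, h]
  unfold sourceSheet at hsource
  split_ifs at hsource with hs hs' hs'
  · exact hsource
  · refine absurd (Prod.ext ?_ ?_) (hred s'.2)
    · simpa [hsource, nextSheet, invLetter] using hgen
    · simpa [hsource, nextSheet, invLetter, hs'] using hs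
  · refine absurd (Prod.ext ?_ ?_) (hred s.2)
    · simpa [← hsource, nextSheet, invLetter] using hgen.symm
    · simpa [← hsource, nextSheet, invLetter, hs] using hs'
  · exact nextSheet_injective y hsource

end Stacking

end Sheets

section Counting

variable {α : Type u} {Ω : Type*} [MulAction (FreeGroup α) Ω] [DecidableEq α] [DecidableEq Ω]
  {L : ℕ} {y : ZMod L → α × Bool} {P : Type*} [LinearOrder P]

namespace Stacking

variable (S : Stacking y P) (D : Finset (Ω × ZMod L))

/-- The sheets of `D` that are highest among those along the same edge. -/
def topOnEdge : Finset (Ω × ZMod L) :=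
  {s ∈ D | ∀ s' ∈ D, sheetEdge y s' = sheetEdge y s →
    S.height (sourceSheet y s').2 ≤ S.height (sourceSheet y s).2}

/-- The sheets of `D` that are highest among those at the same vertex. -/
def topAtVertex : Finset (Ω × ZMod L) :=
  {s ∈ D | ∀ s' ∈ D, s'.1 = s.1 → S.height s'.2 ≤ S.height s.2}

theorem card_topOnEdge_le (hred : ∀ i, y (i + 1) ≠ invLetter (y i)) :
    (S.topOnEdge D).card ≤ (D.image (sheetEdge y)).card := by
  refine Finset.card_le_card_of_injOn (sheetEdge y) (fun s hs => ?_) fun s hs s' hs' h => ?_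
  · exact Finset.mem_image_of_mem _ (Finset.mem_filter.1 hs).1
  · obtain ⟨hs, htop⟩ := Finset.mem_filter.1 hs
    obtain ⟨hs', htop'⟩ := Finset.mem_filter.1 hs'
    exact S.eq_of_sheetEdge_eq hred h (le_antisymm (htop' _ hs h) (htop _ hs' h.symm))

omit [MulAction (FreeGroup α) Ω] [DecidableEq α] in
theorem card_image_fst_le : (D.image Prod.fst).card ≤ (S.topAtVertex D).card := by
  refine (Finset.card_le_card (t := (S.topAtVertex D).image Prod.fst) fun v hv => ?_).trans
    Finset.card_image_le
  obtain ⟨s₀, hs₀, rfl⟩ := Finset.mem_image.1 hv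
  obtain ⟨s, hs, hmax⟩ := Finset.exists_max_image {s ∈ D | s.1 = s₀.1} (fun s => S.height s.2)
    ⟨s₀, by simp [hs₀]⟩
  simp only [Finset.mem_filter] at hs hmax
  exact Finset.mem_image.2 ⟨s, Finset.mem_filter.2
    ⟨hs.1, fun s' hs' he => hmax s' ⟨hs', he.trans hs.2⟩⟩, hs.2⟩

variable {D} (hD : ∀ s ∈ D, nextSheet y s ∈ D)
include hD

theorem mem_topOnEdge {s : Ω × ZMod L} (hs : s ∈ D)
    (htop : s ∈ S.topAtVertex D ∨ nextSheet y s ∈ S.topAtVertex D) : s ∈ S.topOnEdge D := by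
  have hend : sourceSheet y s ∈ S.topAtVertex D ∨ targetSheet y s ∈ S.topAtVertex D := by
    unfold sourceSheet targetSheet
    split_ifs
    exacts [htop, htop.symm]
  refine Finset.mem_filter.2 ⟨hs, fun s' hs' he => ?_⟩
  rcases hend with hsource | htarget
  · refine (Finset.mem_filter.1 hsource).2 _ ?_ (by rw [sourceSheet_fst, sourceSheet_fst, he])
    unfold sourceSheet
    split_ifs
    exacts [hs', hD s' hs']
  · refine (S.height_targetSheet_le_iff he).1 <|
      (Finset.mem_filter.1 htarget).2 _ ?_ (by rw [targetSheet_fst, targetSheet_fst, he])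
    unfold targetSheet
    split_ifs
    exacts [hD s' hs', hs']

omit [DecidableEq α] [DecidableEq Ω] in
theorem iterate_nextSheet_mem {s : Ω × ZMod L} (hs : s ∈ D) (j : ℕ) : (nextSheet y)^[j] s ∈ D :=
  Set.MapsTo.iterate (s := (D : Set (Ω × ZMod L))) hD j hs

theorem exists_iterate_mem_topOnEdge [NeZero L] {s : Ω × ZMod L} (hs : s ∈ D) :
    ∃ j < L, (nextSheet y)^[j] s ∈ S.topOnEdge D := by
  obtain ⟨imax, himax⟩ := Finite.exists_max S.height
  have hmem := iterate_nextSheet_mem hD hs (imax - s.2).val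
  refine ⟨_, ZMod.val_lt _, S.mem_topOnEdge hD hmem (.inl (Finset.mem_filter.2 ⟨hmem, ?_⟩))⟩
  intro s' _ _
  rw [iterate_nextSheet_snd, ZMod.natCast_zmod_val, add_sub_cancel]
  exact himax s'.2

-- The first member of `topOnEdge` met by a sheet is not highest at its vertex, as otherwise the
-- sheet before it would already be in `topOnEdge`.
theorem exists_iterate_mem_sdiff [NeZero L] {s : Ω × ZMod L} (hs : s ∈ D)
    (htop : s ∉ S.topOnEdge D) :
    ∃ j < L, (nextSheet y)^[j] s ∈ S.topOnEdge D \ S.topAtVertex D := by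
  have hex := S.exists_iterate_mem_topOnEdge hD hs
  obtain ⟨hlt, hmem⟩ := Nat.find_spec hex
  refine ⟨Nat.find hex, hlt, Finset.mem_sdiff.2 ⟨hmem, fun hvertex => ?_⟩⟩
  rcases hj : Nat.find hex with _ | j
  · exact htop (by simpa [hj] using hmem)
  · rw [hj, Function.iterate_succ_apply'] at hvertex
    exact Nat.find_min hex (m := j) (by omega)
      ⟨by omega, S.mem_topOnEdge hD (iterate_nextSheet_mem hD hs j) (.inr hvertex)⟩

theorem card_filter_notMem_topOnEdge_le [NeZero L] (i₀ : ZMod L) :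
    {s ∈ D | s.2 = i₀ ∧ s ∉ S.topOnEdge D}.card ≤ (S.topOnEdge D \ S.topAtVertex D).card := by
  have hex (s) (hs : s ∈ {s ∈ D | s.2 = i₀ ∧ s ∉ S.topOnEdge D}) :=
    S.exists_iterate_mem_sdiff hD (Finset.mem_filter.1 hs).1 (Finset.mem_filter.1 hs).2.2
  choose! j hj hmem using hex
  refine Finset.card_le_card_of_injOn (fun s => (nextSheet y)^[j s] s) hmem
    fun s hs s' hs' he => ?_
  have hpos := congrArg Prod.snd he
  have hi := (Finset.mem_filter.1 hs).2.1
  have hi' := (Finset.mem_filter.1 hs').2.1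
  simp only [iterate_nextSheet_snd, hi, hi', add_right_inj, ZMod.natCast_eq_natCast_iff] at hpos
  have hjj : j s = j s' := Nat.ModEq.eq_of_lt_of_lt hpos (hj s hs) (hj s' hs')
  exact (nextSheet_injective y).iterate (j s') (by simpa only [hjj] using he)

omit hD in
theorem eq_of_mem_topOnEdge (hred : ∀ i, y (i + 1) ≠ invLetter (y i)) {s s' : Ω × ZMod L}
    (htop : s ∈ S.topOnEdge D) (hmin : ∀ i, S.height s.2 ≤ S.height i) (hs' : s' ∈ D)
    (he : sheetEdge y s' = sheetEdge y s) : s' = s := by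
  refine S.eq_of_sheetEdge_eq hred he (le_antisymm ((Finset.mem_filter.1 htop).2 s' hs' he) ?_)
  by_cases hdir : (y s.2).2
  · simpa only [sourceSheet, hdir, if_true] using hmin _
  · rw [← S.height_targetSheet_le_iff he.symm]
    simpa only [targetSheet, if_neg hdir] using hmin _

end Stacking

theorem IsPrimitiveCyclicWord.exists_card_add_card_le [NeZero L] (hy : IsPrimitiveCyclicWord y) :
    ∃ i₀ : ZMod L, ∀ D : Finset (Ω × ZMod L), (∀ s ∈ D, nextSheet y s ∈ D) →
      {s ∈ D | s.2 = i₀}.card + (D.image Prod.fst).card ≤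
        (D.image (sheetEdge y)).card +
          {s ∈ D | s.2 = i₀ ∧ ∀ s' ∈ D, sheetEdge y s' = sheetEdge y s → s' = s}.card := by
  obtain ⟨_, ⟨S⟩⟩ := hy.exists_stacking
  obtain ⟨i₀, hi₀⟩ := Finite.exists_min S.height
  refine ⟨i₀, fun D hD => ?_⟩
  have hlost : {s ∈ D | s.2 = i₀ ∧ s ∈ S.topOnEdge D} ⊆
      {s ∈ D | s.2 = i₀ ∧ ∀ s' ∈ D, sheetEdge y s' = sheetEdge y s → s' = s} := by
    refine Finset.monotone_filter_right D fun s _ ⟨hi, htop⟩ => ⟨hi, fun s' hs' he => ?_⟩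
    exact S.eq_of_mem_topOnEdge hy.ne_invLetter htop (hi ▸ hi₀) hs' he
  have hvertex : S.topAtVertex D ⊆ S.topOnEdge D := fun s hs =>
    S.mem_topOnEdge hD (Finset.mem_filter.1 hs).1 (.inl hs)
  have hedges := S.card_topOnEdge_le D hy.ne_invLetter
  have hvertices := S.card_image_fst_le D
  have hrest := S.card_filter_notMem_topOnEdge_le hD i₀
  have hsplit := Finset.card_filter_add_card_filter_not (s := {s ∈ D | s.2 = i₀})
    (fun s => s ∈ S.topOnEdge D)
  simp only [Finset.filter_filter] at hsplit
  have hsdiff := Finset.card_sdiff_add_card_eq_card hvertex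
  have hcard := Finset.card_le_card hlost
  omega

end Counting

/-! ### Chains on action graphs -/

section Chains

variable {α : Type u} {Ω : Type*} [MulAction (FreeGroup α) Ω] (K : Type*)

theorem edgeOf_eq_edgeOf {x x' : α × Bool} {ν ν' : Ω} (h : edgeOf x ν = edgeOf x' ν') :
    (x' = x ∧ ν' = ν) ∨ (x' = invLetter x ∧ ν' = letter x • ν) := by
  obtain ⟨a, b⟩ := x
  obtain ⟨a', b'⟩ := x'
  cases b <;> cases b' <;>
    simp only [edgeOf, if_true, Bool.false_eq_true, if_false, Prod.mk.injEq] at h <;>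
    obtain ⟨h, rfl⟩ := h
  · exact .inl ⟨rfl, ((MulAction.injective _) h).symm⟩
  · exact .inr ⟨rfl, h.symm⟩
  · exact .inr ⟨rfl, by rw [h, ← mul_smul, letter_true, letter_false]; simp⟩
  · exact .inl ⟨rfl, h.symm⟩

theorem edgeOf_invLetter (x : α × Bool) (ν : Ω) :
    edgeOf (invLetter x) (letter x • ν) = edgeOf x ν := by
  rcases x with ⟨a, _ | _⟩ <;> simp [edgeOf, invLetter, letter_true, letter_false]

section Boundary

variable [Ring K]

/-- The boundary map from the 1-chains to the 0-chains of the action graph. -/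
noncomputable def boundary : ((Ω × α) →₀ K) →ₗ[K] (Ω →₀ K) :=
  Finsupp.linearCombination K fun e : Ω × α =>
    Finsupp.single (FreeGroup.of e.2 • e.1) 1 - Finsupp.single e.1 1

theorem boundary_single (e : Ω × α) (a : K) :
    boundary K (Finsupp.single e a) =
      a • (Finsupp.single (FreeGroup.of e.2 • e.1) 1 - Finsupp.single e.1 1) := by
  rw [boundary, Finsupp.linearCombination_single]

theorem boundary_single_edgeOf (x : α × Bool) (ν : Ω) :
    boundary K (Finsupp.single (edgeOf x ν) (letterSign x.2 : K)) =
      Finsupp.single (letter x • ν) 1 - Finsupp.single ν 1 := by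
  rcases x with ⟨a, _ | _⟩ <;>
    simp [boundary_single, edgeOf, letterSign, letter_true, letter_false]

theorem linearCombination_one_boundary (c : (Ω × α) →₀ K) :
    Finsupp.linearCombination K (fun _ => (1 : K)) (boundary K c) = 0 := by
  suffices Finsupp.linearCombination K (fun _ : Ω => (1 : K)) ∘ₗ boundary (α := α) K = 0 from
    LinearMap.congr_fun this c
  ext e
  simp [boundary_single]

/-- The 1-chain of the path reading the word `l`, from right to left, starting at `ν`. -/
noncomputable def pathChain : List (α × Bool) → Ω → (Ω × α) →₀ K
  | [], _ => 0
  | x :: l, ν => pathChain l ν + Finsupp.single (edgeOf x (FreeGroup.mk l • ν)) (letterSign x.2 : K)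

theorem pathChain_append (l l' : List (α × Bool)) (ν : Ω) :
    pathChain K (l ++ l') ν = pathChain K l (FreeGroup.mk l' • ν) + pathChain K l' ν := by
  induction l with
  | nil => simp [pathChain]
  | cons x l ih =>
    rw [List.cons_append, pathChain, pathChain, ih, ← FreeGroup.mul_mk, mul_smul, add_right_comm]

theorem boundary_pathChain (l : List (α × Bool)) (ν : Ω) :
    boundary K (pathChain K l ν) =
      Finsupp.single (FreeGroup.mk l • ν) 1 - Finsupp.single ν 1 := by
  induction l with
  | nil => simp [pathChain, ← FreeGroup.one_eq_mk]
  | cons x l ih =>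
    rw [pathChain, map_add, ih, boundary_single_edgeOf, mk_cons, mul_smul, sub_add_sub_cancel']

theorem pathChain_eq_of_step {l l' : List (α × Bool)} (h : FreeGroup.Red.Step l l') (ν : Ω) :
    pathChain K l ν = pathChain K l' ν := by
  obtain @⟨l₁, l₂, a, b⟩ := h
  have hcancel : pathChain K [(a, b), (a, !b)] (FreeGroup.mk l₂ • ν) = 0 := by
    have hedge := edgeOf_invLetter (a, !b) (FreeGroup.mk l₂ • ν)
    simp only [invLetter, Bool.not_not, letter] at hedge
    simp only [pathChain, hedge, ← FreeGroup.one_eq_mk, one_smul, zero_add, ← Finsupp.single_add]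
    cases b <;> simp [letterSign]
  rw [show l₁ ++ (a, b) :: (a, !b) :: l₂ = l₁ ++ ([(a, b), (a, !b)] ++ l₂) from rfl,
    pathChain_append, pathChain_append, pathChain_append, hcancel, zero_add]
  rw [show FreeGroup.mk ([(a, b), (a, !b)] ++ l₂) = FreeGroup.mk l₂ from
    Quot.sound FreeGroup.Red.Step.cons_not]

/-- The 1-chain of the path from `ν` to `g • ν`, which only depends on the element `g` of the free
group. -/
noncomputable def chain (g : FreeGroup α) (ν : Ω) : (Ω × α) →₀ K :=
  Quot.lift (fun l => pathChain K l ν) (fun _ _ h => pathChain_eq_of_step K h ν) g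

theorem chain_mk (l : List (α × Bool)) (ν : Ω) :
    chain K (FreeGroup.mk l) ν = pathChain K l ν := rfl

theorem chain_letter (x : α × Bool) (ν : Ω) :
    chain K (letter x) ν = Finsupp.single (edgeOf x ν) (letterSign x.2 : K) := by
  rw [letter, chain_mk, pathChain, pathChain, ← FreeGroup.one_eq_mk, one_smul, zero_add]

theorem chain_one (ν : Ω) : chain K (1 : FreeGroup α) ν = 0 := rfl

theorem chain_mul (g h : FreeGroup α) (ν : Ω) :
    chain K (g * h) ν = chain K g (h • ν) + chain K h ν := by
  obtain ⟨l, rfl⟩ := Quot.exists_rep g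
  obtain ⟨l', rfl⟩ := Quot.exists_rep h
  exact pathChain_append K l l' ν

theorem chain_inv (g : FreeGroup α) (ν : Ω) : chain K g⁻¹ ν = -chain K g (g⁻¹ • ν) := by
  have h := chain_mul K g g⁻¹ ν
  rw [mul_inv_cancel, chain_one] at h
  exact (neg_eq_of_add_eq_zero_right h.symm).symm

theorem boundary_chain (g : FreeGroup α) (ν : Ω) :
    boundary K (chain K g ν) = Finsupp.single (g • ν) 1 - Finsupp.single ν 1 := by
  obtain ⟨l, rfl⟩ := Quot.exists_rep g
  exact boundary_pathChain K l ν

end Boundary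

section PathEdges

variable [DecidableEq α] [DecidableEq Ω]

/-- The edges visited by the path reading the word `l`, from right to left, starting at `ν`. -/
def pathEdges : List (α × Bool) → Ω → Finset (Ω × α)
  | [], _ => ∅
  | x :: l, ν => insert (edgeOf x (FreeGroup.mk l • ν)) (pathEdges l ν)

theorem pathEdges_append (l l' : List (α × Bool)) (ν : Ω) :
    pathEdges (l ++ l') ν = pathEdges l (FreeGroup.mk l' • ν) ∪ pathEdges l' ν := by
  induction l with
  | nil => simp [pathEdges]
  | cons x l ih =>
    simp only [List.cons_append, pathEdges, ih, Finset.insert_union, ← FreeGroup.mul_mk, mul_smul]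

theorem exists_eq_append_of_mem_pathEdges {l : List (α × Bool)} {ν : Ω} {e : Ω × α}
    (h : e ∈ pathEdges l ν) :
    ∃ l₁ x l₂, l = l₁ ++ x :: l₂ ∧ edgeOf x (FreeGroup.mk l₂ • ν) = e := by
  induction l with
  | nil => simp [pathEdges] at h
  | cons x l ih =>
    rcases Finset.mem_insert.1 h with rfl | h
    · exact ⟨[], x, l, rfl, rfl⟩
    · obtain ⟨l₁, x', l₂, rfl, he⟩ := ih h
      exact ⟨x :: l₁, x', l₂, rfl, he⟩

theorem card_pathEdges_le (l : List (α × Bool)) (ν : Ω) : (pathEdges l ν).card ≤ l.length := by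
  induction l with
  | nil => simp [pathEdges]
  | cons x l ih => exact (Finset.card_insert_le _ _).trans (Nat.succ_le_succ ih)

theorem pathEdges_subset_of_step {l l' : List (α × Bool)} (h : FreeGroup.Red.Step l l') (ν : Ω) :
    pathEdges l' ν ⊆ pathEdges l ν := by
  obtain @⟨l₁, l₂, a, b⟩ := h
  rw [pathEdges_append, pathEdges_append, show FreeGroup.mk ((a, b) :: (a, !b) :: l₂) =
    FreeGroup.mk l₂ from Quot.sound FreeGroup.Red.Step.cons_not]
  exact Finset.union_subset_union_right
    ((Finset.subset_insert _ _).trans (Finset.subset_insert _ _))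

theorem pathEdges_reduce_subset (l : List (α × Bool)) (ν : Ω) :
    pathEdges (FreeGroup.reduce l) ν ⊆ pathEdges l ν := by
  have hred : FreeGroup.Red l (FreeGroup.reduce l) := FreeGroup.reduce.red
  generalize FreeGroup.reduce l = l' at hred
  induction hred with
  | refl => rfl
  | tail _ hstep ih => exact (pathEdges_subset_of_step hstep ν).trans ih

variable [Ring K]

theorem pathChain_mem_supported (l : List (α × Bool)) (ν : Ω) :
    pathChain K l ν ∈ Finsupp.supported K K (pathEdges l ν : Set (Ω × α)) := by
  induction l with
  | nil => simp [pathChain]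
  | cons x l ih =>
    refine Submodule.add_mem _ (Finsupp.supported_mono ?_ ih) (Finsupp.single_mem_supported K _ ?_)
    · exact Finset.coe_subset.2 (Finset.subset_insert _ _)
    · simp [pathEdges]

theorem pathChain_apply_eq_zero {l : List (α × Bool)} {ν : Ω} {e : Ω × α}
    (he : e ∉ pathEdges l ν) : pathChain K l ν e = 0 :=
  Finsupp.notMem_support_iff.1 fun h => he (pathChain_mem_supported K l ν h)

end PathEdges

end Chains

section Rank

variable (K : Type*) [Field K]

theorem finrank_supported {X : Type*} (E : Finset X) :
    Module.finrank K (Finsupp.supported K K (E : Set X)) = E.card := by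
  rw [LinearEquiv.finrank_eq (Finsupp.supportedEquivFinsupp (E : Set X))]
  simp

instance finiteDimensional_supported {X : Type*} (E : Finset X) :
    FiniteDimensional K (Finsupp.supported K K (E : Set X)) :=
  Module.Finite.equiv (Finsupp.supportedEquivFinsupp (E : Set X)).symm

variable {α : Type u} {Ω : Type*} [MulAction (FreeGroup α) Ω]

theorem finrank_range_boundary_lt {E : Finset (Ω × α)} {V : Finset Ω} (hV : V.Nonempty)
    (hends : ∀ e ∈ E, e.1 ∈ V ∧ FreeGroup.of e.2 • e.1 ∈ V) :
    Module.finrank K (LinearMap.range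
      ((boundary K).domRestrict (Finsupp.supported K K (E : Set (Ω × α))))) < V.card := by
  rw [← finrank_supported K V, LinearMap.range_domRestrict]
  refine Submodule.finrank_lt_finrank_of_lt (SetLike.lt_iff_le_and_exists.2 ⟨?_, ?_⟩)
  · rw [Finsupp.supported_eq_span_single, Submodule.map_span_le]
    rintro _ ⟨e, he, rfl⟩
    rw [boundary_single, one_smul]
    exact Submodule.sub_mem _ (Finsupp.single_mem_supported K _ (hends e he).2)
      (Finsupp.single_mem_supported K _ (hends e he).1)
  · obtain ⟨v, hv⟩ := hV
    refine ⟨Finsupp.single v 1, Finsupp.single_mem_supported K _ hv, ?_⟩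
    rintro ⟨c, -, hc⟩
    have hsum := linearCombination_one_boundary K c
    simp [hc] at hsum

theorem card_add_one_le_of_cycles_le_span {E : Finset (Ω × α)} {V : Finset Ω} (hV : V.Nonempty)
    (hends : ∀ e ∈ E, e.1 ∈ V ∧ FreeGroup.of e.2 • e.1 ∈ V) (G : Finset ((Ω × α) →₀ K))
    (hG : ∀ c ∈ Finsupp.supported K K (E : Set (Ω × α)), boundary K c = 0 →
      c ∈ Submodule.span K (G : Set ((Ω × α) →₀ K))) :
    E.card + 1 ≤ V.card + G.card := by
  set W := Finsupp.supported K K (E : Set (Ω × α))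
  set f := (boundary K : ((Ω × α) →₀ K) →ₗ[K] (Ω →₀ K)).domRestrict W
  have hrank := LinearMap.finrank_range_add_finrank_ker (K := K) (V := W) (V₂ := Ω →₀ K) f
  rw [finrank_supported] at hrank
  have hker : Module.finrank K (LinearMap.ker f) ≤ G.card := by
    let toSpan : LinearMap.ker f →ₗ[K] Submodule.span K (G : Set ((Ω × α) →₀ K)) :=
      (W.subtype ∘ₗ (LinearMap.ker f).subtype).codRestrict _ fun c => hG _ c.1.2 c.2
    have hinj : Function.Injective toSpan := fun a b hab => by
      have hval := congrArg Subtype.val hab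
      exact Subtype.ext (Subtype.ext hval)
    exact (LinearMap.finrank_le_finrank_of_injective hinj).trans (finrank_span_finset_le_card G)
  have hrange : Module.finrank K (LinearMap.range f) < V.card :=
    finrank_range_boundary_lt K hV hends
  omega

end Rank

section Forest

variable {α : Type u} {Ω : Type*} [MulAction (FreeGroup α) Ω] [DecidableEq α] [DecidableEq Ω]
  (K : Type*) [Ring K] [Nontrivial K]

theorem edgeOf_mem_pathEdges_of_pathChain_eq_zero {x : α × Bool} {l : List (α × Bool)} {ν : Ω}
    (h : pathChain K (x :: l) ν = 0) : edgeOf x (FreeGroup.mk l • ν) ∈ pathEdges l ν := by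
  by_contra hmem
  have hcoeff := DFunLike.congr_fun h (edgeOf x (FreeGroup.mk l • ν))
  rw [pathChain, Finsupp.add_apply, pathChain_apply_eq_zero K hmem] at hcoeff
  rcases x with ⟨a, _ | _⟩ <;> simp [letterSign] at hcoeff

variable {E : Finset (Ω × α)}
  (hE : ∀ c ∈ Finsupp.supported K K (E : Set (Ω × α)), boundary K c = 0 → c = 0)
include hE

-- The last edge of a closed path occurs earlier, which cuts out a shorter closed path.
theorem eq_nil_of_isReduced_of_smul_eq {l : List (α × Bool)} {ν : Ω}
    (hred : FreeGroup.IsReduced l) (hsub : pathEdges l ν ⊆ E) (hclosed : FreeGroup.mk l • ν = ν) :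
    l = [] := by
  induction hn : l.length using Nat.strong_induction_on generalizing l ν with | _ n ih
  obtain _ | ⟨x, l⟩ := l
  · rfl
  exfalso
  have hzero : pathChain K (x :: l) ν = 0 := by
    refine hE _ (Finsupp.supported_mono (by exact_mod_cast hsub) (pathChain_mem_supported K _ ν)) ?_
    rw [boundary_pathChain, hclosed, sub_self]
  obtain ⟨l₁, x', l₂, rfl, he⟩ :=
    exists_eq_append_of_mem_pathEdges (edgeOf_mem_pathEdges_of_pathChain_eq_zero K hzero)
  have hsub' := (Finset.subset_insert _ _).trans hsub
  have hred' : FreeGroup.IsReduced (l₁ ++ x' :: l₂) := List.IsChain.tail hred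
  subst hn
  rcases edgeOf_eq_edgeOf he with ⟨rfl, hν⟩ | ⟨rfl, hν⟩
  · rw [List.append_cons] at hsub' hred' hν
    rw [pathEdges_append] at hsub'
    have hnil := ih _ (by simp) (List.IsChain.left_of_append hred')
      (Finset.union_subset_left hsub') (by rw [← mul_smul, FreeGroup.mul_mk, ← hν]) rfl
    simp at hnil
  · rw [pathEdges_append] at hsub'
    obtain rfl : l₁ = [] := ih _ (by simp) (List.IsChain.left_of_append hred')
      (Finset.union_subset_left hsub')
      (by rw [← mul_smul, FreeGroup.mul_mk, hν, mk_cons, mul_smul]) rfl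
    have hcancel := (List.isChain_cons_cons.1 hred).1
    simp [invLetter] at hcancel

theorem mk_eq_one_of_smul_eq {l : List (α × Bool)} {ν : Ω} (hsub : pathEdges l ν ⊆ E)
    (hclosed : FreeGroup.mk l • ν = ν) : FreeGroup.mk l = 1 := by
  rw [← FreeGroup.reduce.self (L := l)] at hclosed ⊢
  rw [eq_nil_of_isReduced_of_smul_eq K hE
    (FreeGroup.isReduced_iff_reduce_eq.2 FreeGroup.reduce.idem)
    ((pathEdges_reduce_subset l ν).trans hsub) hclosed, FreeGroup.one_eq_mk]

end Forest

/-! ### Relator discs and their free faces -/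

section RelatorSheets

variable {α : Type u} {Ω : Type*} [MulAction (FreeGroup α) Ω] {L : ℕ} (y : ZMod L → α × Bool)

/-- The sheet reached after reading `t` letters of the cyclic word `y` from the vertex `ω`. -/
def sheetAt (t : ℕ) (ω : Ω) : Ω × ZMod L := (prefixProd y t • ω, (t : ZMod L))

/-- The edge traversed by the `t`-th letter of the cyclic word `y` read from the vertex `ω`. -/
def relatorEdge (t : ℕ) (ω : Ω) : Ω × α := sheetEdge y (sheetAt y t ω)

/-- The set `A` of base points is stable under the element `r` represented by `y`, and the orbits of
`r` in `A` have length dividing `n`. This makes `rⁿ` bound a relator disc at each point of `A`. -/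
structure IsRelatorInvariant (n : ℕ) (A : Finset Ω) : Prop where
  smul_mem : ∀ ω ∈ A, prefixProd y L • ω ∈ A
  pow_smul : ∀ ω ∈ A, prefixProd y L ^ n • ω = ω

variable {y}

theorem IsRelatorInvariant.pow_smul_mem {n : ℕ} {A : Finset Ω} (hA : IsRelatorInvariant y n A)
    {ω : Ω} (hω : ω ∈ A) (k : ℕ) : prefixProd y L ^ k • ω ∈ A := by
  induction k with
  | zero => simpa
  | succ k ih => rw [pow_succ', mul_smul]; exact hA.smul_mem _ ih

theorem IsRelatorInvariant.exists_period {n : ℕ} (hn : 0 < n) {A : Finset Ω}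
    (hA : IsRelatorInvariant y n A) {ω : Ω} (hω : ω ∈ A) :
    ∃ d q, n = d * q ∧ 0 < d ∧ prefixProd y L ^ d • ω = ω ∧
      ∀ k, 0 < k → k < d → prefixProd y L ^ k • ω ≠ ω := by
  set d := Function.minimalPeriod (prefixProd y L • ·) ω
  have hper (k : ℕ) : prefixProd y L ^ k • ω = ω ↔ d ∣ k := by
    rw [← Function.isPeriodicPt_iff_minimalPeriod_dvd, Function.IsPeriodicPt, smul_iterate]
    rfl
  obtain ⟨q, hq⟩ := (hper n).1 (hA.pow_smul ω hω)
  refine ⟨d, q, hq, Nat.pos_of_ne_zero ?_, (hper d).2 dvd_rfl, fun k hk hkd h => ?_⟩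
  · rintro h
    simp [h] at hq
    omega
  · exact absurd (Nat.le_of_dvd hk ((hper k).1 h)) (not_le.2 hkd)

variable (y) in
theorem sheetAt_succ (t : ℕ) (ω : Ω) : sheetAt y (t + 1) ω = nextSheet y (sheetAt y t ω) := by
  simp [sheetAt, nextSheet, prefixProd_succ, mul_smul]

variable (y) in
theorem sheetAt_add_mul_period (t k : ℕ) (ω : Ω) :
    sheetAt y (t + k * L) ω = sheetAt y t (prefixProd y L ^ k • ω) := by
  simp [sheetAt, prefixProd_add_mul_period, mul_smul]

theorem eq_of_sheetAt_eq {t i : ℕ} (hi : i < L) {ω ω₀ : Ω} (h : sheetAt y t ω = sheetAt y i ω₀) :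
    t = i + t / L * L ∧ prefixProd y L ^ (t / L) • ω = ω₀ := by
  have hmod : t % L = i := by
    have hval := congrArg (fun s => ZMod.val s.2) h
    simp only [sheetAt, ZMod.val_natCast] at hval
    rwa [Nat.mod_eq_of_lt hi] at hval
  have ht : t = i + t / L * L := by rw [← hmod, mul_comm, Nat.mod_add_div]
  rw [ht, sheetAt_add_mul_period] at h
  exact ⟨ht, by simpa [sheetAt] using congrArg Prod.fst h⟩

theorem pathEdges_segment [DecidableEq α] [DecidableEq Ω] (s t : ℕ) (ω : Ω) :
    pathEdges (segment y s t) (prefixProd y s • ω) =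
      (Finset.range t).image fun j => relatorEdge y (s + j) ω := by
  induction t with
  | zero => simp [pathEdges]
  | succ t ih =>
    rw [segment_succ, pathEdges, ih, ← mul_smul, mk_segment_mul_prefixProd, Finset.range_add_one,
      Finset.image_insert]
    rfl

variable (y) [DecidableEq Ω]

/-- The sheets of the relator discs attached at the points of `A`. -/
def sheets (A : Finset Ω) : Finset (Ω × ZMod L) :=
  (A ×ˢ Finset.range L).image fun q => sheetAt y q.2 q.1

variable {y}

theorem mem_sheets {A : Finset Ω} {s : Ω × ZMod L} :
    s ∈ sheets y A ↔ ∃ ω ∈ A, ∃ i < L, sheetAt y i ω = s := by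
  simp [sheets, and_assoc]

variable (y) in
/-- The edges of the relator discs attached at the points of `A`. -/
def relatorEdges [DecidableEq α] (A : Finset Ω) : Finset (Ω × α) := (sheets y A).image (sheetEdge y)

variable (y) in
theorem card_relatorEdges_le [DecidableEq α] (A : Finset Ω) :
    (relatorEdges y A).card ≤ L * A.card := by
  refine Finset.card_image_le.trans (Finset.card_image_le.trans ?_)
  rw [Finset.card_product, Finset.card_range, mul_comm]

variable (y) in
theorem relatorEdges_mono [DecidableEq α] {A A' : Finset Ω} (h : A' ⊆ A) :
    relatorEdges y A' ⊆ relatorEdges y A :=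
  Finset.image_subset_image (Finset.image_subset_image (Finset.product_subset_product_left h))

namespace IsRelatorInvariant

variable [NeZero L] {n : ℕ} {A : Finset Ω} (hA : IsRelatorInvariant y n A)
include hA

theorem sheetAt_mem {ω : Ω} (hω : ω ∈ A) (t : ℕ) : sheetAt y t ω ∈ sheets y A := by
  refine mem_sheets.2 ⟨_, hA.pow_smul_mem hω (t / L), t % L, Nat.mod_lt _ (NeZero.pos L), ?_⟩
  rw [← sheetAt_add_mul_period, mul_comm, Nat.mod_add_div]

theorem nextSheet_mem {s : Ω × ZMod L} (hs : s ∈ sheets y A) : nextSheet y s ∈ sheets y A := by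
  obtain ⟨ω, hω, i, -, rfl⟩ := mem_sheets.1 hs
  rw [← sheetAt_succ]
  exact hA.sheetAt_mem hω _

variable [DecidableEq α]

theorem relatorEdge_mem {ω : Ω} (hω : ω ∈ A) (t : ℕ) : relatorEdge y t ω ∈ relatorEdges y A :=
  Finset.mem_image_of_mem _ (hA.sheetAt_mem hω t)

theorem pathEdges_segment_subset {ω : Ω} (hω : ω ∈ A) (s t : ℕ) :
    pathEdges (segment y s t) (prefixProd y s • ω) ⊆ relatorEdges y A := by
  rw [pathEdges_segment]
  exact Finset.image_subset_iff.2 fun j _ => hA.relatorEdge_mem hω _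

theorem pathEdges_segment_zero_subset {ω : Ω} (hω : ω ∈ A) (t : ℕ) :
    pathEdges (segment y 0 t) ω ⊆ relatorEdges y A := by
  simpa using hA.pathEdges_segment_subset hω 0 t

theorem ends_mem {e : Ω × α} (he : e ∈ relatorEdges y A) :
    e.1 ∈ (sheets y A).image Prod.fst ∧
      FreeGroup.of e.2 • e.1 ∈ (sheets y A).image Prod.fst := by
  obtain ⟨s, hs, rfl⟩ := Finset.mem_image.1 he
  rw [← targetSheet_fst, ← sourceSheet_fst]
  refine ⟨Finset.mem_image_of_mem _ ?_, Finset.mem_image_of_mem _ ?_⟩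
  · unfold sourceSheet
    split_ifs
    exacts [hs, hA.nextSheet_mem hs]
  · unfold targetSheet
    split_ifs
    exacts [hA.nextSheet_mem hs, hs]

end IsRelatorInvariant

end RelatorSheets

section RelatorCycles

variable {α : Type u} {Ω : Type*} [MulAction (FreeGroup α) Ω] {L : ℕ} (y : ZMod L → α × Bool)
  (K : Type*) [Ring K]

theorem chain_conj {g h : FreeGroup α} {ω : Ω} (hω : h • ω = ω) :
    chain K (g * h * g⁻¹) (g • ω) = chain K h ω := by
  simp [chain_mul, chain_inv, hω]

theorem chain_pow {g : FreeGroup α} {ω : Ω} (hω : g • ω = ω) (k : ℕ) :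
    chain K (g ^ k) ω = (k : K) • chain K g ω := by
  induction k with
  | zero => simp [chain_one]
  | succ k ih => rw [pow_succ, chain_mul, hω, ih, Nat.cast_succ, add_smul, one_smul]

/-- The 1-chain bounding the relator disc attached at `ω`, when `rⁿ` fixes `ω`. -/
noncomputable def relatorCycle (n : ℕ) (ω : Ω) : (Ω × α) →₀ K := chain K (prefixProd y L ^ n) ω

variable {y}

theorem relatorCycle_smul {n : ℕ} {ω : Ω} (h : prefixProd y L ^ n • ω = ω) :
    relatorCycle y K n (prefixProd y L • ω) = relatorCycle y K n ω := by
  have hconj := chain_conj K (g := prefixProd y L) h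
  rwa [← pow_succ', pow_succ, mul_inv_cancel_right] at hconj

theorem relatorCycle_pow_smul {n : ℕ} {ω : Ω} (h : prefixProd y L ^ n • ω = ω) (k : ℕ) :
    relatorCycle y K n (prefixProd y L ^ k • ω) = relatorCycle y K n ω := by
  induction k with
  | zero => simp
  | succ k ih =>
    rw [pow_succ', mul_smul, relatorCycle_smul, ih]
    rw [← mul_smul, ← pow_add, add_comm, pow_add, mul_smul, h]

theorem relatorCycle_eq_zero {n : ℕ} {ω : Ω} (h : prefixProd y L • ω = ω) (hn : (n : K) = 0) :
    relatorCycle y K n ω = 0 := by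
  rw [relatorCycle, chain_pow K h, hn, zero_smul]

theorem IsRelatorInvariant.chain_pow_mem_supported [NeZero L] [DecidableEq α] [DecidableEq Ω]
    {n : ℕ} {A : Finset Ω} (hA : IsRelatorInvariant y n A) {ω : Ω} (hω : ω ∈ A) (k : ℕ) :
    chain K (prefixProd y L ^ k) ω ∈ Finsupp.supported K K (relatorEdges y A : Set (Ω × α)) := by
  rw [← prefixProd_mul_period]
  exact Finsupp.supported_mono (hA.pathEdges_segment_zero_subset hω (k * L))
    (pathChain_mem_supported K (segment y 0 (k * L)) ω)

end RelatorCycles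

section FreeFaceCounting

variable {α : Type u} {Ω : Type*} [MulAction (FreeGroup α) Ω] {L : ℕ} (y : ZMod L → α × Bool)

/-- Modulo every prime divisor of `n`, the cycles supported in `E` are spanned by the boundaries of
the relator discs attached at `A` and by the chains of the based words in `U`. -/
def CyclesSpannedBy (n : ℕ) (A : Finset Ω) (E : Finset (Ω × α))
    (U : Finset (List (α × Bool) × Ω)) : Prop :=
  ∀ (p : ℕ) [Fact p.Prime], p ∣ n →
    ∀ c ∈ Finsupp.supported (ZMod p) (ZMod p) (E : Set (Ω × α)), boundary (ZMod p) c = 0 →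
      c ∈ Submodule.span (ZMod p) (relatorCycle y (ZMod p) n '' (A : Set Ω) ∪
        (fun q => pathChain (ZMod p) q.1 q.2) '' (U : Set (List (α × Bool) × Ω)))

variable {y}

theorem CyclesSpannedBy.mono {n : ℕ} {A : Finset Ω} {E E' : Finset (Ω × α)}
    {U : Finset (List (α × Bool) × Ω)} (h : CyclesSpannedBy y n A E U) (hE : E' ⊆ E) :
    CyclesSpannedBy y n A E' U := fun p _ hp c hc =>
  h p hp c (Finsupp.supported_mono (Finset.coe_subset.2 hE) hc)

variable [DecidableEq Ω]

variable (y) in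
/-- The edge traversed by the `i`-th letter of the relator read from `ω₀` is traversed by no other
sheet of the discs attached at `A`: the disc at `ω₀` can be collapsed through it. -/
def IsFreeFace (A : Finset Ω) (i : ℕ) (ω₀ : Ω) : Prop :=
  ω₀ ∈ A ∧ ∀ s ∈ sheets y A, sheetEdge y s = relatorEdge y i ω₀ → s = sheetAt y i ω₀

instance [DecidableEq α] (A : Finset Ω) (i : ℕ) (ω₀ : Ω) : Decidable (IsFreeFace y A i ω₀) :=
  inferInstanceAs (Decidable (_ ∧ _))

namespace IsRelatorInvariant

variable {n : ℕ} {A : Finset Ω} (hA : IsRelatorInvariant y n A)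
include hA

theorem card_le_card_sheets [NeZero L] (i : ZMod L) :
    A.card ≤ ((sheets y A).filter (·.2 = i)).card := by
  refine Finset.card_le_card_of_injOn (sheetAt y i.val) (fun ω hω => ?_) fun a _ b _ h => ?_
  · exact Finset.mem_coe.2 (Finset.mem_filter.2 ⟨hA.sheetAt_mem hω _, by simp [sheetAt]⟩)
  · simpa [sheetAt] using congrArg Prod.fst h

variable [DecidableEq α]

-- A nonzero relator cycle is shared by at least two base points, `ω` and `r • ω`.
theorem two_mul_card_relatorCycles_le {K : Type*} [Ring K] [DecidableEq K] (hn : (n : K) = 0) :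
    2 * ((A.image (relatorCycle y K n)).erase 0).card ≤ A.card := by
  refine le_trans ?_ (Finset.card_filter_le A fun ω => relatorCycle y K n ω ≠ 0)
  refine Finset.mul_card_image_le_card_of_maps_to (f := relatorCycle y K n) (fun ω hω => ?_) _
    fun c hc => ?_
  · obtain ⟨hω, hne⟩ := Finset.mem_filter.1 hω
    exact Finset.mem_erase.2 ⟨hne, Finset.mem_image_of_mem _ hω⟩
  · obtain ⟨hc, hmem⟩ := Finset.mem_erase.1 hc
    obtain ⟨ω, hω, rfl⟩ := Finset.mem_image.1 hmem
    have hmove : prefixProd y L • ω ≠ ω := fun h => hc (relatorCycle_eq_zero K h hn)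
    have hsmul := relatorCycle_smul K (hA.pow_smul ω hω)
    rw [← Finset.card_pair hmove]
    refine Finset.card_le_card fun x hx => ?_
    rcases Finset.mem_insert.1 hx with rfl | hx
    · simp [hA.smul_mem ω hω, hsmul, hc]
    · simp [Finset.mem_singleton.1 hx, hω, hc]

end IsRelatorInvariant

variable [DecidableEq α]

theorem card_lone_sheets_le [NeZero L] (A : Finset Ω) (i : ZMod L) :
    ((sheets y A).filter fun s => s.2 = i ∧
        ∀ s' ∈ sheets y A, sheetEdge y s' = sheetEdge y s → s' = s).card ≤
      (A.filter (IsFreeFace y A i.val)).card := by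
  refine (Finset.card_le_card (t := (A.filter (IsFreeFace y A i.val)).image (sheetAt y i.val))
    fun s hs => ?_).trans Finset.card_image_le
  obtain ⟨hs, hi, hlone⟩ := Finset.mem_filter.1 hs
  obtain ⟨ω, hω, j, hj, rfl⟩ := mem_sheets.1 hs
  obtain rfl : j = i.val := by rw [← hi, sheetAt, ZMod.val_natCast, Nat.mod_eq_of_lt hj]
  exact Finset.mem_image.2 ⟨ω, Finset.mem_filter.2 ⟨hω, hω, hlone⟩, rfl⟩

theorem IsPrimitiveCyclicWord.exists_card_add_two_le [NeZero L] (hy : IsPrimitiveCyclicWord y)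
    {n : ℕ} (hn : 2 ≤ n) {A : Finset Ω} (hA : IsRelatorInvariant y n A) (hne : A.Nonempty)
    {E : Finset (Ω × α)} {U : Finset (List (α × Bool) × Ω)} (hspan : CyclesSpannedBy y n A E U)
    (hE : relatorEdges y A ⊆ E) :
    ∃ i < L, A.card + 2 ≤ 2 * U.card + 2 * (A.filter (IsFreeFace y A i)).card := by
  obtain ⟨p, hp, hpn⟩ := Nat.exists_prime_and_dvd (show n ≠ 1 by omega)
  have : Fact p.Prime := ⟨hp⟩
  obtain ⟨i, hi⟩ := hy.exists_card_add_card_le (Ω := Ω)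
  have hcount := hi (sheets y A) fun s hs => hA.nextSheet_mem hs
  set R := (A.image (relatorCycle y (ZMod p) n)).erase 0 with hR
  set P := U.image fun q => pathChain (ZMod p) q.1 q.2 with hP
  have hV : ((sheets y A).image Prod.fst).Nonempty :=
    let ⟨_, hω⟩ := hne
    ⟨_, Finset.mem_image_of_mem _ (hA.sheetAt_mem hω 0)⟩
  have hrank : (relatorEdges y A).card + 1 ≤ ((sheets y A).image Prod.fst).card + (R ∪ P).card := by
    refine card_add_one_le_of_cycles_le_span (ZMod p) hV (fun e he => hA.ends_mem he)
      (R ∪ P) fun c hc hb => ?_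
    have hc := (hspan.mono hE) p hpn c hc hb
    rw [← Submodule.span_sdiff_singleton_zero] at hc
    refine Submodule.span_mono ?_ hc
    rintro x ⟨hx, hx0⟩
    rw [Finset.coe_union, hR, hP, Finset.coe_erase, Finset.coe_image, Finset.coe_image]
    exact hx.imp (fun h => ⟨h, hx0⟩) id
  have hunion : (R ∪ P).card ≤ R.card + U.card :=
    (Finset.card_union_le _ _).trans (Nat.add_le_add_left Finset.card_image_le _)
  have hcycles : 2 * R.card ≤ A.card :=
    hA.two_mul_card_relatorCycles_le ((ZMod.natCast_eq_zero_iff n p).2 hpn)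
  have hsheets := hA.card_le_card_sheets i
  have hlone := card_lone_sheets_le (y := y) A i
  unfold relatorEdges at hrank
  exact ⟨i.val, i.val_lt, by omega⟩

end FreeFaceCounting

section Collapse

section Detour

variable {α : Type u} {L : ℕ} (y : ZMod L → α × Bool)

/-- The word read along `d` turns of the cyclic word `y`, starting just after its `i`-th letter and
omitting that letter at the end. -/
def detour (d i : ℕ) : List (α × Bool) := segment y (i + 1) (d * L - 1)

variable {y}

theorem mk_detour_mul_letter {d : ℕ} (i : ℕ) (hd : 0 < d * L) :
    FreeGroup.mk (detour y d i) * letter (y i) =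
      prefixProd y i * prefixProd y L ^ d * (prefixProd y i)⁻¹ := by
  rw [eq_mul_inv_iff_mul_eq, mul_assoc, ← prefixProd_succ, detour, mk_segment_mul_prefixProd,
    ← prefixProd_add_mul_period]
  congr 1
  omega

end Detour

variable {α : Type u} {Ω : Type*} [MulAction (FreeGroup α) Ω] {L : ℕ} {y : ZMod L → α × Bool}

open Classical in
variable (y) in
/-- What is left of `A` after removing the orbit of `ω₀` under the element represented by `y`. -/
noncomputable def removeOrbit (A : Finset Ω) (ω₀ : Ω) : Finset Ω :=
  A.filter fun ω => ∀ k : ℕ, ω ≠ prefixProd y L ^ k • ω₀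

theorem mem_removeOrbit {A : Finset Ω} {ω₀ ω : Ω} :
    ω ∈ removeOrbit y A ω₀ ↔ ω ∈ A ∧ ∀ k : ℕ, ω ≠ prefixProd y L ^ k • ω₀ := by
  classical exact Finset.mem_filter

variable (y) in
theorem removeOrbit_subset (A : Finset Ω) (ω₀ : Ω) : removeOrbit y A ω₀ ⊆ A :=
  fun _ h => (mem_removeOrbit.1 h).1

theorem card_removeOrbit_lt {A : Finset Ω} {ω₀ : Ω} (h : ω₀ ∈ A) :
    (removeOrbit y A ω₀).card < A.card :=
  Finset.card_lt_card ((Finset.ssubset_iff_of_subset (removeOrbit_subset y A ω₀)).2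
    ⟨ω₀, h, fun h' => (mem_removeOrbit.1 h').2 0 (by simp)⟩)

theorem IsRelatorInvariant.removeOrbit {n : ℕ} (hn : 0 < n) {A : Finset Ω}
    (hA : IsRelatorInvariant y n A) (ω₀ : Ω) :
    IsRelatorInvariant y n (removeOrbit y A ω₀) where
  smul_mem ω hω := by
    rw [mem_removeOrbit] at hω ⊢
    refine ⟨hA.smul_mem ω hω.1, fun k hk => hω.2 (n - 1 + k) ?_⟩
    rw [pow_add, mul_smul, ← hk, ← mul_smul, ← pow_succ, Nat.sub_add_cancel hn, hA.pow_smul ω hω.1]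
  pow_smul ω hω := hA.pow_smul ω (mem_removeOrbit.1 hω).1

theorem IsRelatorInvariant.relatorCycle_eq_of_notMem_removeOrbit (K : Type*) [Ring K] {n : ℕ}
    {A : Finset Ω} (hA : IsRelatorInvariant y n A) {ω₀ ω : Ω} (hω₀ : ω₀ ∈ A) (hω : ω ∈ A)
    (hrem : ω ∉ OneRelator.removeOrbit y A ω₀) :
    relatorCycle y K n ω = relatorCycle y K n ω₀ := by
  rw [mem_removeOrbit] at hrem
  push Not at hrem
  obtain ⟨k, rfl⟩ := hrem hω
  exact relatorCycle_pow_smul K (hA.pow_smul _ hω₀) k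

theorem apply_eq_zero_of_mem_span {K X : Type*} [Ring K] {S : Set (X →₀ K)} {x : X}
    (hS : ∀ s ∈ S, s x = 0) {c : X →₀ K} (hc : c ∈ Submodule.span K S) : c x = 0 := by
  have hker : S ⊆ LinearMap.ker (Finsupp.lapply x : (X →₀ K) →ₗ[K] K) := fun s hs => hS s hs
  exact Submodule.span_le.2 hker hc

namespace IsFreeFace

variable [DecidableEq α] [DecidableEq Ω] {n : ℕ} {A : Finset Ω} {i : ℕ} {ω₀ : Ω}

theorem notMem_relatorEdges_removeOrbit (hi : i < L) (h : IsFreeFace y A i ω₀) :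
    relatorEdge y i ω₀ ∉ relatorEdges y (removeOrbit y A ω₀) := by
  intro he
  obtain ⟨s, hs, he⟩ := Finset.mem_image.1 he
  obtain ⟨ω, hω, j, hj, rfl⟩ := mem_sheets.1 hs
  have hsheet := h.2 _ (mem_sheets.2 ⟨ω, removeOrbit_subset y A ω₀ hω, j, hj, rfl⟩) he
  obtain ⟨-, hω₀⟩ := eq_of_sheetAt_eq hi hsheet
  rw [Nat.div_eq_of_lt hj] at hω₀
  exact (mem_removeOrbit.1 hω).2 0 (by simpa using hω₀)

variable [NeZero L]

theorem pathEdges_detour_subset (hA : IsRelatorInvariant y n A) (hi : i < L)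
    (h : IsFreeFace y A i ω₀) {d : ℕ} (hd : ∀ k, 0 < k → k < d → prefixProd y L ^ k • ω₀ ≠ ω₀) :
    pathEdges (detour y d i) (prefixProd y (i + 1) • ω₀) ⊆
      (relatorEdges y A).erase (relatorEdge y i ω₀) := by
  rw [detour, pathEdges_segment]
  refine Finset.image_subset_iff.2 fun j hj => ?_
  refine Finset.mem_erase.2 ⟨fun he => ?_, hA.relatorEdge_mem h.1 _⟩
  obtain ⟨ht, hfix⟩ := eq_of_sheetAt_eq hi (h.2 _ (hA.sheetAt_mem h.1 _) he)
  set k := (i + 1 + j) / L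
  have hk : 0 < k := Nat.pos_of_ne_zero fun hk => by rw [hk] at ht; omega
  have hkd : d ≤ k := not_lt.1 fun hkd => hd k hk hkd hfix
  have hle : d * L ≤ k * L := Nat.mul_le_mul_right _ hkd
  rw [Finset.mem_range] at hj
  omega

omit [DecidableEq α] in
-- Up to conjugation, the path crosses the free face once and then follows the detour.
theorem chain_pow_apply_ne_zero (K : Type*) [Ring K] [Nontrivial K]
    (hA : IsRelatorInvariant y n A) (hi : i < L) (h : IsFreeFace y A i ω₀) {d : ℕ} (hd : 0 < d)
    (hfix : prefixProd y L ^ d • ω₀ = ω₀)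
    (hmin : ∀ k, 0 < k → k < d → prefixProd y L ^ k • ω₀ ≠ ω₀) :
    chain K (prefixProd y L ^ d) ω₀ (relatorEdge y i ω₀) ≠ 0 := by
  classical
  have havoid : relatorEdge y i ω₀ ∉
      pathEdges (detour y d i) (letter (y i) • prefixProd y i • ω₀) := fun he => by
    rw [← mul_smul, ← prefixProd_succ] at he
    exact Finset.notMem_erase _ _ (h.pathEdges_detour_subset hA hi hmin he)
  rw [← chain_conj K hfix (g := prefixProd y i),
    ← mk_detour_mul_letter i (Nat.mul_pos hd (NeZero.pos L)), chain_mul, chain_mk, chain_letter,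
    Finsupp.add_apply, pathChain_apply_eq_zero K havoid, zero_add,
    show edgeOf (y i) (prefixProd y i • ω₀) = relatorEdge y i ω₀ from rfl, Finsupp.single_eq_same]
  rcases (y i).2 with _ | _ <;> simp [letterSign]

omit [DecidableEq α] in
theorem relatorCycle_apply_eq_zero (K : Type*) [Ring K] (hn : 0 < n)
    (hA : IsRelatorInvariant y n A) (hi : i < L) (h : IsFreeFace y A i ω₀) {ω : Ω}
    (hω : ω ∈ removeOrbit y A ω₀) : relatorCycle y K n ω (relatorEdge y i ω₀) = 0 := by
  classical
  have hmem := (hA.removeOrbit hn ω₀).chain_pow_mem_supported K hω n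
  exact Finsupp.notMem_support_iff.1 fun he => h.notMem_relatorEdges_removeOrbit hi (hmem he)

variable {E : Finset (Ω × α)} {U : Finset (List (α × Bool) × Ω)}

-- If the period were `n / q` with a prime `p ∣ q`, the cycle around one period would cross the free
-- face with coefficient `±1`, whereas modulo `p` all the cycles spanning it vanish there.
theorem pow_smul_ne (hn : 0 < n) (hA : IsRelatorInvariant y n A) (hi : i < L)
    (h : IsFreeFace y A i ω₀) (hspan : CyclesSpannedBy y n A E U) (hE : relatorEdges y A ⊆ E)
    (hU : ∀ q ∈ U, relatorEdge y i ω₀ ∉ pathEdges q.1 q.2) :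
    ∀ k, 0 < k → k < n → prefixProd y L ^ k • ω₀ ≠ ω₀ := by
  obtain ⟨d, q, hq, hd, hfix, hmin⟩ := hA.exists_period hn h.1
  suffices q = 1 by rwa [hq, this, mul_one]
  by_contra hq1
  obtain ⟨p, hp, hpq⟩ := Nat.exists_prime_and_dvd hq1
  have : Fact p.Prime := ⟨hp⟩
  have hcycle : relatorCycle y (ZMod p) n ω₀ = 0 := by
    rw [relatorCycle, hq, pow_mul, chain_pow _ hfix, (ZMod.natCast_eq_zero_iff q p).2 hpq,
      zero_smul]
  refine h.chain_pow_apply_ne_zero (ZMod p) hA hi hd hfix hmin ?_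
  refine apply_eq_zero_of_mem_span ?_
    ((hspan.mono hE) p (hpq.trans ⟨d, by rw [hq, mul_comm]⟩) _
      (hA.chain_pow_mem_supported (ZMod p) h.1 d) (by rw [boundary_chain, hfix, sub_self]))
  rintro _ (⟨ω, hω, rfl⟩ | ⟨u, hu, rfl⟩)
  · by_cases hrem : ω ∈ removeOrbit y A ω₀
    · exact h.relatorCycle_apply_eq_zero _ hn hA hi hrem
    · rw [hA.relatorCycle_eq_of_notMem_removeOrbit _ h.1 hω hrem, hcycle, Finsupp.zero_apply]
  · exact pathChain_apply_eq_zero _ (hU u hu)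

theorem cyclesSpannedBy_removeOrbit (hn : 0 < n) (hA : IsRelatorInvariant y n A) (hi : i < L)
    (h : IsFreeFace y A i ω₀) (hspan : CyclesSpannedBy y n A E U) (hE : relatorEdges y A ⊆ E)
    (hU : ∀ q ∈ U, relatorEdge y i ω₀ ∉ pathEdges q.1 q.2) :
    CyclesSpannedBy y n (removeOrbit y A ω₀) (E.erase (relatorEdge y i ω₀)) U := by
  intro p _ hpn c hc hb
  have hce : c (relatorEdge y i ω₀) = 0 :=
    Finsupp.notMem_support_iff.1 fun he => Finset.notMem_erase _ _ (Finset.mem_coe.1 (hc he))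
  have hmem := (hspan.mono (Finset.erase_subset _ _)) p hpn c hc hb
  set S := relatorCycle y (ZMod p) n '' (removeOrbit y A ω₀ : Set Ω) ∪
    (fun q => pathChain (ZMod p) q.1 q.2) '' (U : Set (List (α × Bool) × Ω))
  have hS : ∀ s ∈ S, s (relatorEdge y i ω₀) = 0 := by
    rintro _ (⟨ω, hω, rfl⟩ | ⟨u, hu, rfl⟩)
    · exact h.relatorCycle_apply_eq_zero _ hn hA hi hω
    · exact pathChain_apply_eq_zero _ (hU u hu)
  have hinsert : c ∈ Submodule.span (ZMod p) (insert (relatorCycle y (ZMod p) n ω₀) S) := by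
    refine Submodule.span_mono ?_ hmem
    rintro _ (⟨ω, hω, rfl⟩ | hx)
    · by_cases hrem : ω ∈ removeOrbit y A ω₀
      · exact .inr (.inl ⟨ω, hrem, rfl⟩)
      · exact .inl (hA.relatorCycle_eq_of_notMem_removeOrbit _ h.1 hω hrem)
    · exact .inr (.inr hx)
  obtain ⟨a, z, hz, rfl⟩ := Submodule.mem_span_insert.1 hinsert
  have ha : a = 0 := by
    rw [Finsupp.add_apply, apply_eq_zero_of_mem_span hS hz, add_zero, Finsupp.smul_apply,
      smul_eq_mul] at hce
    exact (mul_eq_zero.1 hce).resolve_right (h.chain_pow_apply_ne_zero (ZMod p) hA hi hn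
      (hA.pow_smul _ h.1) (h.pow_smul_ne hn hA hi hspan hE hU))
  rwa [ha, zero_smul, zero_add]

omit [NeZero L] in
theorem relatorEdges_removeOrbit_subset (hi : i < L) (h : IsFreeFace y A i ω₀)
    (hE : relatorEdges y A ⊆ E) :
    relatorEdges y (removeOrbit y A ω₀) ⊆ E.erase (relatorEdge y i ω₀) := fun _ he =>
  Finset.mem_erase.2 ⟨fun heq => h.notMem_relatorEdges_removeOrbit hi (heq ▸ he),
    hE (relatorEdges_mono y (removeOrbit_subset y A ω₀) he)⟩

end IsFreeFace

end Collapse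

/-! ### Certificates of triviality -/

section Certificates

variable {α : Type u} (ρ : FreeGroup α)

/-- `ρ` or its inverse. -/
def signedRelator (b : Bool) : FreeGroup α := if b then ρ else ρ⁻¹

/-- The product of the conjugates of `ρ` and its inverse prescribed by a list of signed words. -/
def conjugatesProd (c : List (List (α × Bool) × Bool)) : FreeGroup α :=
  (c.map fun q => FreeGroup.mk q.1 * signedRelator ρ q.2 * (FreeGroup.mk q.1)⁻¹).prod

/-- `g` is a product of at most `k` conjugates of `ρ` and its inverse by words of length at most
`ℓ`. -/
def HasCertificate (k ℓ : ℕ) (g : FreeGroup α) : Prop :=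
  ∃ c : List (List (α × Bool) × Bool),
    c.length ≤ k ∧ (∀ q ∈ c, q.1.length ≤ ℓ) ∧ g = conjugatesProd ρ c

theorem conjugatesProd_append (c c' : List (List (α × Bool) × Bool)) :
    conjugatesProd ρ (c ++ c') = conjugatesProd ρ c * conjugatesProd ρ c' := by
  simp [conjugatesProd]

theorem conjugatesProd_map_append (w : List (α × Bool)) (c : List (List (α × Bool) × Bool)) :
    conjugatesProd ρ (c.map fun q => (w ++ q.1, q.2)) =
      FreeGroup.mk w * conjugatesProd ρ c * (FreeGroup.mk w)⁻¹ := by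
  induction c with
  | nil => simp only [conjugatesProd, List.map_nil, List.prod_nil, mul_one, mul_inv_cancel]
  | cons q c ih =>
    rw [conjugatesProd] at ih ⊢
    rw [List.map_cons, List.map_cons, List.prod_cons, ih, conjugatesProd, conjugatesProd,
      List.map_cons, List.prod_cons, ← FreeGroup.mul_mk]
    group

namespace HasCertificate

variable {ρ} {k k' ℓ ℓ' : ℕ} {g g' : FreeGroup α}

theorem one (k ℓ : ℕ) : HasCertificate ρ k ℓ 1 := ⟨[], by simp, by simp, by simp [conjugatesProd]⟩

theorem conj_signedRelator (w : List (α × Bool)) (b : Bool) (hw : w.length ≤ ℓ) :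
    HasCertificate ρ 1 ℓ (FreeGroup.mk w * signedRelator ρ b * (FreeGroup.mk w)⁻¹) :=
  ⟨[(w, b)], by simp, by simpa using hw, by simp [conjugatesProd]⟩

theorem mono (h : HasCertificate ρ k ℓ g) (hk : k ≤ k') (hℓ : ℓ ≤ ℓ') :
    HasCertificate ρ k' ℓ' g := by
  obtain ⟨c, hlen, hwords, rfl⟩ := h
  exact ⟨c, hlen.trans hk, fun q hq => (hwords q hq).trans hℓ, rfl⟩

theorem mul (h : HasCertificate ρ k ℓ g) (h' : HasCertificate ρ k' ℓ g') :
    HasCertificate ρ (k + k') ℓ (g * g') := by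
  obtain ⟨c, hlen, hwords, rfl⟩ := h
  obtain ⟨c', hlen', hwords', rfl⟩ := h'
  refine ⟨c ++ c', ?_, fun q hq => ?_, (conjugatesProd_append ρ c c').symm⟩
  · rw [List.length_append]
    exact add_le_add hlen hlen'
  · exact (List.mem_append.1 hq).elim (hwords q) (hwords' q)

theorem conj (h : HasCertificate ρ k ℓ g) (w : List (α × Bool)) :
    HasCertificate ρ k (w.length + ℓ) (FreeGroup.mk w * g * (FreeGroup.mk w)⁻¹) := by
  obtain ⟨c, hlen, hwords, rfl⟩ := h
  refine ⟨c.map fun q => (w ++ q.1, q.2), by simpa using hlen, fun q hq => ?_,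
    (conjugatesProd_map_append ρ w c).symm⟩
  obtain ⟨q', hq', rfl⟩ := List.mem_map.1 hq
  simpa using hwords q' hq'

theorem mem_normalClosure (h : HasCertificate ρ k ℓ g) : g ∈ Subgroup.normalClosure {ρ} := by
  obtain ⟨c, -, -, rfl⟩ := h
  refine Subgroup.list_prod_mem _ fun x hx => ?_
  obtain ⟨q, -, rfl⟩ := List.mem_map.1 hx
  have hρ : ρ ∈ Subgroup.normalClosure {ρ} := Subgroup.subset_normalClosure rfl
  refine Subgroup.normalClosure_normal.conj_mem _ ?_ _
  unfold signedRelator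
  split_ifs
  exacts [hρ, Subgroup.inv_mem _ hρ]

end HasCertificate

end Certificates

section Reduction

variable {α : Type u} {Ω : Type*} [MulAction (FreeGroup α) Ω] {L : ℕ} [NeZero L]
  {y : ZMod L → α × Bool} [DecidableEq α] [DecidableEq Ω] {n : ℕ} {A : Finset Ω}

theorem IsFreeFace.card_le {E₀ : Finset (Ω × α)} (hA : IsRelatorInvariant y n A) {i : ℕ}
    (hE₀ : ∀ ω, IsFreeFace y A i ω → relatorEdge y i ω ∈ E₀) :
    (A.filter (IsFreeFace y A i)).card ≤ E₀.card := by
  refine Finset.card_le_card_of_injOn (relatorEdge y i)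
    (fun ω hω => hE₀ ω (Finset.mem_filter.1 hω).2) fun a ha b hb hab => ?_
  have hsheet := (Finset.mem_filter.1 hb).2.2 _
    (hA.sheetAt_mem (Finset.mem_filter.1 ha).1 i) hab
  simpa [sheetAt] using congrArg Prod.fst hsheet

-- Collapse relator discs through their free faces outside `E₀` as long as possible; once there are
-- none left, the counting inequality bounds the number of discs.
theorem IsPrimitiveCyclicWord.exists_card_le_two_mul (hy : IsPrimitiveCyclicWord y) (hn : 2 ≤ n)
    {E₀ : Finset (Ω × α)} {U : Finset (List (α × Bool) × Ω)} (hcard : U.card ≤ 1)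
    (hU : ∀ q ∈ U, pathEdges q.1 q.2 ⊆ E₀) (hA : IsRelatorInvariant y n A)
    (hspan : CyclesSpannedBy y n A (relatorEdges y A ∪ E₀) U) :
    ∃ A', IsRelatorInvariant y n A' ∧ CyclesSpannedBy y n A' (relatorEdges y A' ∪ E₀) U ∧
      A'.card ≤ 2 * E₀.card := by
  induction hN : A.card using Nat.strong_induction_on generalizing A with
  | _ N ih =>
    by_cases hface : ∃ i < L, ∃ ω₀, IsFreeFace y A i ω₀ ∧ relatorEdge y i ω₀ ∉ E₀
    · obtain ⟨i, hi, ω₀, hfree, hout⟩ := hface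
      have hspan' := hfree.cyclesSpannedBy_removeOrbit (by omega) hA hi hspan
        Finset.subset_union_left fun q hq he => hout (hU q hq he)
      refine ih _ (hN ▸ card_removeOrbit_lt hfree.1) (hA.removeOrbit (by omega) ω₀)
        (hspan'.mono (Finset.union_subset ?_ fun e he => ?_)) rfl
      · exact hfree.relatorEdges_removeOrbit_subset hi Finset.subset_union_left
      · exact Finset.mem_erase.2 ⟨fun heq => hout (heq ▸ he), Finset.mem_union_right _ he⟩
    · push Not at hface
      refine ⟨A, hA, hspan, ?_⟩
      rcases A.eq_empty_or_nonempty with rfl | hne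
      · simp
      obtain ⟨i, hi, hcount⟩ :=
        hy.exists_card_add_two_le hn hA hne hspan Finset.subset_union_left
      have hfaces := IsFreeFace.card_le hA (hface i hi)
      omega

end Reduction

section Detours

variable {α : Type u} {L : ℕ} [NeZero L] {y : ZMod L → α × Bool} {n i : ℕ}

theorem hasCertificate_detour (hn : 0 < n) (hi : i < L) :
    HasCertificate (prefixProd y L ^ n) 1 (n * L + L)
      ((letter (y i))⁻¹ * (FreeGroup.mk (detour y n i))⁻¹) := by
  have hcert := HasCertificate.conj_signedRelator (ρ := prefixProd y L ^ n) (ℓ := n * L + L)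
    (segment y 0 i) false (by simp; omega)
  convert hcert using 1
  rw [← mul_inv_rev, mk_detour_mul_letter i (Nat.mul_pos hn (NeZero.pos L))]
  simp [signedRelator, prefixProd]

theorem hasCertificate_invRev_detour (hn : 0 < n) (hi : i < L) :
    HasCertificate (prefixProd y L ^ n) 1 (n * L + L)
      (letter (y i) * (FreeGroup.mk (FreeGroup.invRev (detour y n i)))⁻¹) := by
  have hcert := HasCertificate.conj_signedRelator (ρ := prefixProd y L ^ n) (ℓ := n * L + L)
    (FreeGroup.invRev (detour y n i) ++ segment y 0 i) true (by simp [detour]; omega)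
  convert hcert using 1
  have hdetour := mk_detour_mul_letter (y := y) i (Nat.mul_pos hn (NeZero.pos L))
  rw [← FreeGroup.mul_mk, mk_invRev, signedRelator, if_pos rfl, mul_inv_rev, ← mul_assoc]
  rw [← prefixProd, mul_assoc _ (prefixProd y i), mul_assoc _ _ (prefixProd y i)⁻¹, ← hdetour]
  group

end Detours

section Rewriting

variable {α : Type u} {Ω : Type*} [MulAction (FreeGroup α) Ω] [DecidableEq α] [DecidableEq Ω]

theorem pathEdges_invRev (w : List (α × Bool)) (ν : Ω) :
    pathEdges (FreeGroup.invRev w) (FreeGroup.mk w • ν) = pathEdges w ν := by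
  induction w with
  | nil => simp [pathEdges, FreeGroup.invRev]
  | cons x l ih =>
    have hcons : FreeGroup.invRev (x :: l) = FreeGroup.invRev l ++ [invLetter x] := by
      simp [FreeGroup.invRev, invLetter]
    have hstart : FreeGroup.mk (x :: l) • ν = letter x • FreeGroup.mk l • ν := by
      rw [mk_cons, mul_smul]
    have hback : FreeGroup.mk [invLetter x] • FreeGroup.mk (x :: l) • ν = FreeGroup.mk l • ν := by
      rw [hstart, show FreeGroup.mk [invLetter x] = (letter x)⁻¹ from letter_invLetter x,
        inv_smul_smul]
    rw [hcons, pathEdges_append, hback, ih, Finset.union_comm, hstart]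
    simp [pathEdges, ← FreeGroup.one_eq_mk, edgeOf_invLetter]

variable {L : ℕ} [NeZero L] {y : ZMod L → α × Bool} {n : ℕ} {A : Finset Ω} {i : ℕ} {ω₀ : Ω}
  {E : Finset (Ω × α)}

-- The free face is replaced by the detour around the rest of the relator disc.
theorem IsFreeFace.exists_rewrite_letter (hn : 0 < n) (hA : IsRelatorInvariant y n A) (hi : i < L)
    (h : IsFreeFace y A i ω₀) (hmin : ∀ k, 0 < k → k < n → prefixProd y L ^ k • ω₀ ≠ ω₀)
    (hE : relatorEdges y A ⊆ E) (x : α × Bool) (μ : Ω) (hx : edgeOf x μ ∈ E) :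
    ∃ s, pathEdges s μ ⊆ E.erase (relatorEdge y i ω₀) ∧ FreeGroup.mk s • μ = letter x • μ ∧
      s.length ≤ n * L ∧
      HasCertificate (prefixProd y L ^ n) 1 (n * L + L) (letter x * (FreeGroup.mk s)⁻¹) := by
  have hnL : 0 < n * L := Nat.mul_pos hn (NeZero.pos L)
  have havoid : pathEdges (detour y n i) (letter (y i) • prefixProd y i • ω₀) ⊆
      E.erase (relatorEdge y i ω₀) := by
    rw [← mul_smul, ← prefixProd_succ]
    exact (h.pathEdges_detour_subset hA hi hmin).trans (Finset.erase_subset_erase _ hE)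
  have hend : FreeGroup.mk (detour y n i) • letter (y i) • prefixProd y i • ω₀ =
      prefixProd y i • ω₀ := by
    rw [← mul_smul, mk_detour_mul_letter i hnL, mul_smul, inv_smul_smul, mul_smul,
      hA.pow_smul _ h.1]
  by_cases hface : edgeOf x μ = relatorEdge y i ω₀
  · rcases edgeOf_eq_edgeOf hface.symm with ⟨rfl, rfl⟩ | ⟨rfl, rfl⟩
    · refine ⟨FreeGroup.invRev (detour y n i), ?_, ?_, ?_, hasCertificate_invRev_detour hn hi⟩
      · change pathEdges _ (prefixProd y i • ω₀) ⊆ _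
        rwa [← hend, pathEdges_invRev]
      · change _ • prefixProd y i • ω₀ = letter (y i) • prefixProd y i • ω₀
        conv_lhs => rw [← hend]
        rw [mk_invRev, inv_smul_smul]
      · simp [detour]
    · refine ⟨detour y n i, havoid, ?_, by simp [detour], ?_⟩
      · exact hend.trans (by rw [letter_invLetter]; exact (inv_smul_smul _ _).symm)
      · rw [letter_invLetter]
        exact hasCertificate_detour hn hi
  · refine ⟨[x], ?_, rfl, hnL, ?_⟩
    · simpa [pathEdges, ← FreeGroup.one_eq_mk] using ⟨hface, hx⟩
    · rw [← letter, mul_inv_cancel]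
      exact .one _ _

theorem IsFreeFace.exists_rewrite (hn : 0 < n) (hA : IsRelatorInvariant y n A) (hi : i < L)
    (h : IsFreeFace y A i ω₀) (hmin : ∀ k, 0 < k → k < n → prefixProd y L ^ k • ω₀ ≠ ω₀)
    (hE : relatorEdges y A ⊆ E) (ν : Ω) (w : List (α × Bool)) (hw : pathEdges w ν ⊆ E) :
    ∃ w', pathEdges w' ν ⊆ E.erase (relatorEdge y i ω₀) ∧
      FreeGroup.mk w' • ν = FreeGroup.mk w • ν ∧ w'.length ≤ (n * L + L) * w.length ∧
      HasCertificate (prefixProd y L ^ n) w.length ((n * L + L) * (w.length + 1))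
        (FreeGroup.mk w * (FreeGroup.mk w')⁻¹) := by
  set D := n * L + L
  induction w with
  | nil => exact ⟨[], by simp [pathEdges], rfl, by simp, by rw [mul_inv_cancel]; exact .one _ _⟩
  | cons x l ih =>
    obtain ⟨w', hedges, hend, hlen, hcert⟩ := ih ((Finset.subset_insert _ _).trans hw)
    obtain ⟨s, hsedges, hsend, hslen, hscert⟩ := h.exists_rewrite_letter hn hA hi hmin hE x
      (FreeGroup.mk l • ν) (hw (Finset.mem_insert_self _ _))
    refine ⟨s ++ w', ?_, ?_, ?_, ?_⟩
    · rw [pathEdges_append, hend]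
      exact Finset.union_subset hsedges hedges
    · rw [← FreeGroup.mul_mk, mul_smul, hend, hsend, mk_cons, mul_smul]
    · rw [List.length_append, List.length_cons, mul_add, mul_one]
      omega
    · have hprod : FreeGroup.mk (x :: l) * (FreeGroup.mk (s ++ w'))⁻¹ =
          letter x * (FreeGroup.mk s)⁻¹ *
            (FreeGroup.mk s * (FreeGroup.mk l * (FreeGroup.mk w')⁻¹) * (FreeGroup.mk s)⁻¹) := by
        rw [mk_cons, ← FreeGroup.mul_mk]
        group
      rw [hprod, List.length_cons, add_comm l.length 1]
      refine (hscert.mono le_rfl ?_).mul ((hcert.conj s).mono le_rfl ?_)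
      · exact Nat.le_mul_of_pos_right _ (by omega)
      · rw [show 1 + l.length + 1 = l.length + 1 + 1 by omega, mul_add D (l.length + 1), mul_one]
        omega

end Rewriting

section WordCertificates

variable {α : Type u} {Ω : Type*} [MulAction (FreeGroup α) Ω] [DecidableEq α] [DecidableEq Ω]
  {L : ℕ} {y : ZMod L → α × Bool}

theorem CyclesSpannedBy.mk_eq_one {n : ℕ} (hn : 2 ≤ n) {E : Finset (Ω × α)}
    (hspan : CyclesSpannedBy y n ∅ E ∅) {w : List (α × Bool)} {ν : Ω} (hw : pathEdges w ν ⊆ E)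
    (hclosed : FreeGroup.mk w • ν = ν) : FreeGroup.mk w = 1 := by
  obtain ⟨p, hp, hpn⟩ := Nat.exists_prime_and_dvd (show n ≠ 1 by omega)
  have : Fact p.Prime := ⟨hp⟩
  refine mk_eq_one_of_smul_eq (ZMod p) (fun c hc hb => ?_) hw hclosed
  simpa using hspan p hpn c hc hb

theorem certificate_bound_succ {D k ℓ ℓ' : ℕ} (hD : 0 < D) (hℓ' : ℓ' ≤ D * ℓ) :
    k * (D ^ k * (ℓ' + 1)) + D * (ℓ + 1) ≤ (k + 1) * (D ^ (k + 1) * (ℓ + 1)) := by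
  have hpow : 1 ≤ D ^ k := Nat.one_le_pow _ _ hD
  have hstep : D ^ k * (ℓ' + 1) ≤ D ^ (k + 1) * (ℓ + 1) := by
    rw [pow_succ, mul_assoc]
    refine Nat.mul_le_mul_left _ ?_
    rw [mul_add, mul_one]
    omega
  have hlast : D * (ℓ + 1) ≤ D ^ (k + 1) * (ℓ + 1) :=
    Nat.mul_le_mul_right _ (by rw [pow_succ]; exact Nat.le_mul_of_pos_left _ hpow)
  rw [add_one_mul]
  exact add_le_add (Nat.mul_le_mul_left _ hstep) hlast

-- Each collapse pushes the loop off a free face, until it runs in a forest.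
theorem IsPrimitiveCyclicWord.hasCertificate_of_smul_eq [NeZero L] (hy : IsPrimitiveCyclicWord y)
    {n : ℕ} (hn : 2 ≤ n) {k : ℕ} {A : Finset Ω} (hk : A.card ≤ k) (hA : IsRelatorInvariant y n A)
    {E : Finset (Ω × α)} (hE : relatorEdges y A ⊆ E) (hspan : CyclesSpannedBy y n A E ∅) {ν : Ω}
    {w : List (α × Bool)} (hw : pathEdges w ν ⊆ E) (hclosed : FreeGroup.mk w • ν = ν) :
    HasCertificate (prefixProd y L ^ n) (k * ((n * L + L) ^ k * (w.length + 1)))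
      (k * ((n * L + L) ^ k * (w.length + 1))) (FreeGroup.mk w) := by
  induction k generalizing A E w with
  | zero =>
    obtain rfl : A = ∅ := by simpa using hk
    rw [hspan.mk_eq_one hn hw hclosed]
    exact .one _ _
  | succ k ih =>
    rcases A.eq_empty_or_nonempty with rfl | hne
    · rw [hspan.mk_eq_one hn hw hclosed]
      exact .one _ _
    obtain ⟨i, hi, hcount⟩ := hy.exists_card_add_two_le hn hA hne hspan hE
    obtain ⟨ω₀, hω₀⟩ : (A.filter (IsFreeFace y A i)).Nonempty := by
      rw [← Finset.card_pos]
      rw [Finset.card_empty] at hcount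
      omega
    have hfree := (Finset.mem_filter.1 hω₀).2
    have hn0 : 0 < n := by omega
    obtain ⟨w', hedges, hend, hlen, hcert⟩ := hfree.exists_rewrite hn0 hA hi
      (hfree.pow_smul_ne hn0 hA hi hspan hE (by simp)) hE ν w hw
    have hcert' := ih (by have := card_removeOrbit_lt (y := y) hfree.1; omega)
      (hA.removeOrbit hn0 ω₀) (hfree.relatorEdges_removeOrbit_subset hi hE)
      (hfree.cyclesSpannedBy_removeOrbit hn0 hA hi hspan hE (by simp)) hedges
      (hend.trans hclosed)
    have hD : 0 < n * L + L := Nat.add_pos_right _ (NeZero.pos L)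
    have hbound := certificate_bound_succ (k := k) hD hlen
    have hwlen : w.length ≤ (n * L + L) * (w.length + 1) :=
      (Nat.le_succ _).trans (Nat.le_mul_of_pos_left _ hD)
    rw [← inv_mul_cancel_right (FreeGroup.mk w) (FreeGroup.mk w')]
    exact ((hcert.mono le_rfl (by omega)).mul (hcert'.mono le_rfl (by omega))).mono (by omega)
      le_rfl

end WordCertificates

/-! ### Conjugators of linear length -/

section CycleGenerators

variable {α : Type u} {Ω : Type*} [MulAction (FreeGroup α) Ω] (K : Type*) [Ring K]

theorem chain_mem_span_of_mem_closure {b : Ω} {S : Set (FreeGroup α)} (hS : ∀ s ∈ S, s • b = b)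
    {h : FreeGroup α} (hh : h ∈ Subgroup.closure S) :
    chain K h b ∈ Submodule.span K ((chain K · b) '' S) := by
  have hfix : Subgroup.closure S ≤ MulAction.stabilizer (FreeGroup α) b :=
    (Subgroup.closure_le _).2 hS
  induction hh using Subgroup.closure_induction with
  | mem s hs => exact Submodule.subset_span (Set.mem_image_of_mem _ hs)
  | one => exact Submodule.zero_mem _
  | mul g h _ hh ihg ihh =>
    rw [chain_mul, show h • b = b from hfix hh]
    exact Submodule.add_mem _ ihg ihh
  | inv g hg ih =>
    rw [chain_inv, show g⁻¹ • b = b from inv_mem (hfix hg)]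
    exact Submodule.neg_mem _ ih

-- Closing every edge up through chosen paths from `b` sends a chain `c` to `c - Φ (∂ c)`.
theorem mem_span_of_boundary_eq_zero [MulAction.IsPretransitive (FreeGroup α) Ω] {b : Ω}
    {S : Set (FreeGroup α)} (hS : MulAction.stabilizer (FreeGroup α) b = Subgroup.closure S)
    {c : (Ω × α) →₀ K} (hc : boundary K c = 0) :
    c ∈ Submodule.span K ((chain K · b) '' S) := by
  choose p hp using MulAction.exists_smul_eq (FreeGroup α) b
  let Φ : (Ω →₀ K) →ₗ[K] ((Ω × α) →₀ K) := Finsupp.linearCombination K fun ν => chain K (p ν) b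
  have hstab {h : FreeGroup α} (hh : h • b = b) :
      chain K h b ∈ Submodule.span K ((chain K · b) '' S) :=
    chain_mem_span_of_mem_closure K
      (fun s hs => (hS.ge (Subgroup.subset_closure hs) : s ∈ MulAction.stabilizer _ b)) (hS.le hh)
  have hclose (c : (Ω × α) →₀ K) :
      c - Φ (boundary K c) ∈ Submodule.span K ((chain K · b) '' S) := by
    induction c using Finsupp.induction_linear with
    | zero => simp
    | add f g hf hg =>
      rw [map_add, map_add, add_sub_add_comm]
      exact Submodule.add_mem _ hf hg
    | single e a =>
      obtain ⟨ν, x⟩ := e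
      have hinv : (p (FreeGroup.of x • ν))⁻¹ • FreeGroup.of x • ν = b := by
        rw [inv_smul_eq_iff, hp]
      have hloop := hstab (h := (p (FreeGroup.of x • ν))⁻¹ * FreeGroup.of x * p ν)
        (by rw [mul_smul, mul_smul, hp, hinv])
      have hedge : chain K (FreeGroup.of x) ν = Finsupp.single (ν, x) 1 := by
        simpa [edgeOf, letterSign, letter_true] using chain_letter K (x, true) ν
      rw [chain_mul, chain_mul, chain_inv, hp, hinv, hedge] at hloop
      convert Submodule.smul_mem _ a hloop using 1
      simp only [boundary_single, Φ, map_sub, Finsupp.linearCombination_single, smul_add, smul_sub,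
        smul_neg, Finsupp.smul_single, smul_eq_mul, mul_one]
      abel
  simpa [hc] using hclose c

end CycleGenerators

section RelatorGenerators

variable {α : Type u}

/-- The conjugates `g⁻¹ρg` with `g ∈ C`, together with the elements represented by words in `W`.
They will generate the stabiliser of a base point. -/
def relatorGenerators (ρ : FreeGroup α) (C : Finset (FreeGroup α)) (W : Finset (List (α × Bool))) :
    Set (FreeGroup α) :=
  (fun g => g⁻¹ * ρ * g) '' C ∪ FreeGroup.mk '' W

theorem relatorGenerators_mono {ρ : FreeGroup α} {C C' : Finset (FreeGroup α)}
    {W W' : Finset (List (α × Bool))} (hC : C ⊆ C') (hW : W ⊆ W') :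
    relatorGenerators ρ C W ⊆ relatorGenerators ρ C' W' :=
  Set.union_subset_union (Set.image_mono hC) (Set.image_mono hW)

theorem exists_mem_closure_relatorGenerators {ρ g : FreeGroup α}
    (hg : g ∈ Subgroup.normalClosure {ρ}) :
    ∃ C, g ∈ Subgroup.closure (relatorGenerators ρ C ∅) := by
  classical
  induction hg using Subgroup.closure_induction with
  | mem g hg =>
    obtain ⟨_, rfl, hconj⟩ := Group.mem_conjugatesOfSet_iff.1 hg
    obtain ⟨c, rfl⟩ := isConj_iff.1 hconj
    exact ⟨{c⁻¹}, Subgroup.subset_closure (Or.inl ⟨c⁻¹, by simp, by simp⟩)⟩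
  | one => exact ⟨∅, Subgroup.one_mem _⟩
  | mul g h _ _ ihg ihh =>
    obtain ⟨C, hC⟩ := ihg
    obtain ⟨C', hC'⟩ := ihh
    refine ⟨C ∪ C', Subgroup.mul_mem _ ?_ ?_⟩
    · exact Subgroup.closure_mono (relatorGenerators_mono Finset.subset_union_left subset_rfl) hC
    · exact Subgroup.closure_mono (relatorGenerators_mono Finset.subset_union_right subset_rfl) hC'
  | inv g _ ih =>
    obtain ⟨C, hC⟩ := ih
    exact ⟨C, Subgroup.inv_mem _ hC⟩

variable {Ω : Type*} [MulAction (FreeGroup α) Ω] {L : ℕ} {y : ZMod L → α × Bool} {n : ℕ} {b : Ω}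
  {C : Finset (FreeGroup α)} {W : Finset (List (α × Bool))}

theorem isRelatorInvariant_image [DecidableEq Ω] (hn : 0 < n)
    (hfix : ∀ g ∈ C, prefixProd y L ^ n • g • b = g • b) :
    IsRelatorInvariant y n
      ((C ×ˢ Finset.range n).image fun q => prefixProd y L ^ q.2 • q.1 • b) := by
  constructor
  · intro ω hω
    obtain ⟨⟨g, k⟩, hgk, rfl⟩ := Finset.mem_image.1 hω
    obtain ⟨hg, hk⟩ := Finset.mem_product.1 hgk
    rw [← mul_smul, ← pow_succ']
    rcases (Nat.succ_le_of_lt (Finset.mem_range.1 hk)).lt_or_eq with hlt | rfl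
    · exact Finset.mem_image.2 ⟨(g, k + 1), Finset.mem_product.2 ⟨hg, Finset.mem_range.2 hlt⟩, rfl⟩
    · exact Finset.mem_image.2 ⟨(g, 0), Finset.mem_product.2 ⟨hg, Finset.mem_range.2 hn⟩,
        by simpa using (hfix g hg).symm⟩
  · intro ω hω
    obtain ⟨⟨g, k⟩, hgk, rfl⟩ := Finset.mem_image.1 hω
    rw [← mul_smul, ← pow_add, add_comm, pow_add, mul_smul, hfix g (Finset.mem_product.1 hgk).1]

theorem exists_cyclesSpannedBy [MulAction.IsPretransitive (FreeGroup α) Ω] (hn : 0 < n)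
    (hstab : MulAction.stabilizer (FreeGroup α) b =
      Subgroup.closure (relatorGenerators (prefixProd y L ^ n) C W)) :
    ∃ A, IsRelatorInvariant y n A ∧ ∀ E, CyclesSpannedBy y n A E (W ×ˢ {b}) := by
  classical
  have hfix : ∀ g ∈ C, prefixProd y L ^ n • g • b = g • b := fun g hg => by
    have hmem : g⁻¹ * prefixProd y L ^ n * g ∈ MulAction.stabilizer (FreeGroup α) b :=
      hstab.ge (Subgroup.subset_closure (Or.inl ⟨g, hg, rfl⟩))
    rwa [MulAction.mem_stabilizer_iff, mul_smul, mul_smul, inv_smul_eq_iff] at hmem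
  refine ⟨_, isRelatorInvariant_image hn hfix, fun E p _ _ c _ hc => ?_⟩
  refine Submodule.span_mono ?_ (mem_span_of_boundary_eq_zero (ZMod p) hstab hc)
  rintro _ ⟨_, ⟨g, hg, rfl⟩ | ⟨l, hl, rfl⟩, rfl⟩
  · refine Or.inl ⟨g • b, Finset.mem_coe.2 (Finset.mem_image.2 ⟨(g, 0), ?_, by simp⟩), ?_⟩
    · exact Finset.mem_product.2 ⟨hg, Finset.mem_range.2 hn⟩
    · simpa [relatorCycle] using (chain_conj (ZMod p) (g := g⁻¹) (hfix g hg)).symm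
  · exact Or.inr ⟨(l, b), by simpa using hl, rfl⟩

end RelatorGenerators

section Saturation

variable {α : Type u} {Ω : Type*} [MulAction (FreeGroup α) Ω]

/-- The set of vertices satisfying `P` is a union of connected components of the subgraph of the
action graph with edge set `E`, together with vertices off that subgraph. -/
def IsSaturated (E : Finset (Ω × α)) (P : Ω → Prop) : Prop :=
  ∀ e ∈ E, (P (FreeGroup.of e.2 • e.1) ↔ P e.1)

namespace IsSaturated

variable {E : Finset (Ω × α)} {P : Ω → Prop} (hP : IsSaturated E P)
include hP

theorem letter_smul_iff {x : α × Bool} {ν : Ω} (hx : edgeOf x ν ∈ E) : P (letter x • ν) ↔ P ν := by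
  have h := hP _ hx
  rcases x with ⟨a, _ | _⟩
  · simpa [edgeOf, letter_false, iff_comm] using h
  · simpa [edgeOf, letter_true] using h

theorem edgeOf_fst_iff {x : α × Bool} {ν : Ω} (hx : edgeOf x ν ∈ E) : P (edgeOf x ν).1 ↔ P ν := by
  rcases h : x.2 with _ | _
  · simpa [edgeOf, h] using hP.letter_smul_iff hx
  · simp [edgeOf, h]

variable [DecidableEq α] [DecidableEq Ω]

theorem mk_smul_iff {w : List (α × Bool)} {ν : Ω} (hw : pathEdges w ν ⊆ E) :
    P (FreeGroup.mk w • ν) ↔ P ν := by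
  induction w with
  | nil => rw [← FreeGroup.one_eq_mk, one_smul]
  | cons x l ih =>
    obtain ⟨hx, hl⟩ := Finset.insert_subset_iff.1 hw
    rw [mk_cons, mul_smul, hP.letter_smul_iff hx, ih hl]

theorem fst_iff_of_mem_pathEdges {w : List (α × Bool)} {ν : Ω} (hw : pathEdges w ν ⊆ E)
    {e : Ω × α} (he : e ∈ pathEdges w ν) : P e.1 ↔ P ν := by
  obtain ⟨l₁, x, l₂, rfl, rfl⟩ := exists_eq_append_of_mem_pathEdges he
  rw [pathEdges_append] at hw
  have hl₂ : pathEdges l₂ ν ⊆ E :=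
    (Finset.subset_insert _ _).trans (Finset.subset_union_right.trans hw)
  rw [hP.edgeOf_fst_iff (hw.trans' Finset.subset_union_right (Finset.mem_insert_self _ _)),
    hP.mk_smul_iff hl₂]

variable [DecidablePred P]

theorem filter_pathChain_of_pos (K : Type*) [Ring K] {w : List (α × Bool)} {ν : Ω}
    (hw : pathEdges w ν ⊆ E) (hν : P ν) :
    (pathChain K w ν).filter (fun e => P e.1) = pathChain K w ν := by
  refine Finsupp.filter_eq_self_iff _ _ |>.2 fun e he => ?_
  by_contra hPe
  exact he (pathChain_apply_eq_zero K fun hmem => hPe ((hP.fst_iff_of_mem_pathEdges hw hmem).2 hν))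

theorem filter_pathChain_of_neg (K : Type*) [Ring K] {w : List (α × Bool)} {ν : Ω}
    (hw : pathEdges w ν ⊆ E) (hν : ¬ P ν) : (pathChain K w ν).filter (fun e => P e.1) = 0 :=
  Finsupp.filter_eq_zero_iff _ _ |>.2 fun _ hPe => pathChain_apply_eq_zero K fun hmem =>
    hν ((hP.fst_iff_of_mem_pathEdges hw hmem).1 hPe)

variable {L : ℕ} [NeZero L] {y : ZMod L → α × Bool} {n : ℕ} {A : Finset Ω}

theorem isRelatorInvariant_filter (hA : IsRelatorInvariant y n A) (hE : relatorEdges y A ⊆ E) :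
    IsRelatorInvariant y n (A.filter P) where
  smul_mem ω hω := by
    obtain ⟨hωA, hPω⟩ := Finset.mem_filter.1 hω
    have hpath := hA.pathEdges_segment_zero_subset hωA L
    exact Finset.mem_filter.2 ⟨hA.smul_mem ω hωA, (hP.mk_smul_iff (hpath.trans hE)).2 hPω⟩
  pow_smul ω hω := hA.pow_smul ω (Finset.mem_filter.1 hω).1

theorem relatorEdges_filter_subset (hA : IsRelatorInvariant y n A) (hE : relatorEdges y A ⊆ E) :
    relatorEdges y (A.filter P) ⊆ E.filter fun e => P e.1 := by
  intro e he
  obtain ⟨s, hs, rfl⟩ := Finset.mem_image.1 he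
  obtain ⟨ω, hω, i, -, rfl⟩ := mem_sheets.1 hs
  obtain ⟨hωA, hPω⟩ := Finset.mem_filter.1 hω
  have hmem := hE (hA.relatorEdge_mem hωA i)
  have hpath := hA.pathEdges_segment_zero_subset hωA i
  exact Finset.mem_filter.2 ⟨hmem,
    (hP.edgeOf_fst_iff hmem).2 ((hP.mk_smul_iff (hpath.trans hE)).2 hPω)⟩

omit hP [DecidableEq α] [DecidableEq Ω] [DecidablePred P] [NeZero L] in
theorem relatorCycle_eq_pathChain (K : Type*) [Ring K] (ω : Ω) :
    relatorCycle y K n ω = pathChain K (segment y 0 (n * L)) ω := by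
  rw [relatorCycle, ← prefixProd_mul_period, prefixProd, chain_mk]

theorem filter_mem_span {K : Type*} [Ring K] {U : Finset (List (α × Bool) × Ω)}
    (hA : IsRelatorInvariant y n A) (hE : relatorEdges y A ⊆ E)
    (hU : ∀ q ∈ U, pathEdges q.1 q.2 ⊆ E) {c : (Ω × α) →₀ K}
    (hc : c ∈ Submodule.span K (relatorCycle y K n '' (A : Set Ω) ∪
      (fun q => pathChain K q.1 q.2) '' (U : Set (List (α × Bool) × Ω)))) :
    c.filter (fun e => P e.1) ∈ Submodule.span K (relatorCycle y K n '' (A.filter P : Set Ω) ∪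
      (fun q => pathChain K q.1 q.2) '' (U.filter (fun q => P q.2) :
        Set (List (α × Bool) × Ω))) := by
  induction hc using Submodule.span_induction with
  | mem c hc =>
    rcases hc with ⟨ω, hω, rfl⟩ | ⟨⟨l, ν⟩, hq, rfl⟩
    · have hpath := hA.pathEdges_segment_zero_subset hω (n * L)
      by_cases hPω : P ω
      · rw [relatorCycle_eq_pathChain, hP.filter_pathChain_of_pos K (hpath.trans hE) hPω,
          ← relatorCycle_eq_pathChain]
        exact Submodule.subset_span (Or.inl ⟨ω, by simpa using ⟨hω, hPω⟩, rfl⟩)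
      · rw [relatorCycle_eq_pathChain, hP.filter_pathChain_of_neg K (hpath.trans hE) hPω]
        exact Submodule.zero_mem _
    · by_cases hPν : P ν
      · rw [hP.filter_pathChain_of_pos K (hU _ hq) hPν]
        exact Submodule.subset_span (Or.inr ⟨(l, ν), by simpa using ⟨hq, hPν⟩, rfl⟩)
      · rw [hP.filter_pathChain_of_neg K (hU _ hq) hPν]
        exact Submodule.zero_mem _
  | zero => rw [Finsupp.filter_zero]; exact Submodule.zero_mem _
  | add c d _ _ hc hd => rw [Finsupp.filter_add]; exact Submodule.add_mem _ hc hd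
  | smul a c _ hc => rw [Finsupp.filter_smul]; exact Submodule.smul_mem _ a hc

theorem cyclesSpannedBy_filter {U : Finset (List (α × Bool) × Ω)} (hA : IsRelatorInvariant y n A)
    (hE : relatorEdges y A ⊆ E) (hU : ∀ q ∈ U, pathEdges q.1 q.2 ⊆ E)
    (hspan : CyclesSpannedBy y n A E U) :
    CyclesSpannedBy y n (A.filter P) (E.filter fun e => P e.1) (U.filter fun q => P q.2) := by
  intro p _ hp c hc hb
  have hself : c.filter (fun e => P e.1) = c := (Finsupp.filter_eq_self_iff _ _).2 fun e he =>
    (Finset.mem_filter.1 (hc (Finsupp.mem_support_iff.2 he))).2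
  rw [← hself]
  exact hP.filter_mem_span hA hE hU (hspan.mono (Finset.filter_subset _ _) p hp c hc hb)

end IsSaturated

end Saturation

section Reachability

variable {α : Type u} {Ω : Type*} [MulAction (FreeGroup α) Ω] [DecidableEq α] [DecidableEq Ω]
  {E : Finset (Ω × α)} {b : Ω}

/-- The vertex `ν` can be reached from `b` along edges in `E`. -/
def IsReachable (E : Finset (Ω × α)) (b ν : Ω) : Prop :=
  ∃ l, pathEdges l b ⊆ E ∧ FreeGroup.mk l • b = ν

theorem IsReachable.refl (E : Finset (Ω × α)) (b : Ω) : IsReachable E b b :=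
  ⟨[], Finset.empty_subset E, by rw [← FreeGroup.one_eq_mk, one_smul]⟩

theorem IsReachable.letter_smul {x : α × Bool} {ν : Ω} (h : IsReachable E b ν)
    (hx : edgeOf x ν ∈ E) : IsReachable E b (letter x • ν) := by
  obtain ⟨l, hl, rfl⟩ := h
  exact ⟨x :: l, Finset.insert_subset hx hl, by rw [mk_cons, mul_smul]⟩

theorem isSaturated_isReachable (E : Finset (Ω × α)) (b : Ω) : IsSaturated E (IsReachable E b) := by
  rintro ⟨ν, a⟩ he
  have hforth (h : IsReachable E b ν) : IsReachable E b (FreeGroup.of a • ν) := by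
    rw [← letter_true]
    exact h.letter_smul (by simpa [edgeOf] using he)
  refine ⟨fun h => ?_, hforth⟩
  have hback := h.letter_smul (x := (a, false)) (by simpa [edgeOf, letter_false] using he)
  rwa [letter_false, inv_smul_smul] at hback

theorem drop_smul_mem_endpoints {l : List (α × Bool)} (hl : pathEdges l b ⊆ E) {i : ℕ}
    (hi : i < l.length) :
    FreeGroup.mk (l.drop i) • b ∈
      E.image Prod.fst ∪ E.image fun e => FreeGroup.of e.2 • e.1 := by
  have hdrop := List.drop_eq_getElem_cons hi
  have hmem : edgeOf l[i] (FreeGroup.mk (l.drop (i + 1)) • b) ∈ E := by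
    rw [← List.take_append_drop i l, pathEdges_append] at hl
    refine hl (Finset.mem_union_right _ ?_)
    rw [hdrop]
    exact Finset.mem_insert_self _ _
  rw [hdrop, mk_cons, mul_smul]
  rcases hx : l[i] with ⟨a, _ | _⟩
  · refine Finset.mem_union_left _ (Finset.mem_image.2 ⟨_, hmem, ?_⟩)
    simp [hx, edgeOf]
  · refine Finset.mem_union_right _ (Finset.mem_image.2 ⟨_, hmem, ?_⟩)
    simp [hx, edgeOf, letter_true]

-- A path visiting a vertex twice can be shortened.
theorem exists_shorter {l : List (α × Bool)} (hl : pathEdges l b ⊆ E) {i j : ℕ}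
    (hij : i < j) (hj : j < l.length)
    (h : FreeGroup.mk (l.drop i) • b = FreeGroup.mk (l.drop j) • b) :
    ∃ l', pathEdges l' b ⊆ E ∧ FreeGroup.mk l' • b = FreeGroup.mk l • b ∧
      l'.length < l.length := by
  have hedges (k : ℕ) : pathEdges (l.take k) (FreeGroup.mk (l.drop k) • b) ⊆ E ∧
      pathEdges (l.drop k) b ⊆ E := by
    rw [← Finset.union_subset_iff, ← pathEdges_append, List.take_append_drop]
    exact hl
  refine ⟨l.take i ++ l.drop j, ?_, ?_, ?_⟩
  · rw [pathEdges_append, ← h]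
    exact Finset.union_subset (hedges i).1 (hedges j).2
  · rw [← FreeGroup.mul_mk, mul_smul, ← h, ← mul_smul, FreeGroup.mul_mk, List.take_append_drop]
  · rw [List.length_append, List.length_take, List.length_drop]
    omega

theorem IsReachable.exists_length_le {ν : Ω} (h : IsReachable E b ν) :
    ∃ l : List (α × Bool), FreeGroup.mk l • b = ν ∧ l.length ≤ 2 * E.card := by
  obtain ⟨l, ⟨hl, rfl⟩, hmin⟩ := (measure List.length).wf.has_min
    {l : List (α × Bool) | pathEdges l b ⊆ E ∧ FreeGroup.mk l • b = ν} h
  refine ⟨l, rfl, ?_⟩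
  have hne {i j : ℕ} (hij : i < j) (hj : j < l.length) :
      FreeGroup.mk (l.drop i) • b ≠ FreeGroup.mk (l.drop j) • b := fun heq => by
    obtain ⟨l', hl', hend, hlt⟩ := exists_shorter hl hij hj heq
    exact hmin l' ⟨hl', hend⟩ hlt
  have hinj : Set.InjOn (fun i : ℕ => FreeGroup.mk (l.drop i) • b) (Finset.range l.length) := by
    refine fun i hi j hj hij => ?_
    simp only [Finset.coe_range, Set.mem_Iio] at hi hj
    rcases lt_trichotomy i j with hlt | rfl | hlt
    · exact absurd hij (hne hlt hj)
    · rfl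
    · exact absurd hij.symm (hne hlt hi)
  have hcard := Finset.card_le_card_of_injOn _
    (fun i hi => drop_smul_mem_endpoints hl (Finset.mem_range.1 hi)) hinj
  have hends := Finset.card_union_le (E.image Prod.fst) (E.image fun e => FreeGroup.of e.2 • e.1)
  have hsrc : (E.image Prod.fst).card ≤ E.card := Finset.card_image_le
  have htgt : (E.image fun e : Ω × α => FreeGroup.of e.2 • e.1).card ≤ E.card :=
    Finset.card_image_le
  rw [Finset.card_range] at hcard
  omega

end Reachability

section PresentedConjugacy

variable {α : Type u} {ρ : FreeGroup α} {C : Finset (FreeGroup α)} {u v : List (α × Bool)}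

theorem commute_mk_of_mem_closure {h : FreeGroup α}
    (hh : h ∈ Subgroup.closure (relatorGenerators ρ C {u})) :
    Commute (PresentedGroup.mk {ρ} h) (PresentedGroup.mk {ρ} (FreeGroup.mk u)) := by
  induction hh using Subgroup.closure_induction with
  | mem h hh =>
    rcases hh with ⟨g, -, rfl⟩ | ⟨l, hl, rfl⟩
    · have hρ : PresentedGroup.mk {ρ} ρ = 1 :=
        PresentedGroup.mk_eq_one_iff.2 (Subgroup.subset_normalClosure rfl)
      simp [hρ]
    · rw [Finset.mem_singleton.1 hl]
  | one => simp
  | mul g h _ _ ihg ihh => rw [map_mul]; exact ihg.mul_left ihh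
  | inv g _ ih => rw [map_inv]; exact ih.inv_left

theorem exists_conj_mem_closure {c : FreeGroup α}
    (hc : PresentedGroup.mk {ρ} c * PresentedGroup.mk {ρ} (FreeGroup.mk u) *
      (PresentedGroup.mk {ρ} c)⁻¹ = PresentedGroup.mk {ρ} (FreeGroup.mk v)) :
    ∃ C, c⁻¹ * FreeGroup.mk v * c ∈ Subgroup.closure (relatorGenerators ρ C {u}) := by
  have hmem : c⁻¹ * FreeGroup.mk v * c * (FreeGroup.mk u)⁻¹ ∈ Subgroup.normalClosure {ρ} := by
    rw [← PresentedGroup.mk_eq_one_iff]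
    simp only [map_mul, map_inv, ← hc]
    group
  obtain ⟨C, hC⟩ := exists_mem_closure_relatorGenerators hmem
  refine ⟨C, ?_⟩
  rw [← inv_mul_cancel_right (c⁻¹ * FreeGroup.mk v * c) (FreeGroup.mk u)]
  refine Subgroup.mul_mem _ (Subgroup.closure_mono ?_ hC) (Subgroup.subset_closure (Or.inr ?_))
  · exact relatorGenerators_mono subset_rfl (Finset.empty_subset _)
  · exact ⟨u, by simp, rfl⟩

theorem conj_mk_eq_of_inv_mul_mem_closure {c g : FreeGroup α}
    (hc : PresentedGroup.mk {ρ} c * PresentedGroup.mk {ρ} (FreeGroup.mk u) *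
      (PresentedGroup.mk {ρ} c)⁻¹ = PresentedGroup.mk {ρ} (FreeGroup.mk v))
    (hg : c⁻¹ * g ∈ Subgroup.closure (relatorGenerators ρ C {u})) :
    PresentedGroup.mk {ρ} g * PresentedGroup.mk {ρ} (FreeGroup.mk u) *
      (PresentedGroup.mk {ρ} g)⁻¹ = PresentedGroup.mk {ρ} (FreeGroup.mk v) := by
  rw [← hc, ← mul_inv_cancel_left c g, map_mul, mul_inv_rev,
    mul_assoc _ _ (PresentedGroup.mk _ (FreeGroup.mk u)), (commute_mk_of_mem_closure hg).eq]
  group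

end PresentedConjugacy

section ShortConjugators

variable {α : Type u} {L : ℕ} {y : ZMod L → α × Bool} {n : ℕ}

/-- A bound on the size of a certificate that a word of length `ℓ` is trivial; `D` is the length
`n * L` of the relator plus `L`. -/
def certificateBound (D ℓ : ℕ) : ℕ := 2 * ℓ * (D ^ (2 * ℓ) * (ℓ + 1))

variable [NeZero L]

theorem IsPrimitiveCyclicWord.hasCertificate_of_mem_normalClosure (hy : IsPrimitiveCyclicWord y)
    (hn : 2 ≤ n) {w : List (α × Bool)}
    (hw : FreeGroup.mk w ∈ Subgroup.normalClosure {prefixProd y L ^ n}) :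
    HasCertificate (prefixProd y L ^ n) (certificateBound (n * L + L) w.length)
      (certificateBound (n * L + L) w.length) (FreeGroup.mk w) := by
  classical
  obtain ⟨C, hC⟩ := exists_mem_closure_relatorGenerators hw
  set H := Subgroup.closure (relatorGenerators (prefixProd y L ^ n) C ∅)
  let b : FreeGroup α ⧸ H := (1 : FreeGroup α)
  have hstab : MulAction.stabilizer (FreeGroup α) b = H := MulAction.stabilizer_quotient H
  obtain ⟨A, hA, hspan⟩ := exists_cyclesSpannedBy (by omega) hstab
  rw [Finset.empty_product] at hspan
  obtain ⟨A', hA', hspan', hcard⟩ := hy.exists_card_le_two_mul hn (E₀ := pathEdges w b)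
    (by simp) (by simp) hA (hspan _)
  exact hy.hasCertificate_of_smul_eq hn (hcard.trans (by grw [card_pathEdges_le])) hA'
    Finset.subset_union_left hspan' Finset.subset_union_right (hstab.ge hC)

-- On the part of the complex not reachable from `b`, the relator discs alone span all cycles.
theorem IsPrimitiveCyclicWord.mk_mem_normalClosure_of_not_isReachable {Ω : Type*}
    [MulAction (FreeGroup α) Ω] [DecidableEq α] [DecidableEq Ω] (hy : IsPrimitiveCyclicWord y)
    (hn : 2 ≤ n) {A : Finset Ω} (hA : IsRelatorInvariant y n A) {E : Finset (Ω × α)}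
    (hE : relatorEdges y A ⊆ E) {u v : List (α × Bool)} {b ν : Ω}
    (hspan : CyclesSpannedBy y n A E {(u, b)}) (hu : pathEdges u b ⊆ E) (hv : pathEdges v ν ⊆ E)
    (hclosed : FreeGroup.mk v • ν = ν) (hν : ¬ IsReachable E b ν) :
    FreeGroup.mk v ∈ Subgroup.normalClosure {prefixProd y L ^ n} := by
  classical
  have hP : IsSaturated E fun ω => ¬ IsReachable E b ω := fun e he =>
    not_congr (isSaturated_isReachable E b e he)
  have hspan' := hP.cyclesSpannedBy_filter hA hE (by simpa using hu) hspan
  rw [Finset.filter_singleton, if_neg (not_not.2 (IsReachable.refl E b))] at hspan'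
  refine (hy.hasCertificate_of_smul_eq hn le_rfl (hP.isRelatorInvariant_filter hA hE)
    (hP.relatorEdges_filter_subset hA hE) hspan' (fun e he => ?_) hclosed).mem_normalClosure
  exact Finset.mem_filter.2 ⟨hv he, (hP.fst_iff_of_mem_pathEdges hv he).2 hν⟩

-- Either the loops `u` and `v` lie in one component of the collapsed complex, and a path between
-- them conjugates, or each of them is trivial in the group.
theorem IsPrimitiveCyclicWord.exists_conjugator_length_le (hy : IsPrimitiveCyclicWord y)
    (hn : 2 ≤ n) (u v : List (α × Bool)) {c : FreeGroup α}
    (hc : PresentedGroup.mk {prefixProd y L ^ n} c *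
      PresentedGroup.mk {prefixProd y L ^ n} (FreeGroup.mk u) *
      (PresentedGroup.mk {prefixProd y L ^ n} c)⁻¹ =
        PresentedGroup.mk {prefixProd y L ^ n} (FreeGroup.mk v)) :
    ∃ l : List (α × Bool), l.length ≤ (4 * L + 2) * (u.length + v.length) ∧
      PresentedGroup.mk {prefixProd y L ^ n} (FreeGroup.mk l) *
        PresentedGroup.mk {prefixProd y L ^ n} (FreeGroup.mk u) *
        (PresentedGroup.mk {prefixProd y L ^ n} (FreeGroup.mk l))⁻¹ =
          PresentedGroup.mk {prefixProd y L ^ n} (FreeGroup.mk v) := by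
  classical
  obtain ⟨C, hC⟩ := exists_conj_mem_closure hc
  set H := Subgroup.closure (relatorGenerators (prefixProd y L ^ n) C {u})
  let b : FreeGroup α ⧸ H := (1 : FreeGroup α)
  have hstab : MulAction.stabilizer (FreeGroup α) b = H := MulAction.stabilizer_quotient H
  have hloop : FreeGroup.mk v • c • b = c • b := by
    rw [← inv_smul_eq_iff, ← mul_smul, ← mul_smul]
    exact hstab.ge hC
  obtain ⟨A, hA, hspan⟩ := exists_cyclesSpannedBy (by omega) hstab
  rw [Finset.singleton_product_singleton] at hspan
  set E₀ := pathEdges u b ∪ pathEdges v (c • b)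
  have hE₀ : E₀.card ≤ u.length + v.length :=
    (Finset.card_union_le _ _).trans (add_le_add (card_pathEdges_le _ _) (card_pathEdges_le _ _))
  obtain ⟨A', hA', hspan', hcard⟩ := hy.exists_card_le_two_mul hn (E₀ := E₀) (by simp)
    (by intro q hq; rw [Finset.mem_singleton.1 hq]; exact Finset.subset_union_left) hA (hspan _)
  by_cases hreach : IsReachable (relatorEdges y A' ∪ E₀) b (c • b)
  · obtain ⟨l, hl, hlen⟩ := hreach.exists_length_le
    refine ⟨l, hlen.trans ?_, ?_⟩
    · have hedges := (Finset.card_union_le (relatorEdges y A') E₀).trans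
        (add_le_add (card_relatorEdges_le y A') le_rfl)
      have hL : L * A'.card ≤ L * (2 * (u.length + v.length)) :=
        Nat.mul_le_mul_left _ (by omega)
      linarith
    · have hmem : c⁻¹ * FreeGroup.mk l ∈ H := by
        rw [← hstab, MulAction.mem_stabilizer_iff, mul_smul, hl, inv_smul_smul]
      exact conj_mk_eq_of_inv_mul_mem_closure hc hmem
  · have hv := hy.mk_mem_normalClosure_of_not_isReachable hn hA' Finset.subset_union_left hspan'
      (Finset.subset_union_left.trans Finset.subset_union_right)
      (Finset.subset_union_right.trans Finset.subset_union_right) hloop hreach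
    rw [← PresentedGroup.mk_eq_one_iff] at hv
    refine ⟨[], Nat.zero_le _, ?_⟩
    rw [← FreeGroup.one_eq_mk, map_one, one_mul, inv_one, mul_one, hv]
    rwa [hv, mul_inv_eq_one, mul_eq_left] at hc

end ShortConjugators

/-! ### The bounded search -/

section BoundedLists

variable {A : Type u}

/-- All lists of length at most `k` with entries in `Γ`. -/
def boundedLists (Γ : List A) : ℕ → List (List A)
  | 0 => [[]]
  | k + 1 => [] :: (boundedLists Γ k).flatMap fun w => Γ.map (· :: w)

theorem mem_boundedLists {Γ : List A} {k : ℕ} {l : List A} :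
    l ∈ boundedLists Γ k ↔ l.length ≤ k ∧ ∀ x ∈ l, x ∈ Γ := by
  induction k generalizing l with
  | zero =>
    rw [boundedLists, List.mem_singleton, Nat.le_zero, List.length_eq_zero_iff]
    exact ⟨fun h => ⟨h, by simp [h]⟩, And.left⟩
  | succ k ih => cases l <;> simp [boundedLists, ih, and_left_comm]

theorem primrec_boundedLists [Primcodable A] : Primrec₂ (boundedLists (A := A)) := by
  refine (Primrec.nat_rec (f := fun _ : List A => [[]])
    (g := fun Γ (q : ℕ × List (List A)) => [] :: q.2.flatMap fun w => Γ.map (· :: w))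
    (Primrec.const _) ?_).of_eq fun Γ k => ?_
  · refine Primrec.list_cons.comp (Primrec.const _)
      (Primrec.list_flatMap (Primrec.snd.comp Primrec.snd)
        (Primrec.list_map (Primrec.fst.comp Primrec.fst) ?_))
    exact Primrec.list_cons.comp Primrec.snd (Primrec.snd.comp Primrec.fst)
  · induction k with
    | zero => rfl
    | succ k ih => rw [boundedLists, ← ih]

/-- Each entry of a list, paired with both signs. -/
def withSigns (l : List A) : List (A × Bool) := l.flatMap fun a => [(a, true), (a, false)]

theorem mem_withSigns {l : List A} {q : A × Bool} : q ∈ withSigns l ↔ q.1 ∈ l := by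
  obtain ⟨a, _ | _⟩ := q <;> simp [withSigns]

theorem primrec_withSigns [Primcodable A] : Primrec (withSigns (A := A)) :=
  Primrec.list_flatMap Primrec.id <| Primrec.list_cons.comp
    (Primrec.pair Primrec.snd (Primrec.const true)) <| Primrec.list_cons.comp
      (Primrec.pair Primrec.snd (Primrec.const false)) (Primrec.const [])

end BoundedLists

section WordComputability

variable {α : Type u} [Primcodable α]

theorem primrec_invRev : Primrec (FreeGroup.invRev (α := α)) :=
  Primrec.list_reverse.comp <| Primrec.list_map Primrec.id <|
    Primrec.pair (Primrec.fst.comp Primrec.snd) (Primrec.not.comp (Primrec.snd.comp Primrec.snd))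

theorem primrec_reduce [DecidableEq α] : Primrec (FreeGroup.reduce (α := α)) := by
  refine (Primrec.list_foldr (f := id) (g := fun _ => [])
    (h := fun _ (q : (α × Bool) × List (α × Bool)) =>
      List.casesOn (motive := fun _ => List (α × Bool)) q.2 [q.1] fun hd tl =>
        if q.1.1 = hd.1 ∧ q.1.2 = !hd.2 then tl else q.1 :: hd :: tl)
    Primrec.id (Primrec.const _) ?_).of_eq fun l => ?_
  · refine Primrec.list_casesOn
      (h := fun (q : List (α × Bool) × (α × Bool) × List (α × Bool))
        (z : (α × Bool) × List (α × Bool)) =>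
        if q.2.1.1 = z.1.1 ∧ q.2.1.2 = !z.1.2 then z.2 else q.2.1 :: z.1 :: z.2)
      (Primrec.snd.comp Primrec.snd)
      (Primrec.list_cons.comp (Primrec.fst.comp Primrec.snd) (Primrec.const [])) ?_
    have hx := Primrec.fst.comp <| Primrec.snd.comp <|
      Primrec.fst (α := List (α × Bool) × (α × Bool) × List (α × Bool))
        (β := (α × Bool) × List (α × Bool))
    have hd := Primrec.fst.comp <|
      Primrec.snd (α := List (α × Bool) × (α × Bool) × List (α × Bool))
        (β := (α × Bool) × List (α × Bool))
    have htl := Primrec.snd.comp <|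
      Primrec.snd (α := List (α × Bool) × (α × Bool) × List (α × Bool))
        (β := (α × Bool) × List (α × Bool))
    refine Primrec.ite (PrimrecPred.and ?_ ?_) htl
      (Primrec.list_cons.comp hx (Primrec.list_cons.comp hd htl))
    · exact Primrec.eq.comp (Primrec.fst.comp hx) (Primrec.fst.comp hd)
    · exact Primrec.eq.comp (Primrec.snd.comp hx) (Primrec.not.comp (Primrec.snd.comp hd))
  · induction l with
    | nil => rfl
    | cons x l ih => exact (congrArg _ ih).trans rfl

theorem primrecRel_mk_eq_mk :
    PrimrecRel fun w w' : List (α × Bool) => FreeGroup.mk w = FreeGroup.mk w' := by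
  classical
  refine (Primrec.eq.comp (primrec_reduce.comp Primrec.fst)
    (primrec_reduce.comp Primrec.snd)).of_eq fun p => ?_
  rw [← FreeGroup.toWord_mk, ← FreeGroup.toWord_mk, FreeGroup.toWord_inj]

end WordComputability

section Restriction

variable {α : Type u} [DecidableEq α]

/-- The word `w` with all letters outside the alphabet `S` deleted. -/
def restrictLetters (S : List α) (w : List (α × Bool)) : List (α × Bool) :=
  w.filter fun x => x.1 ∈ S

variable {S : List α} {w w' : List (α × Bool)}

theorem restrictLetters_eq_self (h : ∀ x ∈ w, x.1 ∈ S) : restrictLetters S w = w :=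
  List.filter_eq_self.2 (by simpa using h)

theorem fst_mem_of_mem_restrictLetters {x : α × Bool} (hx : x ∈ restrictLetters S w) : x.1 ∈ S := by
  simpa using List.of_mem_filter hx

theorem restrictLetters_append :
    restrictLetters S (w ++ w') = restrictLetters S w ++ restrictLetters S w' :=
  List.filter_append _ _

theorem restrictLetters_invRev :
    restrictLetters S (FreeGroup.invRev w) = FreeGroup.invRev (restrictLetters S w) := by
  simp [restrictLetters, FreeGroup.invRev, List.filter_reverse, List.filter_map, Function.comp_def]

theorem mk_restrictLetters :
    FreeGroup.mk (restrictLetters S w) =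
      FreeGroup.lift (fun a => if a ∈ S then FreeGroup.of a else 1) (FreeGroup.mk w) := by
  induction w with
  | nil => rfl
  | cons x w ih =>
    rw [← List.singleton_append, restrictLetters_append, ← FreeGroup.mul_mk, ← FreeGroup.mul_mk,
      map_mul, ih]
    obtain ⟨a, _ | _⟩ := x <;> by_cases ha : a ∈ S <;>
      simp [restrictLetters, ha, FreeGroup.of, FreeGroup.one_eq_mk, FreeGroup.invRev]

theorem mk_restrictLetters_congr (h : FreeGroup.mk w = FreeGroup.mk w') :
    FreeGroup.mk (restrictLetters S w) = FreeGroup.mk (restrictLetters S w') := by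
  rw [mk_restrictLetters, mk_restrictLetters, h]

end Restriction

section CertificateSearch

variable {α : Type u} {R : List (α × Bool)}

/-- The word spelled by the certificate `c`, where `R` spells the relator. -/
def certificateWord (R : List (α × Bool)) (c : List (List (α × Bool) × Bool)) :
    List (α × Bool) :=
  c.flatMap fun q => q.1 ++ ((bif q.2 then R else FreeGroup.invRev R) ++ FreeGroup.invRev q.1)

theorem mk_certificateWord (c : List (List (α × Bool) × Bool)) :
    FreeGroup.mk (certificateWord R c) = conjugatesProd (FreeGroup.mk R) c := by
  induction c with
  | nil => rfl
  | cons q c ih =>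
    rw [conjugatesProd, certificateWord] at *
    rw [List.flatMap_cons, ← FreeGroup.mul_mk, ih]
    obtain ⟨w, _ | _⟩ := q <;>
      simp [signedRelator, ← FreeGroup.mul_mk, ← FreeGroup.inv_mk, mul_assoc]

theorem primrec_certificateWord [Primcodable α] (R : List (α × Bool)) :
    Primrec (certificateWord R) :=
  Primrec.list_flatMap Primrec.id <| Primrec.list_append.comp (Primrec.fst.comp Primrec.snd) <|
    Primrec.list_append.comp
      (Primrec.cond (Primrec.snd.comp Primrec.snd) (Primrec.const _) (Primrec.const _))
      (primrec_invRev.comp (Primrec.fst.comp Primrec.snd))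

theorem restrictLetters_certificateWord [DecidableEq α] {S : List α} (hR : ∀ x ∈ R, x.1 ∈ S)
    (c : List (List (α × Bool) × Bool)) :
    restrictLetters S (certificateWord R c) =
      certificateWord R (c.map fun q => (restrictLetters S q.1, q.2)) := by
  induction c with
  | nil => rfl
  | cons q c ih =>
    rw [certificateWord, certificateWord] at *
    rw [List.map_cons, List.flatMap_cons, List.flatMap_cons, restrictLetters_append, ih]
    obtain ⟨w, _ | _⟩ := q <;>
      simp [restrictLetters_append, restrictLetters_invRev, restrictLetters_eq_self hR]

/-- All certificates with at most `k` factors whose conjugators are words of length at most `k`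
over `Γ`. -/
def boundedCertificates (Γ : List (α × Bool)) (k : ℕ) : List (List (List (α × Bool) × Bool)) :=
  boundedLists (withSigns (boundedLists Γ k)) k

theorem mem_boundedCertificates {Γ : List (α × Bool)} {k : ℕ}
    {c : List (List (α × Bool) × Bool)} :
    c ∈ boundedCertificates Γ k ↔
      c.length ≤ k ∧ ∀ q ∈ c, q.1.length ≤ k ∧ ∀ x ∈ q.1, x ∈ Γ := by
  simp only [boundedCertificates, mem_boundedLists, mem_withSigns]

theorem primrec_boundedCertificates [Primcodable α] :
    Primrec₂ (boundedCertificates (α := α)) :=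
  primrec_boundedLists.comp (primrec_withSigns.comp primrec_boundedLists) Primrec.snd

theorem primrec_certificateBound (D : ℕ) : Primrec (certificateBound D) := by
  have hdouble : Primrec fun ℓ : ℕ => 2 * ℓ := Primrec.nat_mul.comp (Primrec.const 2) Primrec.id
  have hpow : Primrec fun k : ℕ => D ^ k :=
    (Primrec₂.unpaired'.1 Nat.Primrec.pow).comp (Primrec.const D) Primrec.id
  exact Primrec.nat_mul.comp hdouble (Primrec.nat_mul.comp (hpow.comp hdouble) Primrec.succ)

theorem certificateBound_mono {D : ℕ} (hD : 1 ≤ D) : Monotone (certificateBound D) := by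
  intro ℓ ℓ' h
  unfold certificateBound
  gcongr

/-- The word `l u l⁻¹ v⁻¹` for `p = (u, v)`, trivial in a group exactly when `l` conjugates `u`
to `v`. -/
def conjugacyWord (l : List (α × Bool)) (p : List (α × Bool) × List (α × Bool)) :
    List (α × Bool) :=
  l ++ (p.1 ++ (FreeGroup.invRev l ++ FreeGroup.invRev p.2))

theorem length_conjugacyWord (l u v : List (α × Bool)) :
    (conjugacyWord l (u, v)).length = 2 * l.length + (u.length + v.length) := by
  simp only [conjugacyWord, List.length_append, FreeGroup.invRev_length]
  ring

theorem mk_conjugacyWord_mem_normalClosure_iff {ρ : FreeGroup α} (l u v : List (α × Bool)) :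
    FreeGroup.mk (conjugacyWord l (u, v)) ∈ Subgroup.normalClosure {ρ} ↔
      PresentedGroup.mk {ρ} (FreeGroup.mk l) * PresentedGroup.mk {ρ} (FreeGroup.mk u) *
        (PresentedGroup.mk {ρ} (FreeGroup.mk l))⁻¹ = PresentedGroup.mk {ρ} (FreeGroup.mk v) := by
  rw [← PresentedGroup.mk_eq_one_iff, ← mul_inv_eq_one (b := PresentedGroup.mk _ (.mk v))]
  simp only [conjugacyWord, ← FreeGroup.mul_mk, ← FreeGroup.inv_mk, map_mul, map_inv, mul_assoc]

/-- The letters, with both signs, of the relator `R` and of the two words of `p`. -/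
def searchAlphabet (R : List (α × Bool)) (p : List (α × Bool) × List (α × Bool)) :
    List (α × Bool) :=
  withSigns ((R ++ (p.1 ++ p.2)).map Prod.fst)

theorem primrec_searchAlphabet [Primcodable α] (R : List (α × Bool)) :
    Primrec (searchAlphabet R) :=
  primrec_withSigns.comp <| Primrec.list_map (Primrec.list_append.comp (Primrec.const R)
    (Primrec.list_append.comp Primrec.fst Primrec.snd)) (Primrec.fst.comp Primrec.snd)

/-- The outcome of the search for a word `l`, together with a certificate that `l` conjugates `p.1`
to `p.2` modulo `R`, among the words of length at most `B * (p.1.length + p.2.length)` and the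
certificates of the corresponding size `certificateBound D`. -/
def HasBoundedConjugator (R : List (α × Bool)) (B D : ℕ)
    (p : List (α × Bool) × List (α × Bool)) : Prop :=
  ∃ l ∈ boundedLists (searchAlphabet R p) (B * (p.1.length + p.2.length)),
    ∃ c ∈ boundedCertificates (searchAlphabet R p)
        (certificateBound D (B * (p.1.length + p.2.length))),
      FreeGroup.mk (certificateWord R c) = FreeGroup.mk (conjugacyWord l p)

theorem primrecPred_hasBoundedConjugator [Primcodable α] (R : List (α × Bool)) (B D : ℕ) :
    PrimrecPred (HasBoundedConjugator R B D) := by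
  have hbound : Primrec fun p : List (α × Bool) × List (α × Bool) =>
      B * (p.1.length + p.2.length) :=
    Primrec.nat_mul.comp (Primrec.const B) <| Primrec.nat_add.comp
      (Primrec.list_length.comp Primrec.fst) (Primrec.list_length.comp Primrec.snd)
  have hword : Primrec₂ (conjugacyWord (α := α)) :=
    Primrec.list_append.comp Primrec.fst <| Primrec.list_append.comp
      (Primrec.fst.comp Primrec.snd) <| Primrec.list_append.comp
        (primrec_invRev.comp Primrec.fst) (primrec_invRev.comp (Primrec.snd.comp Primrec.snd))
  have hcheck : PrimrecRel fun (c : List (List (α × Bool) × Bool)) (w : List (α × Bool)) =>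
      FreeGroup.mk (certificateWord R c) = FreeGroup.mk w :=
    primrecRel_mk_eq_mk.comp ((primrec_certificateWord R).comp Primrec.fst) Primrec.snd
  have hcertificate : PrimrecRel fun (l : List (α × Bool))
      (p : List (α × Bool) × List (α × Bool)) =>
      ∃ c ∈ boundedCertificates (searchAlphabet R p)
          (certificateBound D (B * (p.1.length + p.2.length))),
        FreeGroup.mk (certificateWord R c) = FreeGroup.mk (conjugacyWord l p) :=
    hcheck.exists_mem_list.comp
      (primrec_boundedCertificates.comp ((primrec_searchAlphabet R).comp Primrec.snd)
        ((primrec_certificateBound D).comp (hbound.comp Primrec.snd))) hword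
  exact hcertificate.exists_mem_list.comp
    (primrec_boundedLists.comp (primrec_searchAlphabet R) hbound) Primrec.id

theorem HasBoundedConjugator.exists_conj {B D : ℕ} {u v : List (α × Bool)}
    (h : HasBoundedConjugator R B D (u, v)) :
    ∃ g : PresentedGroup {FreeGroup.mk R},
      g * PresentedGroup.mk {FreeGroup.mk R} (FreeGroup.mk u) * g⁻¹ =
        PresentedGroup.mk {FreeGroup.mk R} (FreeGroup.mk v) := by
  obtain ⟨l, -, c, -, hlc⟩ := h
  refine ⟨_, (mk_conjugacyWord_mem_normalClosure_iff l u v).1 ?_⟩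
  rw [← hlc, mk_certificateWord]
  exact (HasCertificate.mem_normalClosure ⟨c, le_rfl, fun q hq =>
    List.single_le_sum (by simp) _ (List.mem_map_of_mem (f := fun q => q.1.length) hq), rfl⟩)

-- The endomorphism of the free group deleting all letters outside the search alphabet fixes the
-- relator and the words of `p`, so it turns any conjugator and certificate into searched ones.
theorem hasBoundedConjugator_of_hasCertificate {B D : ℕ} {l u v : List (α × Bool)}
    (hl : l.length ≤ B * (u.length + v.length))
    (hc : HasCertificate (FreeGroup.mk R) (certificateBound D (B * (u.length + v.length)))
      (certificateBound D (B * (u.length + v.length))) (FreeGroup.mk (conjugacyWord l (u, v)))) :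
    HasBoundedConjugator R B D (u, v) := by
  classical
  obtain ⟨c, hlen, hconj, hval⟩ := hc
  set S := (R ++ (u ++ v)).map Prod.fst
  have hmem {w : List (α × Bool)} (hw : w ⊆ R ++ (u ++ v)) : ∀ x ∈ w, x.1 ∈ S :=
    fun x hx => List.mem_map_of_mem (hw hx)
  have hletter (w : List (α × Bool)) : ∀ x ∈ restrictLetters S w, x ∈ searchAlphabet R (u, v) :=
    fun x hx => mem_withSigns.2 (fst_mem_of_mem_restrictLetters hx)
  have hshort (w : List (α × Bool)) : (restrictLetters S w).length ≤ w.length :=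
    List.length_filter_le _ _
  refine ⟨restrictLetters S l, mem_boundedLists.2 ⟨(hshort l).trans hl, hletter l⟩,
    c.map fun q => (restrictLetters S q.1, q.2), mem_boundedCertificates.2 ⟨by simpa, ?_⟩, ?_⟩
  · intro q hq
    obtain ⟨q, hqc, rfl⟩ := List.mem_map.1 hq
    exact ⟨(hshort q.1).trans (hconj q hqc), hletter q.1⟩
  · rw [← mk_certificateWord] at hval
    have hrestrict := mk_restrictLetters_congr (S := S) hval.symm
    rw [restrictLetters_certificateWord (hmem (by simp))] at hrestrict
    rw [hrestrict, conjugacyWord, conjugacyWord]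
    simp only [restrictLetters_append, restrictLetters_invRev]
    rw [restrictLetters_eq_self (hmem (w := u) (by simp)),
      restrictLetters_eq_self (hmem (w := v) (by simp))]

theorem IsPrimitiveCyclicWord.hasBoundedConjugator {L n : ℕ} [NeZero L] {y : ZMod L → α × Bool}
    (hy : IsPrimitiveCyclicWord y) (hn : 2 ≤ n) (hR : FreeGroup.mk R = prefixProd y L ^ n)
    {u v : List (α × Bool)} {c : FreeGroup α}
    (hc : PresentedGroup.mk {FreeGroup.mk R} c * PresentedGroup.mk {FreeGroup.mk R}
      (FreeGroup.mk u) * (PresentedGroup.mk {FreeGroup.mk R} c)⁻¹ =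
        PresentedGroup.mk {FreeGroup.mk R} (FreeGroup.mk v)) :
    HasBoundedConjugator R (8 * L + 5) (n * L + L) (u, v) := by
  rw [hR] at hc
  obtain ⟨l, hl, hconj⟩ := hy.exists_conjugator_length_le hn u v hc
  have hword : (conjugacyWord l (u, v)).length ≤ (8 * L + 5) * (u.length + v.length) := by
    rw [length_conjugacyWord]
    linarith
  have hcert := hy.hasCertificate_of_mem_normalClosure hn
    ((mk_conjugacyWord_mem_normalClosure_iff l u v).2 hconj)
  have hbound := certificateBound_mono (D := n * L + L) (by have := NeZero.pos L; omega) hword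
  refine hasBoundedConjugator_of_hasCertificate (le_trans ?_ hword)
    (hR ▸ hcert.mono hbound hbound)
  rw [length_conjugacyWord]
  omega

end CertificateSearch

end OneRelator

theorem one_relator_with_torsion_conjugacy_problem_decidable_general {α : Type*} [Primcodable α]
    [DecidableEq α] {r : FreeGroup α} (hcyc : r.CyclicallyReduced)
    (hpow : ¬ ∃ (s : FreeGroup α) (k : ℕ), 2 ≤ k ∧ r = s ^ k) {n : ℕ} (hn : 2 ≤ n) :
    ComputablePred fun p : List (α × Bool) × List (α × Bool) =>
      ∃ g : PresentedGroup {r ^ n},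
        g * PresentedGroup.mk {r ^ n} (FreeGroup.mk p.1) * g⁻¹ =
          PresentedGroup.mk {r ^ n} (FreeGroup.mk p.2) := by
  obtain ⟨L, _, y, hy, hyr⟩ := OneRelator.exists_isPrimitiveCyclicWord hcyc hpow
  obtain ⟨R, hR⟩ := Quot.exists_rep (r ^ n)
  change FreeGroup.mk R = r ^ n at hR
  rw [← hR]
  refine ((OneRelator.primrecPred_hasBoundedConjugator R (8 * L + 5) (n * L + L)).of_eq
    fun p => ⟨fun h => h.exists_conj, ?_⟩).computablePred
  rintro ⟨g, hg⟩
  obtain ⟨c, rfl⟩ := PresentedGroup.mk_surjective _ g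
  exact hy.hasBoundedConjugator hn (hR.trans (congrArg (· ^ n) hyr.symm)) hg

/-- **Newman (1968):** the conjugacy problem for one-relator groups with torsion
is decidable. -/
theorem one_relator_with_torsion_conjugacy_problem_decidable
    (m : ℕ) (r : FreeGroup (Fin m)) (hr : r ≠ 1) (hcyc : FreeGroup.CyclicallyReduced r)
    (hpow : ¬ ∃ (s : FreeGroup (Fin m)) (k : ℕ), 2 ≤ k ∧ r = s ^ k)
    (n : ℕ) (hn : 2 ≤ n) :
    ComputablePred fun p : List (Fin m × Bool) × List (Fin m × Bool) =>
      ∃ g : PresentedGroup ({r ^ n} : Set (FreeGroup (Fin m))),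
        g * PresentedGroup.mk ({r ^ n} : Set (FreeGroup (Fin m))) (FreeGroup.mk p.1) * g⁻¹ =
          PresentedGroup.mk ({r ^ n} : Set (FreeGroup (Fin m))) (FreeGroup.mk p.2) :=
  one_relator_with_torsion_conjugacy_problem_decidable_general hcyc hpow hn
end

section
/- (Novikov 1955, Boone 1958) There exists a finitely presented group with unsolvable word problem: there exist a natural number m and a finite set rels of elements of the free group on Fin m such that the predicate on lists l : List (Fin m × Bool) given by 'FreeGroup.mk l lies in the normal closure of rels' is not a computable predicate (¬ ComputablePred). -/
/-!
A finite system of injective partial affine maps of the lattice `ℤ × ℤ` generates an equivalence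
relation, and a finitely presented group can recognize its class of `0`. In that group `x` and `y`
generate the lattice, the conjugate of `t` by `x ^ i * y ^ j` stands for the point `(i, j)`, and
each rule has a stable letter `r` which conjugates the points of its domain to their images. A
further generator `k` commutes with `t` and with all stable letters, hence with every point
equivalent to `0`. It commutes with no other point: the lattice acts on sequences indexed by
`ℤ × ℤ` by translation and `t` acts by flipping a sign at the origin; a suitable sequence is fixed
by the flips at exactly the points equivalent to `0`, and every stable letter can be made to fix
this sequence as well, so that `k` can act by swapping it with an extra point.

Configurations of a Turing machine are points of the lattice, the two halves of the tape being read
as numbers in base `b`, and its transitions are affine rules. As the machine is deterministic, a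
configuration is equivalent to a halted one only if it halts. Since finitely many rules collapse all
halted configurations to `0`, a solution of the word problem would decide the halting problem.
-/

namespace NovikovBoone

/-! ### Permutations of sequences over a countable abelian group -/

section Sequences

open Equiv

variable {A : Type*}

/-- The alphabet of the sequence space: a sign, which the flips negate, and an inert component. The
summand `ℕ` leaves room for recoding blocks of letters as single letters. -/
abbrev Letter (A : Type*) := SignType × (A ⊕ ℕ)

/-- The space of sequences of letters indexed by `A`. -/
abbrev Seq (A : Type*) := A → Letter A

/-- The translation action of `A` on sequences. -/
def shift [AddCommGroup A] : Multiplicative A →* Perm (Seq A) where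
  toFun u :=
    { toFun F z := F (z - u.toAdd)
      invFun F z := F (z + u.toAdd)
      left_inv F := by simp
      right_inv F := by simp }
  map_one' := by ext1 F; simp
  map_mul' u v := by ext1 F; simp [sub_sub]

theorem shift_apply [AddCommGroup A] (u : Multiplicative A) (F : Seq A) (z : A) :
    shift u F z = F (z - u.toAdd) := rfl

/-- Negation of the sign of a letter. -/
def negSign (l : Letter A) : Letter A := (-l.1, l.2)

open Classical in
/-- The involution of the sequence space negating the sign at the coordinate `c`. -/
noncomputable def flip (c : A) : Perm (Seq A) :=
  Function.Involutive.toPerm (fun F => Function.update F c (negSign (F c))) fun F => by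
    simp [negSign]

open Classical in
theorem flip_apply (c : A) (F : Seq A) : flip c F = Function.update F c (negSign (F c)) := rfl

theorem semiconjBy_shift_flip [AddCommGroup A] (u : A) :
    SemiconjBy (shift (.ofAdd u)) (flip 0) (flip u) := by
  ext1 F
  funext z
  by_cases hz : z = u
  · simp [shift_apply, flip_apply, hz]
  · simp [shift_apply, flip_apply, hz, sub_eq_zero]

open Classical in
/-- A sequence fixed by exactly those flips whose coordinate lies in `E`. The inert components
record the coordinates, so that the blocks of this sequence are pairwise distinct. -/
noncomputable def basePoint (E : Set A) : Seq A := fun z => (if z ∈ E then 0 else 1, .inl z)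

theorem flip_basePoint_eq_iff (E : Set A) (c : A) : flip c (basePoint E) = basePoint E ↔ c ∈ E := by
  classical
  rw [flip_apply, Function.update_eq_self_iff]
  by_cases hc : c ∈ E <;> simp [basePoint, negSign, hc]

theorem exists_equiv_sum_nat_extending {X : Type*} [Countable X] {y : A → X}
    (hy : Function.Injective y) (hinf : (Set.range y)ᶜ.Infinite) :
    ∃ σ : X ≃ A ⊕ ℕ, ∀ u, σ (y u) = .inl u := by
  classical
  have : Infinite ↥(Set.range y)ᶜ := hinf.to_subtype
  obtain ⟨_⟩ := nonempty_denumerable ↥(Set.range y)ᶜ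
  refine ⟨(Equiv.Set.sumCompl (Set.range y)).symm.trans
    ((Equiv.ofInjective y hy).symm.sumCongr (Denumerable.eqv _)), fun u => ?_⟩
  rw [Equiv.trans_apply, Equiv.Set.sumCompl_symm_apply_of_mem (Set.mem_range_self u)]
  exact congrArg Sum.inl (Equiv.ofInjective_symm_apply hy u)

/-- The inert components at `q₀` already distinguish the prescribed blocks `B u`, so a bijection
between blocks and letters can be chosen which labels them by `u`. -/
theorem exists_block_letter_equiv [Countable A] {Q : Type*} [Finite Q] [DecidableEq Q] (q₀ : Q)
    {B : A → Q → Letter A} {f : A → A} (hf : Function.Injective f)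
    (hB : ∀ u, (B u q₀).2 = .inl (f u)) :
    ∃ θ : (Q → Letter A) ≃ Letter A,
      (∀ F, θ (Function.update F q₀ (negSign (F q₀))) = negSign (θ F)) ∧
        ∀ u, θ (B u) = ((B u q₀).1, .inl u) := by
  let y (u : A) : (A ⊕ ℕ) × ({q // q ≠ q₀} → Letter A) := ((B u q₀).2, fun q => B u q)
  have hy : Function.Injective y := fun u v huv =>
    hf (by simpa [y, hB] using congrArg Prod.fst huv)
  have hinf : (Set.range y)ᶜ.Infinite := by
    have hinj : Function.Injective
        fun k : ℕ => ((.inr k, fun _ => (0, .inr 0)) : (A ⊕ ℕ) × ({q // q ≠ q₀} → Letter A)) :=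
      fun k l hkl => by simpa using congrArg Prod.fst hkl
    refine (Set.infinite_range_of_injective hinj).mono ?_
    rintro _ ⟨k, rfl⟩ ⟨u, hu⟩
    simpa [y, hB] using congrArg Prod.fst hu
  obtain ⟨σ, hσ⟩ := exists_equiv_sum_nat_extending hy hinf
  let θ : (Q → Letter A) ≃ Letter A := (Equiv.funSplitAt q₀ (Letter A)).trans
    ((Equiv.prodAssoc _ _ _).trans ((Equiv.refl _).prodCongr σ))
  have hθ (F : Q → Letter A) : θ F = ((F q₀).1, σ ((F q₀).2, fun q => F q)) := rfl
  refine ⟨θ, fun F => ?_, fun u => by rw [hθ, ← hσ u]⟩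
  have hrest : (fun q : {q // q ≠ q₀} => Function.update F q₀ (negSign (F q₀)) q)
      = fun q : {q // q ≠ q₀} => F q := funext fun q => Function.update_of_ne q.2 _ _
  rw [hθ, hrest, Function.update_self, hθ]
  rfl

section Cosets

variable [AddCommGroup A] {φ : A →+ A}

/-- The block with index `u` is the set of all `cosetEquiv hφ a (u, q)`; it starts at `a + φ u`. -/
noncomputable def cosetEquiv (hφ : Function.Injective φ) (a : A) : A × (A ⧸ φ.range) ≃ A :=
  Equiv.ofBijective (fun p => a + φ p.1 + (p.2.out - (0 : A ⧸ φ.range).out)) <| by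
    constructor
    · rintro ⟨u, q⟩ ⟨v, q'⟩ h
      have hq : q = q' := by
        have := congrArg (QuotientAddGroup.mk' φ.range) h
        have hker (w : A) : (φ w : A ⧸ φ.range) = 0 :=
          (QuotientAddGroup.eq_zero_iff _).2 (φ.mem_range.2 ⟨w, rfl⟩)
        simpa [hker] using this
      subst hq
      have huv : φ u = φ v := by simpa using h
      rw [hφ huv]
    · intro z
      let q : A ⧸ φ.range := ↑(z - a)
      have hz : z - a - q.out + (0 : A ⧸ φ.range).out ∈ φ.range := by
        rw [← QuotientAddGroup.eq_zero_iff]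
        simp [q]
      obtain ⟨u, hu⟩ := hz
      exact ⟨(u, q), by simp only [hu]; abel⟩

theorem cosetEquiv_add (hφ : Function.Injective φ) (a u v : A) (q : A ⧸ φ.range) :
    cosetEquiv hφ a (u + v, q) = cosetEquiv hφ a (u, q) + φ v := by
  change a + φ (u + v) + _ = a + φ u + _ + φ v
  rw [map_add]
  abel

theorem cosetEquiv_zero (hφ : Function.Injective φ) (a u : A) :
    cosetEquiv hφ a (u, 0) = a + φ u := by
  change a + φ u + (_ - _) = _
  rw [sub_self, add_zero]

end Cosets

variable [AddCommGroup A] [Countable A]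

/-- Cut a sequence into blocks along the cosets of the image of `φ` and read every block as a
single letter. -/
theorem exists_perm_contracting_affine {φ : A →+ A} (hφ : Function.Injective φ)
    [Finite (A ⧸ φ.range)] (E : Set A) (a : A) :
    ∃ Φ : Perm (Seq A), (∀ u, SemiconjBy Φ (shift (.ofAdd (φ u))) (shift (.ofAdd u))) ∧
      SemiconjBy Φ (flip a) (flip 0) ∧ Φ (basePoint E) = basePoint {u | a + φ u ∈ E} := by
  classical
  let κ := cosetEquiv hφ a
  obtain ⟨θ, hθneg, hθbase⟩ := exists_block_letter_equiv (0 : A ⧸ φ.range)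
    (B := fun u q => basePoint E (κ (u, q))) (f := fun u => a + φ u)
    ((add_right_injective a).comp hφ) fun u => by simp [basePoint, κ, cosetEquiv_zero]
  let Φ : Perm (Seq A) := (κ.symm.arrowCongr (Equiv.refl _)).trans
    ((Equiv.curry A (A ⧸ φ.range) (Letter A)).trans ((Equiv.refl A).arrowCongr θ))
  have hΦ (F : Seq A) (u : A) : Φ F u = θ fun q => F (κ (u, q)) := rfl
  refine ⟨Φ, fun v => Equiv.ext fun F => funext fun u => ?_,
    Equiv.ext fun F => funext fun u => ?_, funext fun u => ?_⟩
  · rw [Perm.mul_apply, Perm.mul_apply, hΦ, shift_apply, hΦ]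
    congr 1
    funext q
    rw [shift_apply]
    congr 1
    rw [sub_eq_iff_eq_add, toAdd_ofAdd, toAdd_ofAdd, ← cosetEquiv_add hφ, sub_add_cancel]
  · have hκ : a = κ (0, 0) := by simp [κ, cosetEquiv_zero]
    rw [Perm.mul_apply, Perm.mul_apply, hΦ, flip_apply, flip_apply, hκ]
    by_cases hu : u = 0
    · subst hu
      rw [Function.update_self, hΦ, ← hθneg]
      congr 1
      funext q
      by_cases hq : q = 0 <;> simp [hq]
    · rw [Function.update_of_ne hu, hΦ]
      congr 1
      funext q
      simp [hu]
  · rw [hΦ, hθbase, cosetEquiv_zero]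
    rfl

theorem exists_perm_conj_affine {φ ψ : A →+ A} (hφ : Function.Injective φ)
    (hψ : Function.Injective ψ) [Finite (A ⧸ φ.range)] [Finite (A ⧸ ψ.range)] {E : Set A} {a b : A}
    (hE : ∀ u, a + φ u ∈ E ↔ b + ψ u ∈ E) :
    ∃ r : Perm (Seq A), (∀ u, SemiconjBy r (shift (.ofAdd (φ u))) (shift (.ofAdd (ψ u)))) ∧
      SemiconjBy r (flip a) (flip b) ∧ r (basePoint E) = basePoint E := by
  obtain ⟨Φ, hΦshift, hΦflip, hΦbase⟩ := exists_perm_contracting_affine hφ E a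
  obtain ⟨Ψ, hΨshift, hΨflip, hΨbase⟩ := exists_perm_contracting_affine hψ E b
  refine ⟨Ψ⁻¹ * Φ, fun u => (hΨshift u).inv_symm_left.mul_left (hΦshift u),
    hΨflip.inv_symm_left.mul_left hΦflip, ?_⟩
  rw [Perm.mul_apply, hΦbase, Perm.inv_eq_iff_eq, hΨbase]
  simp only [hE]

end Sequences

/-! ### The presentation attached to a system of affine rules -/

section Presentation

open scoped commutatorElement

/-- The partial map `source + domScale * u ↦ target + codScale * u` on `ℤ × ℤ`, with the
operations taken componentwise. -/
structure AffineRule where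
  source : ℤ × ℤ
  domScale : ℤ × ℤ
  target : ℤ × ℤ
  codScale : ℤ × ℤ

namespace AffineRule

/-- The graph of the partial map. -/
def Rel (ρ : AffineRule) (c c' : ℤ × ℤ) : Prop :=
  ∃ u, c = ρ.source + ρ.domScale * u ∧ c' = ρ.target + ρ.codScale * u

/-- All four scaling factors are nonzero, so that the partial map is injective, with domain and
range of finite index. -/
def Nondegenerate (ρ : AffineRule) : Prop :=
  (ρ.domScale.1 ≠ 0 ∧ ρ.domScale.2 ≠ 0) ∧ (ρ.codScale.1 ≠ 0 ∧ ρ.codScale.2 ≠ 0)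

end AffineRule

variable {ι : Type*}

/-- One application of a rule of the system `ρ`. -/
def Step (ρ : ι → AffineRule) (c c' : ℤ × ℤ) : Prop := ∃ i, (ρ i).Rel c c'

/-- The generators of the group: `x` and `y` generate the lattice `ℤ × ℤ`, the conjugates of `t`
by lattice elements encode the points of the lattice, `k` tests these conjugates, and `r i` is the
stable letter of the rule `i`. -/
inductive Gen (ι : Type*) where
  | x | y | t | k
  | r (i : ι)

instance [Finite ι] : Finite (Gen ι) :=
  .of_surjective (Sum.elim ![Gen.x, .y, .t, .k] Gen.r) fun g => by
    cases g with
    | x => exact ⟨.inl 0, rfl⟩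
    | y => exact ⟨.inl 1, rfl⟩
    | t => exact ⟨.inl 2, rfl⟩
    | k => exact ⟨.inl 3, rfl⟩
    | r i => exact ⟨.inr i, rfl⟩

section Group

variable {H K : Type*} [Group H] [Group K]

/-- The lattice element `x ^ c.1 * y ^ c.2`. -/
def monomial (f : Gen ι → H) (c : ℤ × ℤ) : H := f .x ^ c.1 * f .y ^ c.2

/-- The conjugate of `t` encoding the point `c`. -/
def point (f : Gen ι → H) (c : ℤ × ℤ) : H := monomial f c * f .t * (monomial f c)⁻¹

theorem map_point (F : H →* K) (f : Gen ι → H) (c : ℤ × ℤ) :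
    F (point f c) = point (F ∘ f) c := by
  simp [point, monomial]

theorem point_zero (f : Gen ι → H) : point f 0 = f .t := by
  simp [point, monomial]

theorem monomial_add {f : Gen ι → H} (hf : Commute (f .x) (f .y)) (c d : ℤ × ℤ) :
    monomial f (c + d) = monomial f c * monomial f d := by
  simp only [monomial, Prod.fst_add, Prod.snd_add, zpow_add]
  rw [mul_assoc, mul_assoc, ← mul_assoc (f .x ^ d.1), (hf.zpow_zpow d.1 c.2).eq, mul_assoc]

theorem point_add {f : Gen ι → H} (hf : Commute (f .x) (f .y)) (c d : ℤ × ℤ) :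
    point f (c + d) = monomial f d * point f c * (monomial f d)⁻¹ := by
  rw [point, add_comm, monomial_add hf, point]
  group

/-- The commutator which is trivial if and only if `k` commutes with the point `c`. -/
def test (f : Gen ι → H) (c : ℤ × ℤ) : H := ⁅f .k, point f c⁆

theorem map_test (F : H →* K) (f : Gen ι → H) (c : ℤ × ℤ) : F (test f c) = test (F ∘ f) c := by
  simp [test, map_commutatorElement, map_point]

theorem test_eq_one_iff {f : Gen ι → H} {c : ℤ × ℤ} :
    test f c = 1 ↔ Commute (f .k) (point f c) :=
  commutatorElement_eq_one_iff_commute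

/-- The assignment `f` of group elements to the generators satisfies the defining relations of the
group attached to `ρ`. -/
structure Realizes (ρ : ι → AffineRule) (f : Gen ι → H) : Prop where
  commute_x_y : Commute (f .x) (f .y)
  commute_k_t : Commute (f .k) (f .t)
  commute_k_r (i : ι) : Commute (f .k) (f (.r i))
  semiconjBy_x (i : ι) :
    SemiconjBy (f (.r i)) (f .x ^ (ρ i).domScale.1) (f .x ^ (ρ i).codScale.1)
  semiconjBy_y (i : ι) :
    SemiconjBy (f (.r i)) (f .y ^ (ρ i).domScale.2) (f .y ^ (ρ i).codScale.2)
  semiconjBy_point (i : ι) : SemiconjBy (f (.r i)) (point f (ρ i).source) (point f (ρ i).target)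

theorem commute_iff_of_semiconjBy {k r a b : H} (hkr : Commute k r) (h : SemiconjBy r a b) :
    Commute k a ↔ Commute k b := by
  constructor <;> intro hk
  · rw [← mul_inv_eq_of_eq_mul h.eq]
    exact (hkr.mul_right hk).mul_right hkr.inv_right
  · rw [← inv_mul_eq_of_eq_mul (a := r) (b := b * r) (c := a) h.eq.symm]
    exact hkr.inv_right.mul_right (hk.mul_right hkr)

namespace Realizes

variable {ρ : ι → AffineRule} {f : Gen ι → H}

theorem semiconjBy_monomial (hf : Realizes ρ f) (i : ι) (u : ℤ × ℤ) :
    SemiconjBy (f (.r i)) (monomial f ((ρ i).domScale * u)) (monomial f ((ρ i).codScale * u)) := by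
  simp only [monomial, Prod.fst_mul, Prod.snd_mul, zpow_mul]
  exact ((hf.semiconjBy_x i).zpow_right u.1).mul_right ((hf.semiconjBy_y i).zpow_right u.2)

theorem commute_k_point_iff_of_step (hf : Realizes ρ f) {c c' : ℤ × ℤ} (h : Step ρ c c') :
    Commute (f .k) (point f c) ↔ Commute (f .k) (point f c') := by
  obtain ⟨i, u, rfl, rfl⟩ := h
  refine commute_iff_of_semiconjBy (hf.commute_k_r i) ?_
  rw [point_add hf.commute_x_y, point_add hf.commute_x_y]
  have hu := hf.semiconjBy_monomial i u
  exact (hu.mul_right (hf.semiconjBy_point i)).mul_right hu.inv_right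

theorem commute_k_point_iff_of_eqvGen (hf : Realizes ρ f) {c c' : ℤ × ℤ}
    (h : Relation.EqvGen (Step ρ) c c') :
    Commute (f .k) (point f c) ↔ Commute (f .k) (point f c') := by
  induction h with
  | rel _ _ h => exact hf.commute_k_point_iff_of_step h
  | refl => rfl
  | symm _ _ _ ih => exact ih.symm
  | trans _ _ _ _ _ ih₁ ih₂ => exact ih₁.trans ih₂

theorem commute_k_point (hf : Realizes ρ f) {c : ℤ × ℤ} (h : Relation.EqvGen (Step ρ) c 0) :
    Commute (f .k) (point f c) :=
  (hf.commute_k_point_iff_of_eqvGen h).2 (by rw [point_zero]; exact hf.commute_k_t)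

end Realizes

/-- The word which is trivial if and only if `r` conjugates `a` to `b`. -/
def conjRelator (r a b : H) : H := r * a * r⁻¹ * b⁻¹

theorem map_conjRelator (F : H →* K) (r a b : H) :
    F (conjRelator r a b) = conjRelator (F r) (F a) (F b) := by
  simp [conjRelator]

theorem conjRelator_eq_one_iff {r a b : H} : conjRelator r a b = 1 ↔ SemiconjBy r a b := by
  rw [conjRelator, mul_inv_eq_one, mul_inv_eq_iff_eq_mul]
  rfl

end Group

open FreeGroup (of)

/-- The defining relators of the group attached to `ρ`. -/
def relators (ρ : ι → AffineRule) : Set (FreeGroup (Gen ι)) :=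
  {⁅of (α := Gen ι) .x, of .y⁆, ⁅of (α := Gen ι) .k, of .t⁆} ∪
    Set.range (fun i => ⁅of (α := Gen ι) .k, of (.r i)⁆) ∪
    Set.range (fun i =>
      conjRelator (of (.r i)) (of Gen.x ^ (ρ i).domScale.1) (of Gen.x ^ (ρ i).codScale.1)) ∪
    Set.range (fun i =>
      conjRelator (of (.r i)) (of Gen.y ^ (ρ i).domScale.2) (of Gen.y ^ (ρ i).codScale.2)) ∪
    Set.range (fun i =>
      conjRelator (of (.r i)) (point of (ρ i).source) (point of (ρ i).target))

theorem finite_relators [Finite ι] (ρ : ι → AffineRule) : (relators ρ).Finite := by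
  unfold relators
  exact Set.toFinite _

theorem realizes_iff_relators {H : Type*} [Group H] {ρ : ι → AffineRule}
    (F : FreeGroup (Gen ι) →* H) : Realizes ρ (F ∘ of) ↔ ∀ g ∈ relators ρ, F g = 1 := by
  simp only [relators, Set.mem_union, Set.mem_insert_iff, Set.mem_singleton_iff, Set.mem_range,
    or_imp, forall_and, forall_eq, forall_exists_index, forall_apply_eq_imp_iff,
    map_commutatorElement, map_conjRelator, map_zpow, map_point, conjRelator_eq_one_iff,
    commutatorElement_eq_one_iff_commute]
  exact ⟨fun h => ⟨⟨⟨⟨⟨h.1, h.2⟩, h.3⟩, h.4⟩, h.5⟩, h.6⟩,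
    fun h => ⟨h.1.1.1.1.1, h.1.1.1.1.2, h.1.1.1.2, h.1.1.2, h.1.2, h.2⟩⟩

theorem test_mem_normalClosure {ρ : ι → AffineRule} {c : ℤ × ℤ}
    (h : Relation.EqvGen (Step ρ) c 0) : test of c ∈ Subgroup.normalClosure (relators ρ) := by
  let π := QuotientGroup.mk' (Subgroup.normalClosure (relators ρ))
  have hπ : Realizes ρ (π ∘ of) := (realizes_iff_relators π).2 fun g hg =>
    (QuotientGroup.eq_one_iff g).2 (Subgroup.subset_normalClosure hg)
  rw [← QuotientGroup.eq_one_iff, ← QuotientGroup.mk'_apply, map_test, test_eq_one_iff]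
  exact hπ.commute_k_point h

section Faithfulness

open Equiv

theorem commute_swap_inr_iff {Ω : Type*} [DecidableEq Ω] (ω : Ω) (p : Perm Ω) :
    Commute (swap (.inr ()) (.inl ω)) (Perm.sumCongrHom Ω Unit (p, 1)) ↔ p ω = ω := by
  rw [Commute.symm_iff, Commute, SemiconjBy, ← mul_inv_eq_iff_eq_mul, ← swap_apply_apply]
  constructor
  · intro h
    simpa using congrArg (· (Sum.inr ())) h
  · intro h
    simp [h]

theorem injective_mulLeft_prod {m : ℤ × ℤ} (hm : m.1 ≠ 0 ∧ m.2 ≠ 0) :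
    Function.Injective (AddMonoidHom.mulLeft m) := fun u v h => by
  have h' : m * u = m * v := h
  rw [Prod.ext_iff] at h' ⊢
  exact ⟨mul_left_cancel₀ hm.1 h'.1, mul_left_cancel₀ hm.2 h'.2⟩

theorem range_mulLeft_prod (m : ℤ × ℤ) : (AddMonoidHom.mulLeft m).range =
    (AddSubgroup.zmultiples m.1).prod (AddSubgroup.zmultiples m.2) := by
  ext c
  simp only [AddMonoidHom.mem_range, AddMonoidHom.coe_mulLeft, Prod.exists, AddSubgroup.mem_prod,
    Int.mem_zmultiples_iff, Prod.ext_iff, Prod.fst_mul, Prod.snd_mul]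
  exact ⟨fun ⟨u, v, hu, hv⟩ => ⟨⟨u, hu.symm⟩, ⟨v, hv.symm⟩⟩,
    fun ⟨⟨u, hu⟩, ⟨v, hv⟩⟩ => ⟨u, v, hu.symm, hv.symm⟩⟩

theorem finite_quotient_range_mulLeft_prod {m : ℤ × ℤ} (hm : m.1 ≠ 0 ∧ m.2 ≠ 0) :
    Finite ((ℤ × ℤ) ⧸ (AddMonoidHom.mulLeft m).range) := by
  have : (AddMonoidHom.mulLeft m).range.FiniteIndex := ⟨by
    rw [range_mulLeft_prod, AddSubgroup.index_prod, Int.index_zmultiples, Int.index_zmultiples]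
    simpa using hm⟩
  exact AddSubgroup.finite_quotient_of_finiteIndex

/-- The action on sequences of the generators other than `k`, given the action of the stable
letters; `k` gets the value `1`. -/
noncomputable def latticeRep (r : ι → Perm (Seq (ℤ × ℤ))) : Gen ι → Perm (Seq (ℤ × ℤ))
  | .x => shift (.ofAdd (1, 0))
  | .y => shift (.ofAdd (0, 1))
  | .t => flip 0
  | .k => 1
  | .r i => r i

theorem monomial_latticeRep (r : ι → Perm (Seq (ℤ × ℤ))) (c : ℤ × ℤ) :
    monomial (latticeRep r) c = shift (.ofAdd c) := by
  simp [monomial, latticeRep, ← map_zpow, ← map_mul, ← ofAdd_zsmul, ← ofAdd_add]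

theorem point_latticeRep (r : ι → Perm (Seq (ℤ × ℤ))) (c : ℤ × ℤ) :
    point (latticeRep r) c = flip c := by
  rw [point, monomial_latticeRep]
  exact mul_inv_eq_of_eq_mul (semiconjBy_shift_flip c).eq

variable {ρ : ι → AffineRule}

open Classical in
/-- The generator `k` swaps the extra point with a sequence whose stabilizer contains precisely
those conjugates of `t` whose points are equivalent to `0`. -/
theorem exists_realizes_perm (hρ : ∀ i, (ρ i).Nondegenerate) :
    ∃ f : Gen ι → Perm (Seq (ℤ × ℤ) ⊕ Unit), Realizes ρ f ∧
      ∀ c, Commute (f .k) (point f c) → Relation.EqvGen (Step ρ) c 0 := by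
  let E : Set (ℤ × ℤ) := {c | Relation.EqvGen (Step ρ) c 0}
  have hE (i : ι) (u : ℤ × ℤ) : (ρ i).source + AddMonoidHom.mulLeft (ρ i).domScale u ∈ E ↔
      (ρ i).target + AddMonoidHom.mulLeft (ρ i).codScale u ∈ E :=
    have h := Relation.EqvGen.rel _ _ ⟨i, u, rfl, rfl⟩
    ⟨(h.symm _ _).trans _ _ _, h.trans _ _ _⟩
  have hstable (i : ι) := by
    have := finite_quotient_range_mulLeft_prod (hρ i).1
    have := finite_quotient_range_mulLeft_prod (hρ i).2
    exact exists_perm_conj_affine (injective_mulLeft_prod (hρ i).1)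
      (injective_mulLeft_prod (hρ i).2) (hE i)
  choose r hrshift hrflip hrbase using hstable
  let P : Perm (Seq (ℤ × ℤ)) →* Perm (Seq (ℤ × ℤ) ⊕ Unit) :=
    (Perm.sumCongrHom _ Unit).comp (MonoidHom.inl _ _)
  let f : Gen ι → Perm (Seq (ℤ × ℤ) ⊕ Unit)
    | .k => swap (.inr ()) (.inl (basePoint E))
    | g => P (latticeRep r g)
  have hpoint (c : ℤ × ℤ) : point f c = P (flip c) := by
    rw [← point_latticeRep r, map_point]
    rfl
  have hk (p : Perm (Seq (ℤ × ℤ))) : Commute (f .k) (P p) ↔ p (basePoint E) = basePoint E :=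
    commute_swap_inr_iff _ p
  refine ⟨f, ⟨?_, ?_, fun i => ?_, fun i => ?_, fun i => ?_, fun i => ?_⟩, fun c hc => ?_⟩
  · exact ((Commute.all _ _).map shift).map P
  · exact (hk (flip 0)).2 ((flip_basePoint_eq_iff E 0).2 (.refl 0))
  · exact (hk (r i)).2 (hrbase i)
  · simpa [f, latticeRep, Prod.mul_def, ← map_zpow, ← ofAdd_zsmul] using (hrshift i (1, 0)).map P
  · simpa [f, latticeRep, Prod.mul_def, ← map_zpow, ← ofAdd_zsmul] using (hrshift i (0, 1)).map P
  · rw [hpoint, hpoint]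
    exact (hrflip i).map P
  · rwa [hpoint, hk, flip_basePoint_eq_iff] at hc

theorem test_mem_normalClosure_iff (hρ : ∀ i, (ρ i).Nondegenerate) {c : ℤ × ℤ} :
    test of c ∈ Subgroup.normalClosure (relators ρ) ↔ Relation.EqvGen (Step ρ) c 0 := by
  refine ⟨fun h => ?_, test_mem_normalClosure⟩
  obtain ⟨f, hf, hfc⟩ := exists_realizes_perm hρ
  have hlift : FreeGroup.lift f ∘ of = f := funext fun g => FreeGroup.lift_apply_of
  have hker : Subgroup.normalClosure (relators ρ) ≤ (FreeGroup.lift f).ker :=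
    Subgroup.normalClosure_le_normal ((realizes_iff_relators _).1 (hlift.symm ▸ hf))
  have htest : FreeGroup.lift f (test of c) = 1 := hker h
  rw [map_test, hlift, test_eq_one_iff] at htest
  exact hfc c htest

end Faithfulness

end Presentation

/-! ### Computable sequences of words -/

section ComputableWords

variable {α : Type*} [Primcodable α]

/-- The elements `g n` of the free group are represented by words which can be computed from `n`. -/
def HasComputableWords (g : ℕ → FreeGroup α) : Prop :=
  ∃ w : ℕ → List (α × Bool), Computable w ∧ ∀ n, FreeGroup.mk (w n) = g n

namespace HasComputableWords

variable {g h : ℕ → FreeGroup α}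

theorem const (a : FreeGroup α) : HasComputableWords fun _ => a := by
  obtain ⟨l, rfl⟩ := Quot.exists_rep a
  exact ⟨fun _ => l, .const l, fun _ => rfl⟩

theorem mul (hg : HasComputableWords g) (hh : HasComputableWords h) :
    HasComputableWords fun n => g n * h n := by
  obtain ⟨v, hv, hvg⟩ := hg
  obtain ⟨w, hw, hwh⟩ := hh
  exact ⟨fun n => v n ++ w n, Computable.list_append.comp hv hw, fun n => by
    rw [← FreeGroup.mul_mk, hvg, hwh]⟩

theorem inv (hg : HasComputableWords g) : HasComputableWords fun n => (g n)⁻¹ := by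
  obtain ⟨w, hw, hwg⟩ := hg
  have hrev : Computable (FreeGroup.invRev : List (α × Bool) → List (α × Bool)) :=
    (Primrec.list_reverse.comp <| Primrec.list_map .id <| Primrec₂.mk <|
      (Primrec.fst.comp .snd).pair (Primrec.not.comp (Primrec.snd.comp .snd))).to_comp
  exact ⟨fun n => FreeGroup.invRev (w n), hrev.comp hw, fun n => by rw [← FreeGroup.inv_mk, hwg]⟩

theorem pow (hg : HasComputableWords g) {s : ℕ → ℕ} (hs : Computable s) :
    HasComputableWords fun n => g n ^ s n := by
  obtain ⟨w, hw, hwg⟩ := hg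
  have hstep : Computable₂ fun (n : ℕ) (p : ℕ × List (α × Bool)) => p.2 ++ w n :=
    Computable.list_append.comp (Computable.snd.comp .snd) (hw.comp .fst)
  refine ⟨_, Computable.nat_rec hs (.const []) hstep, fun n => ?_⟩
  simp only [← hwg n]
  induction s n with
  | zero => rfl
  | succ i ih => rw [pow_succ, ← ih, FreeGroup.mul_mk]

theorem test {ι : Type*} (f : Gen ι → FreeGroup α) (a : ℤ) {s : ℕ → ℕ} (hs : Computable s) :
    HasComputableWords fun n => test f (a, s n) := by
  have hmon : HasComputableWords fun n => monomial f (a, s n) := by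
    simpa only [monomial, zpow_natCast] using (const (f .x ^ a)).mul ((const (f .y)).pow hs)
  have hpoint : HasComputableWords fun n => point f (a, s n) :=
    (hmon.mul (const (f .t))).mul hmon.inv
  exact (((const (f .k)).mul hpoint).mul (const (f .k)).inv).mul hpoint.inv

end HasComputableWords

theorem exists_not_computablePred_of_eqvGen {ι : Type*} [Finite ι] {ρ : ι → AffineRule}
    (hρ : ∀ i, (ρ i).Nondegenerate) {a : ℤ} {s : ℕ → ℕ} (hs : Computable s)
    (h : ¬ ComputablePred fun n => Relation.EqvGen (Step ρ) (a, s n) 0) :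
    ∃ (m : ℕ) (rels : Set (FreeGroup (Fin m))), rels.Finite ∧
      ¬ ComputablePred fun l : List (Fin m × Bool) =>
          FreeGroup.mk l ∈ Subgroup.normalClosure rels := by
  obtain ⟨m, ⟨e⟩⟩ := Finite.exists_equiv_fin (Gen ι)
  let F : FreeGroup (Gen ι) ≃* FreeGroup (Fin m) := FreeGroup.freeGroupCongr e
  refine ⟨m, F '' relators ρ, (finite_relators ρ).image F, fun hword => h ?_⟩
  obtain ⟨w, hw, hwtest⟩ := HasComputableWords.test (F ∘ FreeGroup.of) a hs
  refine ComputablePred.computable_of_manyOneReducible ⟨w, hw, fun n => ?_⟩ hword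
  have hmap : (Subgroup.normalClosure (relators ρ)).map F.toMonoidHom =
      Subgroup.normalClosure (F '' relators ρ) :=
    Subgroup.map_normalClosure _ _ F.surjective
  have hF : Function.Injective F.toMonoidHom := F.injective
  have hFtest : FreeGroup.mk (w n) = F.toMonoidHom (test FreeGroup.of (a, s n)) := by
    rw [hwtest, map_test]
    rfl
  rw [hFtest, ← hmap, Subgroup.mem_map_iff_mem hF, test_mem_normalClosure_iff hρ]

end ComputableWords

/-! ### Turing machines as affine rules -/

section Machine

open Turing Relation

theorem residue_unique {n r r' u u' : ℤ} (hr : 0 ≤ r ∧ r < n) (hr' : 0 ≤ r' ∧ r' < n)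
    (h : r + n * u = r' + n * u') : r = r' ∧ u = u' := by
  have hn : 0 < n := by lia
  have hu : u = u' := by
    simpa [Int.add_mul_ediv_left _ _ hn.ne', Int.ediv_eq_zero_of_lt hr.1 hr.2,
      Int.ediv_eq_zero_of_lt hr'.1 hr'.2] using congrArg (· / n) h
  exact ⟨by simpa [hu] using h, hu⟩

/-- Reachability of `H` is preserved by the steps of `S` in both directions. -/
theorem exists_reflTransGen_of_eqvGen {α : Type*} {R S : α → α → Prop} {H : α → Prop}
    (hR : Relator.RightUnique R) (hH : ∀ ⦃x y⦄, H x → ¬ R x y)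
    (hS : ∀ ⦃x y⦄, S x y → R x y ∨ H x ∧ H y) {x y : α} (h : EqvGen S x y) (hy : H y) :
    ∃ z, H z ∧ ReflTransGen R x z := by
  suffices (∃ z, H z ∧ ReflTransGen R x z) ↔ ∃ z, H z ∧ ReflTransGen R y z from
    this.2 ⟨y, hy, .refl⟩
  clear hy
  induction h with
  | refl => rfl
  | symm _ _ _ ih => exact ih.symm
  | trans _ _ _ _ _ ih₁ ih₂ => exact ih₁.trans ih₂
  | rel x y hxy =>
    rcases hS hxy with hxy | ⟨hx, hy⟩
    · refine exists_congr fun z => and_congr_right fun hz => ⟨fun h => ?_, .head hxy⟩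
      rcases h.cases_head with rfl | ⟨w, hxw, hwz⟩
      · exact absurd hxy (hH hz)
      · rwa [hR hxy hxw]
    · exact ⟨fun _ => ⟨y, hy, .refl⟩, fun _ => ⟨x, hx, .refl⟩⟩

variable {b N : ℕ}

/-- A point representing a halted computation. -/
def IsHalted (N : ℕ) (p : ℤ × ℤ) : Prop := (N + 1 : ℤ) ∣ p.1

/-- The two rules translating the points with first coordinate divisible by `N + 1`, which allow
any halted computation to be brought to `0`. -/
def eraseRule (N : ℕ) (i : Bool) : AffineRule where
  source := 0
  domScale := (N + 1, 1)
  target := if i then (N + 1, 0) else (0, 1)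
  codScale := (N + 1, 1)

theorem isHalted_of_step_eraseRule {p p' : ℤ × ℤ} (h : Step (eraseRule N) p p') :
    IsHalted N p ∧ IsHalted N p' := by
  obtain ⟨i, u, rfl, rfl⟩ := h
  cases i <;> simp [IsHalted, eraseRule]

theorem eqvGen_eraseRule_zero (i j : ℕ) :
    EqvGen (Step (eraseRule N)) ((N + 1) * i, j) 0 := by
  have hrow (j : ℕ) : EqvGen (Step (eraseRule N)) (0, j) 0 := by
    induction j with
    | zero => exact .refl _
    | succ j ih =>
      refine .trans _ _ _ (.symm _ _ (.rel _ _ ⟨false, (0, j), ?_, ?_⟩)) ih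
      all_goals ext <;> simp [eraseRule, add_comm]
  induction i with
  | zero => simpa using hrow j
  | succ i ih =>
    refine .trans _ _ _ (.symm _ _ (.rel _ _ ⟨true, (i, j), ?_, ?_⟩)) ih
    all_goals ext <;> simp [eraseRule]
    ring

section Code

variable [NeZero b]

/-- The number whose base `b` digits, the least significant one first, are the symbols of `L`. -/
def tapeValue (L : ListBlank (Fin b)) : ℕ :=
  L.liftOn (fun l => Nat.ofDigits b (l.map Fin.val)) fun l _ ⟨n, hn⟩ => by
    simp [hn, Nat.ofDigits_append, Nat.ofDigits_replicate_zero]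

theorem tapeValue_mk (l : List (Fin b)) :
    tapeValue (ListBlank.mk l) = Nat.ofDigits b (l.map Fin.val) := rfl

theorem tapeValue_cons (a : Fin b) (L : ListBlank (Fin b)) :
    tapeValue (L.cons a) = a + b * tapeValue L := by
  induction L using ListBlank.induction_on with
  | _ l => rw [ListBlank.cons_mk, tapeValue_mk, tapeValue_mk, List.map_cons, Nat.ofDigits_cons]

/-- The point of `ℤ × ℤ` representing a configuration: the first coordinate holds the state and the
part of the tape to the left of the head, the second one the rest of the tape. The residue `0` of
the first coordinate modulo `N + 1` is reserved for halted computations. -/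
def code (c : TM0.Cfg (Fin b) (Fin N)) : ℤ × ℤ :=
  (c.q + 1 + (N + 1) * tapeValue c.Tape.left, tapeValue c.Tape.right₀)

theorem code_mk' (q : Fin N) (L R : ListBlank (Fin b)) :
    code ⟨q, Tape.mk' L R⟩ = ((q + 1 + (N + 1) * tapeValue L : ℤ), (tapeValue R : ℤ)) := by
  simp only [code, Tape.mk'_left, Tape.mk'_right₀]

end Code

variable [NeZero N] (M : TM0.Machine (Fin b) (Fin N))

/-- The `target` and the `codScale` of the rule describing the behaviour of `M` in state `q` when
`c` is the symbol to the left of the scanned symbol `a`. -/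
def transitionImage (q : Fin N) (c a : Fin b) : (ℤ × ℤ) × (ℤ × ℤ) :=
  match M q a with
  | none => (((N + 1) * c, a), ((N + 1) * b, b))
  | some (q', .write a') => ((q' + 1 + (N + 1) * c, a'), ((N + 1) * b, b))
  | some (q', .move .right) => ((q' + 1 + (N + 1) * (a + b * c), 0), ((N + 1) * b ^ 2, 1))
  | some (q', .move .left) => ((q' + 1, c + b * a), (N + 1, b ^ 2))

/-- The rule describing the behaviour of `M` in state `t.1` when `t.2.1` is the symbol to the left
of the scanned symbol `t.2.2`. -/
def transitionRule (t : Fin N × Fin b × Fin b) : AffineRule where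
  source := (t.1 + 1 + (N + 1) * t.2.1, t.2.2)
  domScale := ((N + 1) * b, b)
  target := (transitionImage M t.1 t.2.1 t.2.2).1
  codScale := (transitionImage M t.1 t.2.1 t.2.2).2

theorem rightUnique_step_transitionRule : Relator.RightUnique (Step (transitionRule M)) := by
  rintro p p₁ p₂ ⟨⟨q, c, a⟩, u, hp, rfl⟩ ⟨⟨q', c', a'⟩, u', hp', rfl⟩
  have hfin {n : ℕ} (i : Fin n) : 0 ≤ (i : ℤ) ∧ (i : ℤ) < n := ⟨by positivity, mod_cast i.isLt⟩
  have hpp := hp.symm.trans hp'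
  simp only [transitionRule, Prod.ext_iff, Prod.fst_add, Prod.snd_add, Prod.fst_mul,
    Prod.snd_mul] at hpp
  obtain ⟨hq, hleft⟩ := residue_unique (n := N + 1) (r := q + 1) (r' := q' + 1)
    (u := c + b * u.1) (u' := c' + b * u'.1) (by grind) (by grind) (by linarith [hpp.1])
  obtain ⟨hc, hu₁⟩ := residue_unique (hfin c) (hfin c') hleft
  obtain ⟨ha, hu₂⟩ := residue_unique (hfin a) (hfin a') hpp.2
  obtain rfl : q = q' := Fin.ext (by lia)
  obtain rfl : c = c' := Fin.ext (by lia)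
  obtain rfl : a = a' := Fin.ext (by lia)
  obtain rfl : u = u' := Prod.ext hu₁ hu₂
  rfl

theorem not_step_transitionRule_of_isHalted {p p' : ℤ × ℤ} (hp : IsHalted N p) :
    ¬ Step (transitionRule M) p p' := by
  rintro ⟨⟨q, c, a⟩, u, rfl, -⟩
  obtain ⟨v, hv⟩ := hp
  simp only [transitionRule, Prod.fst_add, Prod.fst_mul] at hv
  have := residue_unique (n := N + 1) (r := q + 1) (r' := 0) (u := c + b * u.1) (u' := v)
    (by grind) (by grind) (by linarith)
  lia

/-- The system of affine rules simulating `M`. -/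
def machineRule : (Fin N × Fin b × Fin b) ⊕ Bool → AffineRule :=
  Sum.elim (transitionRule M) (eraseRule N)

theorem step_machineRule {p p' : ℤ × ℤ} : Step (machineRule M) p p' ↔
    Step (transitionRule M) p p' ∨ Step (eraseRule N) p p' := by
  simp only [Step, Sum.exists, machineRule, Sum.elim_inl, Sum.elim_inr]

variable [NeZero b]

theorem machineRule_nondegenerate (i : (Fin N × Fin b × Fin b) ⊕ Bool) :
    (machineRule M i).Nondegenerate := by
  have hb : b ≠ 0 := NeZero.ne b
  have hbZ : (b : ℤ) ≠ 0 := mod_cast hb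
  have hN : (N + 1 : ℤ) ≠ 0 := by positivity
  rcases i with t | i
  · refine ⟨⟨mul_ne_zero hN hbZ, hbZ⟩, ?_⟩
    simp only [machineRule, Sum.elim_inl, transitionRule, transitionImage]
    split <;> simp [hb, hN]
  · exact ⟨⟨hN, one_ne_zero⟩, hN, one_ne_zero⟩

theorem step_code_of_step_eq_some {c c' : TM0.Cfg (Fin b) (Fin N)}
    (h : TM0.step M c = some c') : Step (transitionRule M) (code c) (code c') := by
  obtain ⟨q, T⟩ := c
  obtain ⟨L, R, rfl⟩ := T.exists_mk'
  obtain ⟨l, L, rfl⟩ := L.exists_cons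
  obtain ⟨a, R, rfl⟩ := R.exists_cons
  simp only [TM0.step, Tape.mk'_head, ListBlank.head_cons, Option.map_eq_some_iff] at h
  obtain ⟨⟨q', s⟩, hM, rfl⟩ := h
  rcases s with (_ | _) | a'
  all_goals simp only [Tape.move_left_mk', Tape.move_right_mk', Tape.write_mk',
    ListBlank.head_cons, ListBlank.tail_cons, code_mk', tapeValue_cons]
  all_goals
    refine ⟨(q, l, a), (tapeValue L, tapeValue R), ?_⟩
    simp only [transitionRule, transitionImage, hM]
    constructor <;> ext <;> push_cast <;> simp <;> ring

theorem exists_step_code_of_step_eq_none {c : TM0.Cfg (Fin b) (Fin N)}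
    (h : TM0.step M c = none) :
    ∃ i j : ℕ, Step (transitionRule M) (code c) ((N + 1) * i, j) := by
  obtain ⟨q, T⟩ := c
  obtain ⟨L, R, rfl⟩ := T.exists_mk'
  obtain ⟨l, L, rfl⟩ := L.exists_cons
  obtain ⟨a, R, rfl⟩ := R.exists_cons
  simp only [TM0.step, Tape.mk'_head, ListBlank.head_cons, Option.map_eq_none_iff] at h
  refine ⟨tapeValue (L.cons l), tapeValue (R.cons a), (q, l, a), (tapeValue L, tapeValue R), ?_⟩
  simp only [transitionRule, transitionImage, h, code_mk', tapeValue_cons]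
  constructor <;> ext <;> push_cast <;> simp <;> ring

theorem eval_dom_of_reflTransGen_code {c : TM0.Cfg (Fin b) (Fin N)} {p : ℤ × ℤ}
    (h : ReflTransGen (Step (transitionRule M)) (code c) p) (hp : IsHalted N p) :
    (StateTransition.eval (TM0.step M) c).Dom := by
  have hdom {c : TM0.Cfg (Fin b) (Fin N)} (hc : TM0.step M c = none) :
      (StateTransition.eval (TM0.step M) c).Dom :=
    Part.dom_iff_mem.2 ⟨c, StateTransition.mem_eval.2 ⟨.refl, hc⟩⟩
  generalize hx : code c = x at h
  induction h using ReflTransGen.head_induction_on generalizing c with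
  | refl =>
    cases hc : TM0.step M c with
    | none => exact hdom hc
    | some c' =>
      subst hx
      exact absurd (step_code_of_step_eq_some M hc) (not_step_transitionRule_of_isHalted M hp)
  | head hxy _ ih =>
    cases hc : TM0.step M c with
    | none => exact hdom hc
    | some c' =>
      subst hx
      rw [StateTransition.reaches_eval (ReflTransGen.single hc)]
      exact ih (rightUnique_step_transitionRule M (step_code_of_step_eq_some M hc) hxy)

theorem eqvGen_code_zero_iff (c : TM0.Cfg (Fin b) (Fin N)) :
    EqvGen (Step (machineRule M)) (code c) 0 ↔ (StateTransition.eval (TM0.step M) c).Dom := by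
  constructor
  · intro h
    obtain ⟨p, hp, hcp⟩ := exists_reflTransGen_of_eqvGen (rightUnique_step_transitionRule M)
      (fun _ _ => not_step_transitionRule_of_isHalted M)
      (fun _ _ h => ((step_machineRule M).1 h).imp_right isHalted_of_step_eraseRule) h
      (dvd_zero _)
    exact eval_dom_of_reflTransGen_code M hcp hp
  · intro h
    obtain ⟨c', hc'⟩ := Part.dom_iff_mem.1 h
    obtain ⟨hreach, hhalt⟩ := StateTransition.mem_eval.1 hc'
    obtain ⟨i, j, hij⟩ := exists_step_code_of_step_eq_none M hhalt
    have hrun : ReflTransGen (Step (transitionRule M)) (code c) ((N + 1) * i, j) :=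
      (hreach.lift code fun _ _ => step_code_of_step_eq_some M).tail hij
    exact .trans _ _ _
      (EqvGen.mono (fun _ _ h => (step_machineRule M).2 (.inl h)) _ _
        (EqvGen.reflTransGen_le_eqvGen _ _ _ hrun))
      (EqvGen.mono (fun _ _ h => (step_machineRule M).2 (.inr h)) _ _
        (eqvGen_eraseRule_zero i j))

end Machine

/-! ### A Turing machine with undecidable halting problem -/

section Halting

open Turing

theorem exists_partrec_not_computablePred_two_pow :
    ∃ f : ℕ →. ℕ, Partrec f ∧ ¬ ComputablePred fun k => (f (2 ^ k)).Dom := by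
  let log (n : ℕ) : ℕ := n.findGreatest fun k => 2 ^ k = n
  have hpow : Primrec₂ fun a b : ℕ => a ^ b := Primrec₂.unpaired'.1 Nat.Primrec.pow
  have hlog : Primrec log := Primrec.nat_findGreatest .id
    (Primrec.eq.comp (hpow.comp (.const 2) .snd) .fst)
  have hlog_pow (k : ℕ) : log (2 ^ k) = k :=
    Nat.pow_right_injective le_rfl
      (Nat.findGreatest_spec (P := fun i => 2 ^ i = 2 ^ k) Nat.lt_two_pow_self.le rfl)
  let f (n : ℕ) : Part ℕ := (Denumerable.ofNat Nat.Partrec.Code (log n)).eval 0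
  refine ⟨f, Nat.Partrec.Code.eval_part.comp ((Computable.ofNat _).comp hlog.to_comp) (.const 0),
    fun h => ComputablePred.halting_problem 0 ?_⟩
  refine ComputablePred.computable_of_manyOneReducible
    ⟨Encodable.encode, Computable.encode, fun c => ?_⟩ h
  simp only [f, hlog_pow, Denumerable.ofNat_encode]

theorem exists_equiv_fin_map_default (α : Type*) [Finite α] [Inhabited α] :
    ∃ (n : ℕ) (_ : NeZero n) (e : α ≃ Fin n), e default = default := by
  obtain ⟨n, ⟨e⟩⟩ := Finite.exists_equiv_fin α
  have : NeZero n := ⟨by rintro rfl; exact (e default).elim0⟩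
  exact ⟨n, this, e.trans (Equiv.swap (e default) default), by simp⟩

theorem exists_fin_machine {Γ Λ : Type*} [Inhabited Γ] [Inhabited Λ] [Finite Γ]
    {M : TM0.Machine Γ Λ} {S : Set Λ} [Finite S] (hS : TM0.Supports M S) :
    ∃ (b N : ℕ) (_ : NeZero b) (_ : NeZero N) (M' : TM0.Machine (Fin b) (Fin N)) (e : Γ → Fin b),
      ∀ l, (TM0.eval M' (l.map e)).Dom ↔ (TM0.eval M l).Dom := by
  classical
  let _ : Inhabited S := ⟨⟨default, hS.1⟩⟩
  obtain ⟨b, _, e, he⟩ := exists_equiv_fin_map_default Γ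
  obtain ⟨N, _, g, hg⟩ := exists_equiv_fin_map_default S
  let f₁ : PointedMap Γ (Fin b) := ⟨e, he⟩
  let f₂ : PointedMap (Fin b) Γ := ⟨e.symm, by rw [← he, e.symm_apply_apply]⟩
  let g₁ : PointedMap Λ (Fin N) :=
    ⟨fun q => if hq : q ∈ S then g ⟨q, hq⟩ else default, (dif_pos hS.1).trans hg⟩
  let g₂ (i : Fin N) : Λ := g.symm i
  refine ⟨b, N, inferInstance, inferInstance, M.map f₁ f₂ g₁ g₂, e, fun l => ?_⟩
  have hresp := TM0.Machine.map_respects M f₁ f₂ g₁ g₂ hS e.symm_apply_apply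
    fun q hq => by simp [g₁, g₂, hq]
  exact StateTransition.tr_eval_dom hresp ⟨hS.1, TM0.map_init f₁ g₁ l⟩

open PartrecToTM2

instance : Finite K' :=
  .of_surjective ![K'.main, .rev, .aux, .stack] fun k => by
    cases k with
    | main => exact ⟨0, rfl⟩
    | rev => exact ⟨1, rfl⟩
    | aux => exact ⟨2, rfl⟩
    | stack => exact ⟨3, rfl⟩

theorem exists_machine_of_code (c : ToPartrec.Code) :
    ∃ (b N : ℕ) (_ : NeZero b) (_ : NeZero N) (M : TM0.Machine (Fin b) (Fin N))
      (e : TM2to1.Γ' K' (fun _ => Γ') → Fin b),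
      ∀ v, (TM0.eval M ((TM2to1.trInit K'.main (trList v)).map e)).Dom ↔ (c.eval v).Dom := by
  let _ : Inhabited Λ' := ⟨trNormal c Cont'.halt⟩
  have : Finite (TM2to1.Γ' K' fun _ => Γ') := inferInstanceAs (Finite (Bool × (K' → Option Γ')))
  obtain ⟨b, N, hb, hN, M, e, hM⟩ := exists_fin_machine
    (TM1to0.tr_supports _ (TM2to1.tr_supports _ (tr_supports c Cont'.halt)))
  refine ⟨b, N, hb, hN, M, e, fun v => ?_⟩
  have hinit : TM2.init K'.main (trList v) = init c v :=
    congrArg (TM2.Cfg.mk _ _) (funext fun k => by cases k <;> rfl)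
  have hcode : (StateTransition.eval (TM2.step tr) (TM2.init K'.main (trList v))).Dom ↔
      (c.eval v).Dom := by
    rw [hinit, tr_eval]
    rfl
  rw [hM, TM1to0.tr_eval]
  exact (TM2to1.tr_eval_dom tr K'.main (trList v)).trans hcode

theorem trNat_two_pow (k : ℕ) : trNat (2 ^ k) = List.replicate k Γ'.bit0 ++ [Γ'.bit1] := by
  suffices ∃ p : PosNum, ((2 ^ k : ℕ) : Num) = .pos p ∧
      trPosNum p = List.replicate k Γ'.bit0 ++ [Γ'.bit1] by
    obtain ⟨p, hk, hp⟩ := this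
    rw [trNat, hk, trNum, hp]
  induction k with
  | zero => exact ⟨1, rfl, rfl⟩
  | succ k ih =>
    obtain ⟨p, hk, hp⟩ := ih
    refine ⟨p.bit0, ?_, by rw [trPosNum, hp]; rfl⟩
    rw [pow_succ', two_mul, Nat.cast_add, Num.bit0_of_bit0, hk]
    rfl

theorem exists_trInit_trList_two_pow : ∃ x y z : TM2to1.Γ' K' (fun _ => Γ'), ∀ k,
    TM2to1.trInit K'.main (trList [2 ^ k]) = x :: y :: List.replicate k z := by
  let cell (a : Γ') : K' → Option Γ' := Function.update (fun _ => none) K'.main (some a)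
  refine ⟨(true, cell .cons), (false, cell .bit1), (false, cell .bit0), fun k => ?_⟩
  have hrev : (trList [2 ^ k]).reverse = .cons :: .bit1 :: List.replicate k .bit0 := by
    simp [trNat_two_pow]
  rw [TM2to1.trInit, hrev]
  exact congrArg (_ :: _ :: ·) List.map_replicate

theorem exists_machine_not_computablePred_eval_dom :
    ∃ (b N : ℕ) (_ : NeZero b) (_ : NeZero N) (M : TM0.Machine (Fin b) (Fin N)) (x y z : Fin b),
      ¬ ComputablePred fun k => (TM0.eval M (x :: y :: List.replicate k z)).Dom := by
  obtain ⟨f, hf, hundec⟩ := exists_partrec_not_computablePred_two_pow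
  obtain ⟨c, hc⟩ := ToPartrec.Code.exists_code (Nat.Partrec'.part_iff₁.2 hf)
  obtain ⟨b, N, hb, hN, M, e, hM⟩ := exists_machine_of_code c
  obtain ⟨x, y, z, hxyz⟩ := exists_trInit_trList_two_pow
  refine ⟨b, N, hb, hN, M, e x, e y, e z, fun h => hundec (h.of_eq fun k => ?_)⟩
  have hk := hM [2 ^ k]
  rw [hxyz, List.map_cons, List.map_cons, List.map_replicate] at hk
  exact hk.trans (iff_of_eq (congrArg Part.Dom (hc ⟨[2 ^ k], rfl⟩)))

theorem primrec_ofDigits_replicate (b x y z : ℕ) :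
    Primrec fun k => Nat.ofDigits b (x :: y :: List.replicate k z) := by
  have hcons (a : ℕ) : Primrec fun n => a + b * n :=
    Primrec.nat_add.comp (.const a) (Primrec.nat_mul.comp (.const b) .id)
  have hreplicate : Primrec fun k => Nat.ofDigits b (List.replicate k z) := by
    refine (Primrec.nat_rec₁ 0 ((hcons z).comp .snd).to₂).of_eq fun k => ?_
    induction k with
    | zero => rfl
    | succ k ih => rw [List.replicate_succ, Nat.ofDigits_cons, ← ih]
  simpa only [Nat.ofDigits_cons] using (hcons x).comp ((hcons y).comp hreplicate)

theorem code_init {b N : ℕ} [NeZero b] [NeZero N] (l : List (Fin b)) :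
    code (TM0.init (Λ := Fin N) l) = (1, ((Nat.ofDigits b (l.map Fin.val) : ℕ) : ℤ)) := by
  rw [TM0.init, Tape.mk₁, Tape.mk₂, code_mk', tapeValue_mk, tapeValue_mk]
  simp

theorem exists_affineRules_not_computablePred_eqvGen :
    ∃ (ι : Type) (_ : Finite ι) (ρ : ι → AffineRule) (a : ℤ) (s : ℕ → ℕ),
      (∀ i, (ρ i).Nondegenerate) ∧ Computable s ∧
        ¬ ComputablePred fun n => Relation.EqvGen (Step ρ) (a, s n) 0 := by
  obtain ⟨b, N, _, _, M, x, y, z, hM⟩ := exists_machine_not_computablePred_eval_dom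
  let input (k : ℕ) : List (Fin b) := x :: y :: List.replicate k z
  have hinput : Computable fun k => Nat.ofDigits b ((input k).map Fin.val) := by
    simpa only [input, List.map_cons, List.map_replicate] using
      (primrec_ofDigits_replicate b x y z).to_comp
  refine ⟨_, inferInstance, machineRule M, 1, _, machineRule_nondegenerate M, hinput,
    fun h => hM (h.of_eq fun k => ?_)⟩
  have hcode := eqvGen_code_zero_iff M (TM0.init (input k))
  rwa [code_init] at hcode

end Halting

end NovikovBoone

/-- **Novikov (1955), Boone (1958):** there exists a finitely presented group
with unsolvable word problem. -/
theorem exists_finitely_presented_group_with_unsolvable_word_problem :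
    ∃ (m : ℕ) (rels : Set (FreeGroup (Fin m))), rels.Finite ∧
      ¬ ComputablePred fun l : List (Fin m × Bool) =>
          FreeGroup.mk l ∈ Subgroup.normalClosure rels := by
  obtain ⟨ι, _, ρ, a, s, hρ, hs, hundec⟩ :=
    NovikovBoone.exists_affineRules_not_computablePred_eqvGen
  exact NovikovBoone.exists_not_computablePred_of_eqvGen hρ hs hundec
end
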